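/- arXiv:0708.2227 — 2 statements merged into one kernel-verified Lean document; each statement's English description precedes it below -/
import Mathlib

section
/- Let B be a separable Banach space, (S, 𝒮) a measurable space, P a probability measure on S, and let H : S^k → B be a bounded, strongly measurable function, symmetric in its entries and P-canonical (i.e. ∫_S H(x_1, …, x_{k−1}, y) dP(y) = 0 for all x_1, …, x_{k−1} ∈ S). Let X_1, …, X_n be i.i.d. with law P and let X_i^{(j)}, 1 ≤ i ≤ n, 1 ≤ j ≤ k, be i.i.d. with law P. Let κ and χ_n be any numbers with κ ≥ sup_{x_1,…,x_k ∈ S} ‖H(x_1, …, x_k)‖ and χ_n ≥ (E‖ Σ_{(i_1,…,i_k) ∈ I_n^k} H(X_{i_1}^{(1)}, …, X_{i_k}^{(k)}) ‖²)^{1/2}. Then there exists a constant D_0 depending only on k such that for all n ∈ ℕ and all r ≥ 2, E ‖ Σ_{(i_1,…,i_k) ∈ I_n^k} H(X_{i_1}, …, X_{i_k}) ‖^r ≤ D_0^r [ r^{kr/2} χ_n^r + r^{(k+1)r/2} n^{(k−1)r} κ^r + r^{kr} κ^r ]. -/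
open MeasureTheory Finset
open scoped ENNReal
noncomputable section

/-- The set of `k`-tuples of pairwise distinct indices from `{1, …, n}`. -/
def injTuples (k n : ℕ) : Finset (Fin k → Fin n) :=
  Finset.univ.filter Function.Injective

lemma amgm3 (a b c : ℝ) (ha : 0 ≤ a) (hb : 0 ≤ b) (hc : 0 ≤ c) (h : a + b + c ≤ 3) :
    a * b * c ≤ 1 := by
  have h1 : 4 * (a * b) ≤ (a + b) ^ 2 := by nlinarith [sq_nonneg (a - b)]
  have h2 : 4 * (a * b * c) ≤ (a + b) ^ 2 * c := by
    nlinarith [mul_le_mul_of_nonneg_right h1 hc]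
  have h3 : (a + b) ^ 2 * c ≤ (a + b) ^ 2 * (3 - (a + b)) := by
    apply mul_le_mul_of_nonneg_left (by linarith) (sq_nonneg _)
  nlinarith [mul_nonneg (add_nonneg (add_nonneg ha hb) zero_le_one) (sq_nonneg (a + b - 2))]

lemma amgm3_ennreal (a b c : ℝ≥0∞) (h : a + b + c ≤ 3) : a * b * c ≤ 1 := by
  have hab : a + b + c ≠ ∞ := ne_top_of_le_ne_top (by simp) h
  have ha : a ≠ ∞ := by intro h; simp [h] at hab
  have hb : b ≠ ∞ := by intro h; simp [h] at hab
  have hc : c ≠ ∞ := by intro h; simp [h] at hab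
  lift a to NNReal using ha
  lift b to NNReal using hb
  lift c to NNReal using hc
  norm_cast at h ⊢
  have := amgm3 a b c a.2 b.2 c.2 (by exact_mod_cast h)
  exact_mod_cast this

lemma twopt_pointwise (t u v : ℝ≥0∞) (hu : u ≤ 1) (hv : v ≤ 1) (h1 : t * u ≤ 1) (h2 : t * v ≤ 1)
    (h3 : t ≤ 2) : t + u + v ≤ 3 := by
  have ha : t ≠ ∞ := ne_top_of_le_ne_top (by simp) h3
  have hb : u ≠ ∞ := ne_top_of_le_ne_top (by simp) hu
  have hc : v ≠ ∞ := ne_top_of_le_ne_top (by simp) hv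
  lift t to NNReal using ha
  lift u to NNReal using hb
  lift v to NNReal using hc
  norm_cast at *
  have ht0 : (0:ℝ) ≤ t := t.2
  have hu0 : (0:ℝ) ≤ u := u.2
  have hv0 : (0:ℝ) ≤ v := v.2
  have hu' : (u:ℝ) ≤ 1 := by exact_mod_cast hu
  have hv' : (v:ℝ) ≤ 1 := by exact_mod_cast hv
  have h1' : (t:ℝ) * u ≤ 1 := by exact_mod_cast h1
  have h2' : (t:ℝ) * v ≤ 1 := by exact_mod_cast h2
  have h3' : (t:ℝ) ≤ 2 := by exact_mod_cast h3
  suffices (t:ℝ) + u + v ≤ 3 by exact_mod_cast this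
  have key : ∀ w : ℝ, 0 ≤ w → w ≤ 1 → (t:ℝ) * w ≤ 1 → (t:ℝ) + 2 * w ≤ 3 := by
    intro w hw0 hw1 hw
    by_cases hw2 : w ≤ 1/2
    · linarith
    · push Not at hw2
      by_contra hcon
      push Not at hcon
      nlinarith [mul_nonneg (by linarith : (0:ℝ) ≤ 2 * w - 1) (by linarith : (0:ℝ) ≤ 1 - w),
        mul_lt_mul_of_pos_right hcon (by linarith : (0:ℝ) < w)]
  linarith [key u hu0 hu' h1', key v hv0 hv' h2']

section
variable {S : Type*} [MeasurableSpace S] (P : Measure S) [IsProbabilityMeasure P]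

lemma lintegral_pi_cons (n : ℕ) (f : (Fin (n+1) → S) → ℝ≥0∞) (hf : Measurable f) :
    ∫⁻ x, f x ∂(Measure.pi fun _ : Fin (n+1) => P) =
      ∫⁻ s, ∫⁻ x, f (Fin.cons s x) ∂(Measure.pi fun _ : Fin n => P) ∂P := by
  have h := (measurePreserving_piFinSuccAbove (fun _ : Fin (n+1) => P) 0).symm
  rw [← h.lintegral_comp hf, lintegral_prod _ (by fun_prop)]
  simp [MeasurableEquiv.piFinSuccAbove, Fin.insertNthEquiv, Fin.insertNth_zero']

lemma measurable_cons (n : ℕ) : Measurable (fun p : S × (Fin n → S) =>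
    (Fin.cons p.1 p.2 : Fin (n+1) → S)) := by
  refine measurable_pi_lambda _ fun i => ?_
  refine Fin.cases ?_ (fun j => ?_) i
  · simpa using measurable_fst
  · simp only [Fin.cons_succ]; fun_prop

open Classical in
def nmiss {n : ℕ} (x y z : Fin n → S) : ℕ := #{i | x i ≠ y i ∧ x i ≠ z i}

lemma nmiss_cons {n : ℕ} (a b c : S) (x y z : Fin n → S) :
    nmiss (Fin.cons a x : Fin (n+1) → S) (Fin.cons b y) (Fin.cons c z) ≤ nmiss x y z + 1 := by
  classical
  simp only [nmiss, Finset.card_filter, Fin.sum_univ_succ, Fin.cons_zero, Fin.cons_succ]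
  split_ifs <;> omega

lemma nmiss_cons' {n : ℕ} (a b c : S) (x y z : Fin n → S) (h : a = b ∨ a = c) :
    nmiss (Fin.cons a x : Fin (n+1) → S) (Fin.cons b y) (Fin.cons c z) = nmiss x y z := by
  classical
  simp only [nmiss, Finset.card_filter, Fin.sum_univ_succ, Fin.cons_zero, Fin.cons_succ]
  rcases h with h | h <;> simp [h]

lemma twopoint (n : ℕ) : ∀ (f g h : (Fin n → S) → ℝ≥0∞), Measurable f → Measurable g →
    Measurable h → (∀ x, g x ≤ 1) → (∀ x, h x ≤ 1) →
    (∀ x y z, f x * g y * h z ≤ 2 ^ (nmiss x y z)) →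
    (∫⁻ x, f x ∂(Measure.pi fun _ : Fin n => P)) * (∫⁻ x, g x ∂(Measure.pi fun _ : Fin n => P)) *
      (∫⁻ x, h x ∂(Measure.pi fun _ : Fin n => P)) ≤ 1 := by
  induction n with
  | zero =>
    intro f g h hf hg hh g1 h1 H
    have := H default default default
    simpa [lintegral_unique, nmiss, Subsingleton.elim _ (default : Fin 0 → S)] using this
  | succ n ih =>
    intro f g h hf hg hh g1 h1 H
    rw [lintegral_pi_cons P n f hf, lintegral_pi_cons P n g hg, lintegral_pi_cons P n h hh]
    have mc : ∀ s : S, Measurable (fun x : Fin n → S => (Fin.cons s x : Fin (n+1) → S)) :=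
      fun s => (measurable_cons n).comp (measurable_const.prodMk measurable_id)
    set F : S → ℝ≥0∞ := fun s => ∫⁻ x, f (Fin.cons s x) ∂(Measure.pi fun _ : Fin n => P)
    set G : S → ℝ≥0∞ := fun s => ∫⁻ x, g (Fin.cons s x) ∂(Measure.pi fun _ : Fin n => P)
    set K : S → ℝ≥0∞ := fun s => ∫⁻ x, h (Fin.cons s x) ∂(Measure.pi fun _ : Fin n => P)
    have mF : Measurable F := (hf.comp (measurable_cons n)).lintegral_prod_right'
    have mG : Measurable G := (hg.comp (measurable_cons n)).lintegral_prod_right'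
    have mK : Measurable K := (hh.comp (measurable_cons n)).lintegral_prod_right'
    have i1 : ∀ s s', F s * G s * K s' ≤ 1 := by
      intro s s'
      refine ih _ _ _ (hf.comp (mc s)) (hg.comp (mc s)) (hh.comp (mc s')) (fun _ => g1 _)
        (fun _ => h1 _) (fun x y z => ?_)
      exact (H _ _ _).trans (by rw [nmiss_cons' _ _ _ _ _ _ (Or.inl rfl)])
    have i2 : ∀ s s', F s * G s' * K s ≤ 1 := by
      intro s s'
      refine ih _ _ _ (hf.comp (mc s)) (hg.comp (mc s')) (hh.comp (mc s)) (fun _ => g1 _)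
        (fun _ => h1 _) (fun x y z => ?_)
      exact (H _ _ _).trans (by rw [nmiss_cons' _ _ _ _ _ _ (Or.inr rfl)])
    have i3 : ∀ s s' s'', F s * G s' * K s'' ≤ 2 := by
      intro s s' s''
      have := ih (fun x => 2⁻¹ * f (Fin.cons s x)) _ _ ((hf.comp (mc s)).const_mul _)
        (hg.comp (mc s')) (hh.comp (mc s'')) (fun _ => g1 _)
        (fun _ => h1 _) (fun x y z => ?_)
      · have e : (∫⁻ x, 2⁻¹ * f (Fin.cons s x) ∂(Measure.pi fun _ : Fin n => P)) = 2⁻¹ * F s :=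
          lintegral_const_mul _ (hf.comp (mc s))
        rw [e, mul_assoc, mul_assoc,
          ENNReal.inv_mul_le_iff (by simp) (by simp), mul_one, ← mul_assoc] at this
        exact this
      · rw [mul_assoc, mul_assoc, ENNReal.inv_mul_le_iff (by simp) (by simp), ← mul_assoc]
        refine (H _ _ _).trans ?_
        rw [← pow_succ']
        exact pow_le_pow_right₀ (by simp) (nmiss_cons _ _ _ _ _ _)
    set Gb := ⨆ s, G s
    set Kb := ⨆ s, K s
    have Gle : ∀ s, G s ≤ 1 := fun s => by
      calc G s ≤ ∫⁻ x, 1 ∂(Measure.pi fun _ : Fin n => P) := lintegral_mono fun x => g1 _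
        _ = 1 := by simp
    have Kle : ∀ s, K s ≤ 1 := fun s => by
      calc K s ≤ ∫⁻ x, 1 ∂(Measure.pi fun _ : Fin n => P) := lintegral_mono fun x => h1 _
        _ = 1 := by simp
    have Gb1 : Gb ≠ ∞ := ne_top_of_le_ne_top (by simp) (iSup_le Gle)
    have Kb1 : Kb ≠ ∞ := ne_top_of_le_ne_top (by simp) (iSup_le Kle)
    by_cases Gb0 : Gb = 0
    · have : ∀ s, G s = 0 := fun s => le_antisymm (Gb0 ▸ le_iSup G s) bot_le
      have e : (∫⁻ s, G s ∂P) = 0 := by simp only [this, lintegral_zero]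
      rw [e]; simp
    by_cases Kb0 : Kb = 0
    · have : ∀ s, K s = 0 := fun s => le_antisymm (Kb0 ▸ le_iSup K s) bot_le
      have e : (∫⁻ s, K s ∂P) = 0 := by simp only [this, lintegral_zero]
      rw [e]; simp
    have j1 : ∀ s, F s * G s * Kb ≤ 1 := fun s => by
      rw [ENNReal.mul_iSup]; exact iSup_le (i1 s)
    have j2 : ∀ s, F s * Gb * K s ≤ 1 := fun s => by
      rw [ENNReal.mul_iSup, ENNReal.iSup_mul]; exact iSup_le (i2 s)
    have j3 : ∀ s, F s * Gb * Kb ≤ 2 := fun s => by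
      rw [ENNReal.mul_iSup]
      refine iSup_le fun s' => ?_
      rw [ENNReal.mul_iSup, ENNReal.iSup_mul]; exact iSup_le fun s'' => i3 s s'' s'
    have pw : ∀ s, F s * Gb * Kb + G s / Gb + K s / Kb ≤ 3 := by
      intro s
      apply twopt_pointwise
      · exact ENNReal.div_le_of_le_mul (by simpa using le_iSup G s)
      · exact ENNReal.div_le_of_le_mul (by simpa using le_iSup K s)
      · calc F s * Gb * Kb * (G s / Gb) = F s * Kb * (Gb * (G s / Gb)) := by ring
          _ = F s * G s * Kb := by rw [ENNReal.mul_div_cancel Gb0 Gb1]; ring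
          _ ≤ 1 := j1 s
      · calc F s * Gb * Kb * (K s / Kb) = F s * Gb * (Kb * (K s / Kb)) := by ring
          _ = F s * Gb * K s := by rw [ENNReal.mul_div_cancel Kb0 Kb1]
          _ ≤ 1 := j2 s
      · exact j3 s
    have int : (∫⁻ s, F s ∂P) * Gb * Kb + (∫⁻ s, G s ∂P) / Gb + (∫⁻ s, K s ∂P) / Kb ≤ 3 := by
      calc _ = ∫⁻ s, (F s * Gb * Kb + G s / Gb + K s / Kb) ∂P := by
            simp only [div_eq_mul_inv]
            rw [lintegral_add_left (by fun_prop), lintegral_add_left (by fun_prop),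
              lintegral_mul_const _ (by fun_prop), lintegral_mul_const _ (by fun_prop),
              lintegral_mul_const _ (by fun_prop), lintegral_mul_const _ (by fun_prop)]
        _ ≤ ∫⁻ s, 3 ∂P := lintegral_mono pw
        _ = 3 := by simp
    have := amgm3_ennreal _ _ _ int
    calc _ = (∫⁻ s, F s ∂P) * (Gb * ((∫⁻ s, G s ∂P) / Gb)) * (Kb * ((∫⁻ s, K s ∂P) / Kb)) := by
          rw [ENNReal.mul_div_cancel Gb0 Gb1, ENNReal.mul_div_cancel Kb0 Kb1]
      _ = (∫⁻ s, F s ∂P) * Gb * Kb * ((∫⁻ s, G s ∂P) / Gb) * ((∫⁻ s, K s ∂P) / Kb) := by ring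
      _ ≤ 1 := this
end

lemma integrable_of_meas_bdd {Ω : Type*} [MeasurableSpace Ω] {μ : Measure Ω} [IsFiniteMeasure μ]
    {f : Ω → ℝ} (hf : Measurable f) (M : ℝ) (h0 : ∀ x, 0 ≤ f x) (hM : ∀ x, f x ≤ M) :
    Integrable f μ :=
  Integrable.of_bound hf.aestronglyMeasurable M
    (Filter.Eventually.of_forall fun x => by rw [Real.norm_eq_abs, abs_of_nonneg (h0 x)]; exact hM x)

lemma exp_neg_integral_le {Ω : Type*} [MeasurableSpace Ω] (μ : Measure Ω) [IsProbabilityMeasure μ]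
    {u : Ω → ℝ} (hu : Integrable u μ) (hu' : Integrable (fun x => Real.exp (-u x)) μ) :
    Real.exp (-∫ x, u x ∂μ) ≤ ∫ x, Real.exp (-u x) ∂μ := by
  set m := ∫ x, u x ∂μ with hm
  have h1 : ∀ x, Real.exp (-m) * (1 + m - u x) ≤ Real.exp (-u x) := by
    intro x
    have := Real.add_one_le_exp (m - u x)
    calc Real.exp (-m) * (1 + m - u x) ≤ Real.exp (-m) * Real.exp (m - u x) := by
          gcongr; linarith
      _ = Real.exp (-u x) := by rw [← Real.exp_add]; congr 1; ring
  have h2 := integral_mono (μ := μ) (f := fun x => Real.exp (-m) * (1 + m - u x))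
    (((integrable_const _).sub hu).const_mul _) hu' h1
  refine le_trans (le_of_eq ?_) h2
  rw [integral_const_mul, integral_sub (integrable_const _) hu]
  simp [← hm]

section
variable {S : Type*} [MeasurableSpace S] (P : Measure S) [IsProbabilityMeasure P]

lemma selfbound_moment (n : ℕ) (F : (Fin n → S) → ℝ) (hF : Measurable F) (M κ s : ℝ)
    (h0 : ∀ x, 0 ≤ F x) (hM : ∀ x, F x ≤ M) (hκ : 0 < κ) (hs : 1 ≤ s)
    (H : ∀ x y z, F x ≤ F y + F z + κ * nmiss x y z) :
    ∫ x, F x ^ s ∂(Measure.pi fun _ : Fin n => P) ≤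
      (8 * (∫ x, F x ∂(Measure.pi fun _ : Fin n => P) + s * κ)) ^ s := by
  set μ := Measure.pi fun _ : Fin n => P with hμ
  set E := ∫ x, F x ∂μ with hE
  have hE0 : 0 ≤ E := integral_nonneg h0
  have hs0 : 0 < s := by linarith
  set K := κ + E / s with hK
  have hK0 : 0 < K := by positivity
  have hKκ : κ ≤ K := by have : 0 ≤ E / s := by positivity
                         linarith
  have hl := Real.log_two_gt_d9
  have hl' := Real.log_two_lt_d9
  set c := Real.log 2 / K with hc
  have hlog : 0 < Real.log 2 := by linarith
  have hc0 : 0 < c := by positivity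
  have hFi : Integrable F μ := integrable_of_meas_bdd hF M h0 hM
  have i1 : Integrable (fun x => Real.exp (c * F x)) μ :=
    integrable_of_meas_bdd (by fun_prop) (Real.exp (c * M)) (fun x => by positivity)
      (fun x => by gcongr; exact hM x)
  have i2 : Integrable (fun x => Real.exp (-(c * F x))) μ :=
    integrable_of_meas_bdd (by fun_prop) 1 (fun x => by positivity)
      (fun x => by
        rw [Real.exp_le_one_iff]; have := mul_nonneg hc0.le (h0 x); linarith)
  have tp := twopoint P n (fun x => ENNReal.ofReal (Real.exp (c * F x)))
    (fun x => ENNReal.ofReal (Real.exp (-(c * F x))))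
    (fun x => ENNReal.ofReal (Real.exp (-(c * F x)))) (by fun_prop) (by fun_prop) (by fun_prop)
    (fun x => by
        rw [ENNReal.ofReal_le_one, Real.exp_le_one_iff]
        have := mul_nonneg hc0.le (h0 x); linarith)
    (fun x => by
        rw [ENNReal.ofReal_le_one, Real.exp_le_one_iff]
        have := mul_nonneg hc0.le (h0 x); linarith)
    (fun x y z => by
      rw [← ENNReal.ofReal_mul (by positivity), ← ENNReal.ofReal_mul (by positivity),
        ← Real.exp_add, ← Real.exp_add]
      have e2 : (2 : ℝ≥0∞) ^ nmiss x y z = ENNReal.ofReal (2 ^ nmiss x y z) := by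
        rw [ENNReal.ofReal_pow (by norm_num)]; simp
      rw [e2]
      apply ENNReal.ofReal_le_ofReal
      have e3 : (2:ℝ) ^ nmiss x y z = Real.exp (nmiss x y z * Real.log 2) := by
        rw [Real.exp_nat_mul, Real.exp_log (by norm_num)]
      rw [e3]
      apply Real.exp_le_exp.2
      have h1 := H x y z
      have h2 : F x - F y - F z ≤ K * nmiss x y z := by
        have : κ * nmiss x y z ≤ K * nmiss x y z := by gcongr
        linarith
      calc c * F x + -(c * F y) + -(c * F z) = c * (F x - F y - F z) := by ring
        _ ≤ c * (K * nmiss x y z) := by gcongr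
        _ = nmiss x y z * Real.log 2 := by rw [hc]; field_simp)
  rw [← ofReal_integral_eq_lintegral_ofReal i1 (Filter.Eventually.of_forall fun x => by positivity),
    ← ofReal_integral_eq_lintegral_ofReal i2 (Filter.Eventually.of_forall fun x => by positivity),
    ← ENNReal.ofReal_mul (integral_nonneg fun x => by positivity),
    ← ENNReal.ofReal_mul (mul_nonneg (integral_nonneg fun x => by positivity)
      (integral_nonneg fun x => by positivity)), ENNReal.ofReal_le_one] at tp
  have J := exp_neg_integral_le μ (hFi.const_mul c) i2
  rw [integral_const_mul, ← hE] at J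
  have hA0 : 0 ≤ ∫ x, Real.exp (c * F x) ∂μ := integral_nonneg fun x => by positivity
  have hcE : c * E ≤ Real.log 2 * s := by
    rw [hc, div_mul_eq_mul_div, div_le_iff₀ hK0]
    have : E ≤ s * K := by
      rw [hK, mul_add, mul_div_cancel₀ _ hs0.ne']; nlinarith
    nlinarith
  have hA : ∫ x, Real.exp (c * F x) ∂μ ≤ 4 ^ s := by
    have h1 : (∫ x, Real.exp (c * F x) ∂μ) * Real.exp (-(c * E)) * Real.exp (-(c * E)) ≤ 1 :=
      le_trans (by gcongr) tp
    have h2 : (∫ x, Real.exp (c * F x) ∂μ) ≤ Real.exp (c * E + c * E) := by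
      rw [mul_assoc, ← Real.exp_add] at h1
      calc _ = (∫ x, Real.exp (c * F x) ∂μ) * Real.exp (-(c * E) + -(c * E)) * Real.exp (c * E + c * E) := by
            rw [mul_assoc, ← Real.exp_add]; ring_nf; simp
        _ ≤ 1 * Real.exp (c * E + c * E) := by gcongr
        _ = _ := one_mul _
    refine h2.trans ?_
    have : (4:ℝ) = Real.exp (Real.log 2 + Real.log 2) := by
      rw [Real.exp_add, Real.exp_log (by norm_num)]; norm_num
    rw [this, ← Real.exp_mul]
    gcongr; linarith
  have pw : ∀ x, F x ^ s ≤ (s / c) ^ s * Real.exp (c * F x) := by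
    intro x
    have h1 : F x ≤ (s / c) * Real.exp (c * F x / s) := by
      have := Real.add_one_le_exp (c * F x / s)
      have h2 : F x = (s / c) * (c * F x / s) := by field_simp
      calc F x = (s / c) * (c * F x / s) := h2
        _ ≤ _ := by gcongr; linarith
    calc F x ^ s ≤ ((s / c) * Real.exp (c * F x / s)) ^ s := by gcongr; exact h0 x
      _ = _ := by
        rw [Real.mul_rpow (by positivity) (by positivity), ← Real.exp_mul]
        congr 2; field_simp
  have i3 : Integrable (fun x => F x ^ s) μ :=
    integrable_of_meas_bdd (by fun_prop) (M ^ s) (fun x => by have := h0 x; positivity)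
      (fun x => by have := h0 x; have := hM x; gcongr)
  calc ∫ x, F x ^ s ∂μ ≤ ∫ x, (s / c) ^ s * Real.exp (c * F x) ∂μ :=
        integral_mono i3 (i1.const_mul _) pw
    _ = (s / c) ^ s * ∫ x, Real.exp (c * F x) ∂μ := integral_const_mul _ _
    _ ≤ (s / c) ^ s * 4 ^ s := by gcongr
    _ = (s / c * 4) ^ s := by rw [Real.mul_rpow (by positivity) (by positivity)]
    _ ≤ _ := by
      refine Real.rpow_le_rpow (by positivity) ?_ (by linarith)
      have e : s / c * 4 = (E + s * κ) * (4 / Real.log 2) := by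
        rw [hc, hK]; field_simp; ring
      rw [e, mul_comm]
      gcongr
      rw [div_le_iff₀ hlog]; linarith
end

/-! Maurey -/
def sg (b : Bool) : ℝ := if b then 1 else -1

lemma sum_bool_cons (n : ℕ) (f : (Fin (n+1) → Bool) → ℝ) :
    ∑ ε, f ε = ∑ ε : Fin n → Bool, f (Fin.cons true ε) + ∑ ε : Fin n → Bool, f (Fin.cons false ε) := by
  rw [← (Fin.consEquiv (fun _ : Fin (n+1) => Bool)).sum_comp, Fintype.sum_prod_type,
    Fintype.sum_bool]
  rfl

lemma maurey_onedim (u : ℝ) (hu : 1 ≤ u) : ∃ θ : ℝ, 0 ≤ θ ∧ θ ≤ 1 ∧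
    (1 + u⁻¹) * (1 + Real.exp (θ ^ 2 / 4) * u ^ (1 - θ)) ≤ 4 := by
  obtain ⟨a, rfl⟩ : ∃ a, u = Real.exp a := ⟨Real.log u, (Real.exp_log (by linarith)).symm⟩
  have ha : 0 ≤ a := by rwa [← Real.one_le_exp_iff]
  have hneg : ∀ x : ℝ, 0 ≤ x → x ≤ 1 → Real.exp (-x) ≤ 1 - x + x ^ 2 / 2 := by
    intro x h0 h1
    have := Real.exp_bound' h0 h1 (n := 1) (by norm_num)
    have q := Real.quadratic_le_exp_of_nonneg h0
    rw [Real.exp_neg, inv_le_comm₀ (Real.exp_pos _) (by nlinarith)]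
    refine le_trans ?_ q
    rw [inv_le_iff_one_le_mul₀ (by nlinarith)]
    nlinarith [sq_nonneg (x^2)]
  have hpos : ∀ x : ℝ, 0 ≤ x → x ≤ 1 → Real.exp x ≤ 1 + x + x ^ 2 := by
    intro x h0 h1
    have := Real.abs_exp_sub_one_sub_id_le (x := x) (by rw [abs_of_nonneg h0]; exact h1)
    have := (abs_le.1 this).2
    linarith
  by_cases h : a ≤ 1/2
  · refine ⟨2 * a, by linarith, by linarith, ?_⟩
    rw [← Real.exp_mul, ← Real.exp_neg, ← Real.exp_add]
    have e : (2 * a) ^ 2 / 4 + a * (1 - 2 * a) = a - a ^ 2 := by ring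
    rw [e]
    have h1 := hneg a ha (by linarith)
    have h2 := hpos (a - a ^ 2) (by nlinarith) (by nlinarith)
    calc _ ≤ (1 + (1 - a + a ^ 2 / 2)) * (1 + (1 + (a - a ^ 2) + (a - a ^ 2) ^ 2)) := by
          gcongr
          nlinarith [sq_nonneg a]
      _ ≤ 4 := by
          have : (0:ℝ) ≤ a ^ 3 := by positivity
          nlinarith [mul_nonneg this ha, mul_nonneg this (sub_nonneg.2 h),
            mul_nonneg (mul_nonneg this ha) (sub_nonneg.2 h), mul_nonneg (mul_nonneg (mul_nonneg this ha) ha) (sub_nonneg.2 h)]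
  · push Not at h
    refine ⟨1, by norm_num, le_rfl, ?_⟩
    have e1 : Real.exp (1 ^ 2 / 4) ≤ 1 + 1/4 + (1/4) ^ 2 := by
      rw [show ((1:ℝ) ^ 2 / 4) = 1/4 by norm_num]
      exact hpos (1/4) (by norm_num) (by norm_num)
    have e2 : (Real.exp a)⁻¹ ≤ 1 - 1/2 + (1/2) ^ 2 / 2 := by
      rw [← Real.exp_neg]
      refine le_trans ?_ (hneg (1/2) (by norm_num) (by norm_num))
      gcongr
    simp only [sub_self, Real.rpow_zero, mul_one]
    calc _ ≤ (1 + (1 - 1/2 + (1/2) ^ 2 / 2)) * (1 + (1 + 1/4 + (1/4) ^ 2) : ℝ) := by gcongr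
      _ ≤ 4 := by norm_num

lemma holder_exp {ι : Type*} [Fintype ι] [Nonempty ι] (p q : ι → ℝ) (θ : ℝ) (h0 : 0 ≤ θ) (h1 : θ ≤ 1) :
    ∑ i, Real.exp ((1 - θ) * p i + θ * q i) ≤
      (∑ i, Real.exp (p i)) ^ (1 - θ) * (∑ i, Real.exp (q i)) ^ θ := by
  have hA : 0 < ∑ i, Real.exp (p i) := Finset.sum_pos (fun i _ => Real.exp_pos _) univ_nonempty
  have hB : 0 < ∑ i, Real.exp (q i) := Finset.sum_pos (fun i _ => Real.exp_pos _) univ_nonempty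
  set A := ∑ i, Real.exp (p i) with hAd
  set B := ∑ i, Real.exp (q i) with hBd
  have pw : ∀ i, Real.exp ((1 - θ) * p i + θ * q i) ≤
      A ^ (1 - θ) * B ^ θ * ((1 - θ) * (Real.exp (p i) / A) + θ * (Real.exp (q i) / B)) := by
    intro i
    have h := Real.geom_mean_le_arith_mean2_weighted (by linarith : 0 ≤ 1 - θ) h0
      (by positivity : 0 ≤ Real.exp (p i) / A) (by positivity : 0 ≤ Real.exp (q i) / B) (by ring)
    calc Real.exp ((1 - θ) * p i + θ * q i)
        = A ^ (1 - θ) * B ^ θ * ((Real.exp (p i) / A) ^ (1 - θ) * (Real.exp (q i) / B) ^ θ) := by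
          rw [Real.div_rpow (by positivity) hA.le, Real.div_rpow (by positivity) hB.le,
            ← Real.exp_mul, ← Real.exp_mul, Real.exp_add]
          have := Real.rpow_pos_of_pos hA (1 - θ)
          have := Real.rpow_pos_of_pos hB θ
          field_simp
          try ring_nf
      _ ≤ _ := by gcongr
  refine (Finset.sum_le_sum fun i _ => pw i).trans (le_of_eq ?_)
  rw [← Finset.mul_sum, Finset.sum_add_distrib, ← Finset.mul_sum, ← Finset.mul_sum,
    ← Finset.sum_div, ← Finset.sum_div, ← hAd, ← hBd, div_self hA.ne', div_self hB.ne']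
  ring

lemma maurey_comb (A B pA pB sA sB : ℝ) (hA : 0 < A) (hB : 0 < B) (hAB : B ≤ A)
    (hpA0 : 0 < pA) (hpB0 : 0 < pB)
    (hpA : pA * A ≤ 1) (hpB : pB * B ≤ 1)
    (h1 : ∀ θ : ℝ, 0 ≤ θ → θ ≤ 1 → sA ≤ Real.exp (θ ^ 2 / 4) * (pA ^ (1 - θ) * pB ^ θ))
    (h2 : ∀ θ : ℝ, 0 ≤ θ → θ ≤ 1 → sB ≤ Real.exp (θ ^ 2 / 4) * (pB ^ (1 - θ) * pA ^ θ)) :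
    (sA + sB) * (A + B) ≤ 4 := by
  obtain ⟨θ, t0, t1, ht⟩ := maurey_onedim (A / B) (by rwa [one_le_div hB])
  have e1 : sA ≤ 1 / A := by
    have := h1 0 le_rfl zero_le_one
    simp at this
    rw [le_div_iff₀ hA]; nlinarith
  have e2 : sB ≤ Real.exp (θ ^ 2 / 4) * ((A / B) ^ (1 - θ) * (1 / A)) := by
    refine (h2 θ t0 t1).trans ?_
    refine mul_le_mul_of_nonneg_left ?_ (Real.exp_pos _).le
    calc pB ^ (1 - θ) * pA ^ θ ≤ (1 / B) ^ (1 - θ) * (1 / A) ^ θ := by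
          gcongr
          · rw [le_div_iff₀ hB]; exact hpB
          · rw [le_div_iff₀ hA]; exact hpA
      _ = (A / B) ^ (1 - θ) * ((1 / A) ^ (1 - θ) * (1 / A) ^ θ) := by
          rw [← mul_assoc, ← Real.mul_rpow (by positivity) (by positivity)]
          congr 2; field_simp
      _ = _ := by rw [← Real.rpow_add (by positivity)]; simp
  calc (sA + sB) * (A + B) ≤ (1 / A + Real.exp (θ ^ 2 / 4) * ((A / B) ^ (1 - θ) * (1 / A))) * (A + B) := by
        gcongr
    _ = (1 + (A / B)⁻¹) * (1 + Real.exp (θ ^ 2 / 4) * (A / B) ^ (1 - θ)) := by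
        field_simp
    _ ≤ 4 := ht

/-- inf-convolution -/
def infc {n : ℕ} (b : (Fin n → ℝ) → ℝ) (ε : Fin n → Bool) : ℝ :=
  ⨅ y : Fin n → ℝ, (b y + (∑ i, (sg (ε i) - y i) ^ 2) / 16)

lemma infc_le {n : ℕ} (b : (Fin n → ℝ) → ℝ) (hb : ∀ y, 0 ≤ b y) (ε : Fin n → Bool) (y : Fin n → ℝ) :
    infc b ε ≤ b y + (∑ i, (sg (ε i) - y i) ^ 2) / 16 := by
  refine ciInf_le ⟨0, ?_⟩ y
  rintro _ ⟨z, rfl⟩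
  have := hb z
  positivity

lemma maurey (n : ℕ) : ∀ (b : (Fin n → ℝ) → ℝ) (a : (Fin n → Bool) → ℝ),
    ConvexOn ℝ Set.univ b → (∀ y, 0 ≤ b y) →
    (∀ ε y, a ε ≤ b y + (∑ i, (sg (ε i) - y i) ^ 2) / 16) →
    (∑ ε, Real.exp (a ε)) * (∑ ε : Fin n → Bool, Real.exp (-b (fun i => sg (ε i)))) ≤ 4 ^ n := by
  induction n with
  | zero =>
    intro b a hb h0 H
    have hh : ∀ ε : Fin 0 → Bool, a ε - b (fun i => sg (ε i)) ≤ 0 := fun ε => by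
      have := H ε (fun i => sg (ε i))
      simp only [Finset.univ_eq_empty, Finset.sum_empty, zero_div, add_zero] at this
      linarith
    rw [Fintype.sum_unique, Fintype.sum_unique, pow_zero,
      ← Real.exp_add, Real.exp_le_one_iff]
    exact (hh _)
  | succ n ih =>
    intro b a hb h0 H
    rw [sum_bool_cons, sum_bool_cons]
    set bs : Bool → (Fin n → ℝ) → ℝ := fun σ y => b (Fin.cons (sg σ) y) with hbs
    have ecs : ∀ σ (ε : Fin n → Bool), (fun i => sg ((Fin.cons σ ε : Fin (n+1) → Bool) i)) =
        (Fin.cons (sg σ) (fun i => sg (ε i)) : Fin (n+1) → ℝ) := by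
      intro σ ε; funext i; refine Fin.cases ?_ (fun j => ?_) i <;> simp
    have hbs0 : ∀ σ y, 0 ≤ bs σ y := fun σ y => h0 _
    have hcons : ∀ (s t : ℝ) (y z : Fin n → ℝ) (p q : ℝ),
        p • (Fin.cons s y : Fin (n+1) → ℝ) + q • (Fin.cons t z : Fin (n+1) → ℝ) =
        Fin.cons (p * s + q * t) (p • y + q • z) := by
      intro s t y z p q; funext i; refine Fin.cases ?_ (fun j => ?_) i <;> simp
    have hbc : ∀ σ, ConvexOn ℝ Set.univ (bs σ) := by
      intro σ
      refine ⟨convex_univ, fun y _ z _ p q hp hq hpq => ?_⟩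
      have := hb.2 (Set.mem_univ (Fin.cons (sg σ) y)) (Set.mem_univ (Fin.cons (sg σ) z)) hp hq hpq
      rw [hcons, ← add_mul, hpq, one_mul] at this
      exact this
    have IH : ∀ σ, (∑ ε, Real.exp (infc (bs σ) ε)) * (∑ ε : Fin n → Bool, Real.exp (-bs σ (fun i => sg (ε i)))) ≤ 4 ^ n :=
      fun σ => ih (bs σ) (infc (bs σ)) (hbc σ) (hbs0 σ) (infc_le (bs σ) (hbs0 σ))
    have step : ∀ σ ε θ, 0 ≤ θ → θ ≤ 1 → a (Fin.cons σ ε) ≤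
        (1 - θ) * infc (bs σ) ε + θ * infc (bs (!σ)) ε + θ ^ 2 / 4 := by
      intro σ ε θ t0 t1
      refine le_of_forall_pos_le_add fun δ hδ => ?_
      obtain ⟨y, hy⟩ := exists_lt_of_ciInf_lt (lt_add_of_pos_right (infc (bs σ) ε) hδ)
      obtain ⟨z, hz⟩ := exists_lt_of_ciInf_lt (lt_add_of_pos_right (infc (bs (!σ)) ε) hδ)
      have h1 := H (Fin.cons σ ε) (Fin.cons ((1 - θ) * sg σ + θ * sg (!σ)) ((1 - θ) • y + θ • z))
      have h2 := hb.2 (Set.mem_univ (Fin.cons (sg σ) y)) (Set.mem_univ (Fin.cons (sg (!σ)) z))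
        (by linarith : 0 ≤ 1 - θ) t0 (by ring)
      rw [hcons] at h2
      have h3 : (∑ i, (sg (ε i) - ((1 - θ) • y + θ • z) i) ^ 2) ≤
          (1 - θ) * (∑ i, (sg (ε i) - y i) ^ 2) + θ * (∑ i, (sg (ε i) - z i) ^ 2) := by
        rw [Finset.mul_sum, Finset.mul_sum, ← Finset.sum_add_distrib]
        refine Finset.sum_le_sum fun i _ => ?_
        simp only [Pi.add_apply, Pi.smul_apply, smul_eq_mul]
        nlinarith [mul_nonneg (mul_nonneg t0 (sub_nonneg.2 t1)) (sq_nonneg (y i - z i))]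
      have h4 : (sg σ - ((1 - θ) * sg σ + θ * sg (!σ))) ^ 2 = 4 * θ ^ 2 := by
        cases σ <;> simp [sg] <;> ring
      rw [Fin.sum_univ_succ] at h1
      simp only [Fin.cons_zero, Fin.cons_succ] at h1
      rw [h4] at h1
      simp only [smul_eq_mul] at h2
      have hy' := mul_le_mul_of_nonneg_left hy.le (by linarith : 0 ≤ 1 - θ)
      have hz' := mul_le_mul_of_nonneg_left hz.le t0
      simp only [hbs] at *
      linarith
    set p : Bool → ℝ := fun σ => (∑ ε, Real.exp (infc (bs σ) ε)) / 2 ^ n with hp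
    set A : Bool → ℝ := fun σ => (∑ ε : Fin n → Bool, Real.exp (-bs σ (fun i => sg (ε i)))) / 2 ^ n with hA
    set s : Bool → ℝ := fun σ => (∑ ε : Fin n → Bool, Real.exp (a (Fin.cons σ ε))) / 2 ^ n with hs
    have hp0 : ∀ σ, 0 < p σ := fun σ =>
      div_pos (Finset.sum_pos (fun i _ => Real.exp_pos _) univ_nonempty) (by positivity)
    have hA0 : ∀ σ, 0 < A σ := fun σ =>
      div_pos (Finset.sum_pos (fun i _ => Real.exp_pos _) univ_nonempty) (by positivity)
    have h4n : (4:ℝ) ^ n = 2 ^ n * 2 ^ n := by rw [← mul_pow]; norm_num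
    have hpA : ∀ σ, p σ * A σ ≤ 1 := fun σ => by
      have := IH σ
      rw [hp, hA]
      simp only
      rw [div_mul_div_comm, div_le_one (by positivity), ← h4n]; exact this
    have hsp : ∀ σ θ, 0 ≤ θ → θ ≤ 1 → s σ ≤ Real.exp (θ ^ 2 / 4) * (p σ ^ (1 - θ) * p (!σ) ^ θ) := by
      intro σ θ t0 t1
      have hh := holder_exp (infc (bs σ)) (infc (bs (!σ))) θ t0 t1
      have h5 : (∑ ε : Fin n → Bool, Real.exp (a (Fin.cons σ ε))) ≤ Real.exp (θ ^ 2 / 4) *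
          ∑ ε, Real.exp ((1 - θ) * infc (bs σ) ε + θ * infc (bs (!σ)) ε) := by
        rw [Finset.mul_sum]
        refine Finset.sum_le_sum fun ε _ => ?_
        rw [← Real.exp_add]
        apply Real.exp_le_exp.2
        linarith [step σ ε θ t0 t1]
      have h6 : p σ ^ (1 - θ) * p (!σ) ^ θ = ((∑ ε, Real.exp (infc (bs σ) ε)) ^ (1 - θ) *
          (∑ ε, Real.exp (infc (bs (!σ)) ε)) ^ θ) / 2 ^ n := by
        rw [hp]; simp only
        rw [Real.div_rpow (Finset.sum_nonneg fun i _ => (Real.exp_pos _).le) (by positivity),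
          Real.div_rpow (Finset.sum_nonneg fun i _ => (Real.exp_pos _).le) (by positivity),
          div_mul_div_comm, ← Real.rpow_add (by positivity)]
        simp
      rw [h6, hs]
      simp only
      rw [← mul_div_assoc]
      gcongr
      exact h5.trans (by gcongr)
    have fin : (s true + s false) * (A true + A false) ≤ 4 := by
      rcases le_total (A false) (A true) with h | h
      · exact maurey_comb _ _ _ _ _ _ (hA0 true) (hA0 false) h (hp0 _) (hp0 _) (hpA _) (hpA _)
          (hsp true) (hsp false)
      · rw [add_comm (s true), add_comm (A true)]
        exact maurey_comb _ _ _ _ _ _ (hA0 false) (hA0 true) h (hp0 _) (hp0 _) (hpA _) (hpA _)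
          (hsp false) (hsp true)
    rw [hs, hA] at fin
    simp only at fin
    rw [← add_div, ← add_div, div_mul_div_comm, div_le_iff₀ (by positivity), ← h4n] at fin
    simp only [ecs]
    rw [pow_succ']
    exact fin

/-- average over signs -/
def av {n : ℕ} (f : (Fin n → Bool) → ℝ) : ℝ := (∑ ε, f ε) / 2 ^ n

lemma av_mono {n : ℕ} {f g : (Fin n → Bool) → ℝ} (h : ∀ ε, f ε ≤ g ε) : av f ≤ av g := by
  unfold av; gcongr; exact h _

lemma av_nonneg {n : ℕ} {f : (Fin n → Bool) → ℝ} (h : ∀ ε, 0 ≤ f ε) : 0 ≤ av f := by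
  unfold av; have := Finset.sum_nonneg (s := univ) fun ε _ => h ε; positivity

lemma av_add {n : ℕ} (f g : (Fin n → Bool) → ℝ) : av (fun ε => f ε + g ε) = av f + av g := by
  simp only [av, Finset.sum_add_distrib, add_div]

lemma av_const_mul {n : ℕ} (c : ℝ) (f : (Fin n → Bool) → ℝ) : av (fun ε => c * f ε) = c * av f := by
  simp only [av, ← Finset.mul_sum, mul_div_assoc]

lemma av_const {n : ℕ} (c : ℝ) : av (fun _ : Fin n → Bool => c) = c := by
  simp [av]

lemma sum_signflip {n : ℕ} {M : Type*} [AddCommMonoid M] (p : Fin n → Prop) [DecidablePred p] (f : (Fin n → Bool) → M) :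
    ∑ ε : Fin n → Bool, f (fun i => if p i then ε i else !ε i) = ∑ ε, f ε := by
  have inv : Function.Involutive (fun (ε : Fin n → Bool) i => if p i then ε i else !ε i) := by
    intro ε; funext i; by_cases h : p i <;> simp [h]
  exact Equiv.sum_comp (inv.toPerm _) f

lemma av_flip {n : ℕ} (p : Fin n → Prop) [DecidablePred p] (f : (Fin n → Bool) → ℝ) :
    av (fun ε => f (fun i => if p i then ε i else !ε i)) = av f := by
  unfold av; rw [sum_signflip p f]

lemma sg_sq (b : Bool) : sg b * sg b = 1 := by cases b <;> simp [sg]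
lemma sg_not (b : Bool) : sg (!b) = - sg b := by cases b <;> simp [sg]
lemma sg_abs (b : Bool) : |sg b| = 1 := by cases b <;> simp [sg]

lemma av_orth {n : ℕ} (i j : Fin n) : av (fun ε => sg (ε i) * sg (ε j)) = if i = j then 1 else 0 := by
  split_ifs with h
  · subst h; simp only [sg_sq]; exact av_const 1
  · have := av_flip (fun l => l ≠ i) (fun ε => sg (ε i) * sg (ε j))
    have hj : j ≠ i := fun e => h e.symm
    simp only [ne_eq, not_true_eq_false, if_false, hj, not_false_eq_true, if_true, sg_not] at this
    have h2 := av_const_mul (-1) (fun ε : Fin n → Bool => sg (ε i) * sg (ε j))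
    simp only [neg_mul, one_mul] at h2 this
    linarith

section
variable {V : Type*} [NormedAddCommGroup V] [NormedSpace ℝ V]

/-- linear combination -/
def lc {n : ℕ} (v : Fin n → V) (a : Fin n → ℝ) : V := ∑ i, a i • v i

def Yf {n : ℕ} (v : Fin n → V) : ℝ := av fun ε => ‖lc v (fun i => sg (ε i))‖

def W2 {n : ℕ} (v : Fin n → V) : ℝ :=
  ⨆ a : Fin n → ℚ, ‖lc v (fun i => (a i : ℝ))‖ ^ 2 / ∑ i, (a i : ℝ) ^ 2

lemma lc_add {n : ℕ} (v w : Fin n → V) (a : Fin n → ℝ) : lc (v + w) a = lc v a + lc w a := by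
  simp [lc, smul_add, Finset.sum_add_distrib]

lemma lc_sub' {n : ℕ} (v : Fin n → V) (a b : Fin n → ℝ) : lc v (a - b) = lc v a - lc v b := by
  simp [lc, sub_smul, Finset.sum_sub_distrib]

lemma lc_bound {n : ℕ} (v : Fin n → V) (a : Fin n → ℝ) : ‖lc v a‖ ≤ ∑ i, |a i| * ‖v i‖ := by
  refine (norm_sum_le _ _).trans (Finset.sum_le_sum fun i _ => ?_)
  rw [norm_smul, Real.norm_eq_abs]

lemma lc_sq_bound {n : ℕ} (v : Fin n → V) (a : Fin n → ℝ) :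
    ‖lc v a‖ ^ 2 ≤ (∑ i, a i ^ 2) * ∑ i, ‖v i‖ ^ 2 := by
  calc ‖lc v a‖ ^ 2 ≤ (∑ i, |a i| * ‖v i‖) ^ 2 := by gcongr; exact lc_bound v a
    _ ≤ (∑ i, |a i| ^ 2) * ∑ i, ‖v i‖ ^ 2 := Finset.sum_mul_sq_le_sq_mul_sq _ _ _
    _ = _ := by simp only [sq_abs]

lemma W2_bdd {n : ℕ} (v : Fin n → V) (a : Fin n → ℚ) :
    ‖lc v (fun i => (a i : ℝ))‖ ^ 2 / ∑ i, (a i : ℝ) ^ 2 ≤ ∑ i, ‖v i‖ ^ 2 := by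
  apply div_le_of_le_mul₀ (by positivity) (by positivity)
  rw [mul_comm]; exact lc_sq_bound v _

lemma W2_bddAbove {n : ℕ} (v : Fin n → V) :
    BddAbove (Set.range fun a : Fin n → ℚ => ‖lc v (fun i => (a i : ℝ))‖ ^ 2 / ∑ i, (a i : ℝ) ^ 2) :=
  ⟨_, by rintro _ ⟨a, rfl⟩; exact W2_bdd v a⟩

lemma W2_le {n : ℕ} (v : Fin n → V) : W2 v ≤ ∑ i, ‖v i‖ ^ 2 := ciSup_le (W2_bdd v)

lemma W2_nonneg {n : ℕ} (v : Fin n → V) : 0 ≤ W2 v := by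
  refine le_ciSup_of_le (W2_bddAbove v) 0 (by positivity)

lemma W2_spec_rat {n : ℕ} (v : Fin n → V) (a : Fin n → ℚ) :
    ‖lc v (fun i => (a i : ℝ))‖ ^ 2 ≤ W2 v * ∑ i, (a i : ℝ) ^ 2 := by
  rcases (Finset.sum_nonneg fun i (_ : i ∈ univ) => sq_nonneg (a i : ℝ)).eq_or_lt with h | h
  · have := lc_sq_bound v (fun i => (a i : ℝ))
    rw [← h] at this ⊢
    simpa using this
  · rw [← div_le_iff₀ h]
    exact le_ciSup (W2_bddAbove v) a

lemma W2_spec {n : ℕ} (v : Fin n → V) (a : Fin n → ℝ) :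
    ‖lc v a‖ ^ 2 ≤ W2 v * ∑ i, a i ^ 2 := by
  have hd : DenseRange (fun (a : Fin n → ℚ) (i : Fin n) => (a i : ℝ)) :=
    DenseRange.piMap (fun _ => Rat.denseRange_cast)
  refine hd.induction_on a (p := fun a => ‖lc v a‖ ^ 2 ≤ W2 v * ∑ i, a i ^ 2) ?_ (W2_spec_rat v)
  apply isClosed_le
  · unfold lc; fun_prop
  · fun_prop

lemma av_jensen_exp {n : ℕ} (u : (Fin n → Bool) → ℝ) :
    Real.exp (- av u) ≤ av (fun ε => Real.exp (- u ε)) := by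
  have h1 : ∀ ε, Real.exp (-av u) * (1 + av u) + (- Real.exp (-av u)) * u ε ≤ Real.exp (-u ε) := by
    intro ε
    have := Real.add_one_le_exp (av u - u ε)
    calc Real.exp (-av u) * (1 + av u) + (- Real.exp (-av u)) * u ε
         = Real.exp (-av u) * (av u - u ε + 1) := by ring
      _ ≤ Real.exp (-av u) * Real.exp (av u - u ε) := by gcongr
      _ = Real.exp (-u ε) := by rw [← Real.exp_add]; congr 1; ring
  have h2 := av_mono h1
  rw [av_add, av_const, av_const_mul] at h2
  linarith

lemma rad_conc {n : ℕ} (v : Fin n → V) (r : ℝ) (hr : 1 ≤ r) :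
    av (fun ε => ‖lc v (fun i => sg (ε i))‖ ^ r) ≤
      (Real.exp 5 * (Yf v + Real.sqrt r * Real.sqrt (W2 v))) ^ r := by
  set L := Real.sqrt (W2 v) with hL
  have hL0 : 0 ≤ L := Real.sqrt_nonneg _
  have hL2 : L ^ 2 = W2 v := Real.sq_sqrt (W2_nonneg v)
  have hY0 : 0 ≤ Yf v := av_nonneg fun ε => norm_nonneg _
  have hr0 : 0 < r := by linarith
  set D := Yf v + Real.sqrt r * L with hD
  have hD0 : 0 ≤ D := by positivity
  rcases hD0.eq_or_lt with hD1 | hD1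
  · have : L = 0 := by
      have h2 : 0 < Real.sqrt r := Real.sqrt_pos.2 hr0
      have : 0 ≤ Real.sqrt r * L := by positivity
      have h3 : Real.sqrt r * L = 0 := by linarith
      rcases mul_eq_zero.1 h3 with h | h
      · linarith
      · exact h
    have hz : ∀ ε : Fin n → Bool, ‖lc v (fun i => sg (ε i))‖ ^ r = 0 := by
      intro ε
      have h1 := W2_spec v (fun i => sg (ε i))
      rw [← hL2, this] at h1
      have h2 : ‖lc v (fun i => sg (ε i))‖ = 0 := by
        have := norm_nonneg (lc v (fun i => sg (ε i))); nlinarith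
      rw [h2, Real.zero_rpow hr0.ne']
    simp only [hz]
    rw [av_const]; positivity
  set lam := r / D with hlam
  have hlam0 : 0 < lam := by positivity
  have lip : ∀ a b : Fin n → ℝ, ‖lc v a‖ - ‖lc v b‖ ≤ L * Real.sqrt (∑ i, (a i - b i) ^ 2) := by
    intro a b
    have h1 := norm_sub_norm_le (lc v a) (lc v b)
    rw [← lc_sub'] at h1
    refine h1.trans ?_
    apply le_of_sq_le_sq _ (by positivity)
    rw [mul_pow, hL2, Real.sq_sqrt (Finset.sum_nonneg fun i _ => sq_nonneg _)]
    exact W2_spec v (a - b)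
  have M := maurey n (fun a => lam * ‖lc v a‖)
    (fun ε => lam * ‖lc v (fun i => sg (ε i))‖ - 4 * lam ^ 2 * L ^ 2)
    (by
      refine ⟨convex_univ, fun x _ y _ p q hp hq hpq => ?_⟩
      have : lc v (p • x + q • y) = p • lc v x + q • lc v y := by
        simp [lc, Finset.smul_sum, add_smul, mul_smul, Finset.sum_add_distrib]
      simp only [this, smul_eq_mul]
      have h1 := norm_add_le (p • lc v x) (q • lc v y)
      rw [norm_smul, norm_smul, Real.norm_of_nonneg hp, Real.norm_of_nonneg hq] at h1
      have := mul_le_mul_of_nonneg_left h1 hlam0.le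
      linarith)
    (fun y => by positivity)
    (by
      intro ε y
      have h1 := mul_le_mul_of_nonneg_left (lip (fun i => sg (ε i)) y) hlam0.le
      have h2 : Real.sqrt (∑ i, (sg (ε i) - y i) ^ 2) ^ 2 = ∑ i, (sg (ε i) - y i) ^ 2 :=
        Real.sq_sqrt (by positivity)
      rw [← h2]
      nlinarith [sq_nonneg (2 * lam * L - Real.sqrt (∑ i, (sg (ε i) - y i) ^ 2) / 4)])
  have M' : av (fun ε => Real.exp (lam * ‖lc v (fun i => sg (ε i))‖)) ≤
      Real.exp (4 * lam ^ 2 * L ^ 2 + lam * Yf v) := by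
    have h1 : (∑ ε : Fin n → Bool, Real.exp (lam * ‖lc v (fun i => sg (ε i))‖ - 4 * lam ^ 2 * L ^ 2)) =
        2 ^ n * (Real.exp (-(4 * lam ^ 2 * L ^ 2)) * av (fun ε => Real.exp (lam * ‖lc v (fun i => sg (ε i))‖))) := by
      rw [← av_const_mul, av, mul_div_cancel₀ _ (by positivity)]
      refine Finset.sum_congr rfl fun ε _ => ?_
      rw [← Real.exp_add]; congr 1; ring
    have h2 : (∑ ε : Fin n → Bool, Real.exp (-(lam * ‖lc v (fun i => sg (ε i))‖))) =
        2 ^ n * av (fun ε => Real.exp (-(lam * ‖lc v (fun i => sg (ε i))‖))) := by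
      rw [av, mul_div_cancel₀ _ (by positivity)]
    rw [h1, h2] at M
    have h3 := av_jensen_exp (fun ε : Fin n → Bool => lam * ‖lc v (fun i => sg (ε i))‖)
    rw [av_const_mul] at h3
    change Real.exp (-(lam * Yf v)) ≤ _ at h3
    have h4n : (4:ℝ) ^ n = 2 ^ n * 2 ^ n := by rw [← mul_pow]; norm_num
    set X := av (fun ε => Real.exp (lam * ‖lc v (fun i => sg (ε i))‖))
    have hX0 : 0 ≤ X := av_nonneg fun ε => (Real.exp_pos _).le
    have h4 : Real.exp (-(4 * lam ^ 2 * L ^ 2)) * X * Real.exp (-(lam * Yf v)) ≤ 1 := by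
      refine le_trans (mul_le_mul_of_nonneg_left h3 (by positivity)) ?_
      rw [h4n] at M
      have hp : (0:ℝ) < 2 ^ n * 2 ^ n := by positivity
      refine le_of_mul_le_mul_left ?_ hp
      linarith
    have h5 : X = Real.exp (-(4 * lam ^ 2 * L ^ 2)) * X * Real.exp (-(lam * Yf v)) *
        Real.exp (4 * lam ^ 2 * L ^ 2 + lam * Yf v) := by
      rw [Real.exp_add, Real.exp_neg, Real.exp_neg]
      field_simp
    rw [h5]
    exact mul_le_of_le_one_left (Real.exp_pos _).le h4
  have hexp : 4 * lam ^ 2 * L ^ 2 + lam * Yf v ≤ 5 * r := by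
    have hrs : Real.sqrt r ^ 2 = r := Real.sq_sqrt hr0.le
    have h1 : lam * D = r := by rw [hlam]; field_simp
    have h2 : lam * Yf v ≤ r := by
      rw [← h1]; gcongr; rw [hD]; have : 0 ≤ Real.sqrt r * L := by positivity
      linarith
    have h3 : lam * (Real.sqrt r * L) ≤ r := by
      conv_rhs => rw [← h1]
      gcongr; linarith
    have h4 : lam ^ 2 * L ^ 2 * r ≤ r * r := by
      calc lam ^ 2 * L ^ 2 * r = (lam * (Real.sqrt r * L)) ^ 2 := by
            rw [mul_pow, mul_pow, hrs]; ring
        _ ≤ r ^ 2 := by gcongr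
        _ = r * r := sq r
    have h5 := le_of_mul_le_mul_right h4 hr0
    linarith
  have pw : ∀ ε : Fin n → Bool, ‖lc v (fun i => sg (ε i))‖ ^ r ≤ D ^ r * Real.exp (lam * ‖lc v (fun i => sg (ε i))‖) := by
    intro ε
    set g := ‖lc v (fun i => sg (ε i))‖
    have hg : 0 ≤ g := norm_nonneg _
    have h1 : g ≤ D * Real.exp (g / D) := by
      have := Real.add_one_le_exp (g / D)
      calc g = D * (g / D) := by field_simp
        _ ≤ _ := by gcongr; linarith
    calc g ^ r ≤ (D * Real.exp (g / D)) ^ r := by gcongr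
      _ = _ := by
        rw [Real.mul_rpow hD0 (Real.exp_pos _).le, ← Real.exp_mul]
        congr 2; rw [hlam]; ring
  calc _ ≤ av (fun ε => D ^ r * Real.exp (lam * ‖lc v (fun i => sg (ε i))‖)) := av_mono pw
    _ = D ^ r * av (fun ε => Real.exp (lam * ‖lc v (fun i => sg (ε i))‖)) := av_const_mul _ _
    _ ≤ D ^ r * Real.exp (5 * r) := by
        gcongr; exact M'.trans (Real.exp_le_exp.2 hexp)
    _ = _ := by
        rw [Real.mul_rpow (Real.exp_pos _).le hD0, ← Real.exp_mul]; ring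
end

section
variable {V : Type*} [NormedAddCommGroup V] [NormedSpace ℝ V]

lemma sum_orth {n : ℕ} (i j : Fin n) :
    ∑ ε : Fin n → Bool, sg (ε i) * sg (ε j) = if i = j then 2 ^ n else 0 := by
  have h := av_orth i j
  unfold av at h
  rw [div_eq_iff (by positivity)] at h
  rw [h]; split_ifs <;> simp

lemma lc_repr {n : ℕ} (v : Fin n → V) (a : Fin n → ℝ) :
    ∑ ε : Fin n → Bool, (∑ j, a j * sg (ε j)) • lc v (fun i => sg (ε i)) = (2 ^ n : ℝ) • lc v a := by
  have h1 : ∀ ε : Fin n → Bool, (∑ j, a j * sg (ε j)) • lc v (fun i => sg (ε i)) =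
      ∑ i, ∑ j, (a j * (sg (ε i) * sg (ε j))) • v i := by
    intro ε
    rw [lc, Finset.smul_sum]
    refine Finset.sum_congr rfl fun i _ => ?_
    rw [smul_smul, ← Finset.sum_smul, Finset.sum_mul]
    congr 1
    exact Finset.sum_congr rfl fun j _ => by ring
  simp only [h1]
  rw [Finset.sum_comm, lc, Finset.smul_sum]
  refine Finset.sum_congr rfl fun i _ => ?_
  rw [Finset.sum_comm]
  simp only [← Finset.sum_smul, ← Finset.mul_sum, sum_orth]
  rw [smul_smul]
  congr 1
  simp [mul_comm]

lemma W2_le_av {n : ℕ} (v : Fin n → V) : W2 v ≤ av (fun ε => ‖lc v (fun i => sg (ε i))‖ ^ 2) := by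
  refine ciSup_le fun a => ?_
  set b : Fin n → ℝ := fun i => (a i : ℝ)
  have hA : 0 ≤ av (fun ε => ‖lc v (fun i => sg (ε i))‖ ^ 2) := av_nonneg fun ε => by positivity
  refine div_le_of_le_mul₀ (by positivity) hA ?_
  have h1 := lc_repr v b
  have h2 := lc_repr (V := ℝ) b b
  simp only [smul_eq_mul, lc] at h2
  have h3 : ∀ ε : Fin n → Bool, (∑ j, b j * sg (ε j)) * (∑ j, sg (ε j) * b j) = |∑ j, b j * sg (ε j)| ^ 2 := by
    intro ε; rw [sq_abs, sq]; congr 1; exact Finset.sum_congr rfl fun j _ => by ring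
  simp only [h3, ← sq] at h2
  have h4 : (2 ^ n * ‖lc v b‖) ^ 2 ≤ (2 ^ n * ∑ i, b i ^ 2) * (2 ^ n * av (fun ε => ‖lc v (fun i => sg (ε i))‖ ^ 2)) := by
    have e : 2 ^ n * av (fun ε => ‖lc v (fun i => sg (ε i))‖ ^ 2) = ∑ ε : Fin n → Bool, ‖lc v (fun i => sg (ε i))‖ ^ 2 := by
      unfold av; field_simp
    rw [e, ← h2]
    refine le_trans ?_ (Finset.sum_mul_sq_le_sq_mul_sq _ _ _)
    gcongr
    have : 2 ^ n * ‖lc v b‖ = ‖(2 ^ n : ℝ) • lc v b‖ := by rw [norm_smul]; simp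
    rw [this, ← h1]
    refine (norm_sum_le _ _).trans (Finset.sum_le_sum fun ε _ => ?_)
    rw [norm_smul, Real.norm_eq_abs]
  have hp : (0:ℝ) < 2 ^ n * 2 ^ n := by positivity
  refine le_of_mul_le_mul_left ?_ hp
  calc _ = (2 ^ n * ‖lc v b‖) ^ 2 := by ring
    _ ≤ _ := h4
    _ = _ := by ring

lemma Yf_mono {n : ℕ} (v : Fin n → V) (p : Fin n → Prop) [DecidablePred p] :
    Yf (fun i => if p i then v i else 0) ≤ Yf v := by
  have h := av_flip p (fun ε => ‖lc v (fun i => sg (ε i))‖)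
  have h2 : ∀ ε : Fin n → Bool, 2 * ‖lc (fun i => if p i then v i else 0) (fun i => sg (ε i))‖ ≤
      ‖lc v (fun i => sg (ε i))‖ + ‖lc v (fun i => sg (if p i then ε i else !ε i))‖ := by
    intro ε
    have e : (2:ℝ) • lc (fun i => if p i then v i else 0) (fun i => sg (ε i)) =
        lc v (fun i => sg (ε i)) + lc v (fun i => sg (if p i then ε i else !ε i)) := by
      unfold lc
      rw [Finset.smul_sum, ← Finset.sum_add_distrib]
      refine Finset.sum_congr rfl fun i _ => ?_
      beta_reduce
      split_ifs
      · rw [two_smul]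
      · simp [sg_not]
    calc _ = ‖(2:ℝ) • lc (fun i => if p i then v i else 0) (fun i => sg (ε i))‖ := by
          rw [norm_smul]; simp
      _ ≤ _ := by rw [e]; exact norm_add_le _ _
  have h3 := av_mono h2
  rw [av_const_mul, av_add, h] at h3
  unfold Yf
  linarith

lemma Yf_add {n : ℕ} (v w : Fin n → V) : Yf (v + w) ≤ Yf v + Yf w := by
  unfold Yf
  rw [← av_add]
  refine av_mono fun ε => ?_
  rw [lc_add]; exact norm_add_le _ _

lemma Yf_le {n : ℕ} (v : Fin n → V) : Yf v ≤ ∑ i, ‖v i‖ := by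
  unfold Yf
  rw [← av_const (n := n) (∑ i, ‖v i‖)]
  refine av_mono fun ε => (lc_bound _ _).trans ?_
  simp [sg_abs]

lemma Yf_two {n : ℕ} (x y z : Fin n → V) (p q : Fin n → Prop) [DecidablePred p] [DecidablePred q]
    (κ : ℝ) (hκ : ∀ i, ‖x i‖ ≤ κ) (hp : ∀ i, p i → x i = y i) (hq : ∀ i, q i → x i = z i) :
    Yf x ≤ Yf y + Yf z + κ * #{i | ¬ p i ∧ ¬ q i} := by
  have e : x = ((fun i => if p i then y i else 0) + (fun i => if ¬ p i ∧ q i then z i else 0))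
      + (fun i => if ¬ p i ∧ ¬ q i then x i else 0) := by
    funext i
    by_cases h1 : p i <;> by_cases h2 : q i <;> simp [h1, h2]
    · exact hp i h1
    · exact hp i h1
    · exact hq i h2
  have h1 := Yf_add ((fun i => if p i then y i else 0) + (fun i => if ¬ p i ∧ q i then z i else 0))
    (fun i => if ¬ p i ∧ ¬ q i then x i else 0)
  rw [← e] at h1
  have h2 := Yf_add (fun i => if p i then y i else 0) (fun i => if ¬ p i ∧ q i then z i else 0)
  have h3 := Yf_mono y p
  have h4 := Yf_mono z (fun i => ¬ p i ∧ q i)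
  have h5 : Yf (fun i => if ¬ p i ∧ ¬ q i then x i else 0) ≤ κ * #{i | ¬ p i ∧ ¬ q i} := by
    refine (Yf_le _).trans ?_
    rw [Finset.card_filter, Nat.cast_sum, Finset.mul_sum]
    refine Finset.sum_le_sum fun i _ => ?_
    split_ifs <;> simp [hκ i]
  linarith

lemma cs2 (α β a b c d : ℝ) (hα : 0 ≤ α) (hβ : 0 ≤ β) (ha : 0 ≤ a) (hb : 0 ≤ b) (hc : 0 ≤ c) (hd : 0 ≤ d)
    (h1 : α ^ 2 ≤ a * b) (h2 : β ^ 2 ≤ c * d) : (α + β) ^ 2 ≤ (a + c) * (b + d) := by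
  have h3 : (α * β) ^ 2 ≤ (a * d) * (c * b) := by
    rw [mul_pow]
    calc α ^ 2 * β ^ 2 ≤ (a * b) * (c * d) := by gcongr
      _ = _ := by ring
  have h4 : 2 * (α * β) ≤ a * d + c * b := by
    apply le_of_sq_le_sq _ (by positivity)
    nlinarith [sq_nonneg (a * d - c * b)]
  nlinarith

lemma W2_two {n : ℕ} (x y z : Fin n → V) (p q : Fin n → Prop) [DecidablePred p] [DecidablePred q]
    (κ : ℝ) (hκ : ∀ i, ‖x i‖ ≤ κ) (hp : ∀ i, p i → x i = y i) (hq : ∀ i, q i → x i = z i) :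
    W2 x ≤ W2 y + W2 z + κ ^ 2 * #{i | ¬ p i ∧ ¬ q i} := by
  have hy := W2_nonneg y
  have hz := W2_nonneg z
  refine ciSup_le fun a => ?_
  set b : Fin n → ℝ := fun i => (a i : ℝ)
  refine div_le_of_le_mul₀ (by positivity) (by positivity) ?_
  set b1 : Fin n → ℝ := fun i => if p i then b i else 0
  set b2 : Fin n → ℝ := fun i => if ¬ p i ∧ q i then b i else 0
  set b3 : Fin n → ℝ := fun i => if ¬ p i ∧ ¬ q i then b i else 0
  have e : lc x b = lc y b1 + lc z b2 + lc (fun i => if ¬ p i ∧ ¬ q i then x i else 0) b3 := by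
    unfold lc
    rw [← Finset.sum_add_distrib, ← Finset.sum_add_distrib]
    refine Finset.sum_congr rfl fun i _ => ?_
    by_cases h1 : p i <;> by_cases h2 : q i <;> simp [b1, b2, b3, h1, h2]
    · rw [hp i h1]
    · rw [hp i h1]
    · rw [hq i h2]
  have s : ∑ i, b i ^ 2 = ∑ i, b1 i ^ 2 + ∑ i, b2 i ^ 2 + ∑ i, b3 i ^ 2 := by
    rw [← Finset.sum_add_distrib, ← Finset.sum_add_distrib]
    refine Finset.sum_congr rfl fun i _ => ?_
    by_cases h1 : p i <;> by_cases h2 : q i <;> simp [b1, b2, b3, h1, h2]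
  have k1 := W2_spec y b1
  have k2 := W2_spec z b2
  have k3 : ‖lc (fun i => if ¬ p i ∧ ¬ q i then x i else 0) b3‖ ^ 2 ≤ (κ ^ 2 * #{i | ¬ p i ∧ ¬ q i}) * ∑ i, b3 i ^ 2 := by
    refine (lc_sq_bound _ _).trans ?_
    rw [mul_comm]
    gcongr
    rw [Finset.card_filter, Nat.cast_sum, Finset.mul_sum]
    refine Finset.sum_le_sum fun i _ => ?_
    split_ifs
    · simp; gcongr; exact hκ i
    · simp
  have h1 := cs2 _ _ _ _ _ _ (norm_nonneg _) (norm_nonneg _) hy (by positivity) hz (by positivity) k1 k2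
  have h2 := cs2 _ _ _ _ _ _ (by positivity) (norm_nonneg _) (by positivity) (by positivity) (by positivity) (by positivity) h1 k3
  rw [s]
  refine le_trans ?_ h2
  rw [e]
  gcongr
  exact (norm_add_le _ _).trans (by gcongr; exact norm_add_le _ _)
end

lemma add_rpow_half (x y r : ℝ) (hx : 0 ≤ x) (hy : 0 ≤ y) (hr : 1 ≤ r) :
    (x + y) ^ r ≤ 2 ^ r * ((x ^ r + y ^ r) / 2) := by
  have h := (convexOn_rpow hr).2 (Set.mem_Ici.2 hx) (Set.mem_Ici.2 hy)
    (by norm_num : (0:ℝ) ≤ 1/2) (by norm_num : (0:ℝ) ≤ 1/2) (by norm_num)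
  simp only [smul_eq_mul] at h
  have e : x + y = 2 * (1/2 * x + 1/2 * y) := by ring
  rw [e, Real.mul_rpow (by norm_num) (by positivity)]
  gcongr
  linarith

lemma rpow_add_rpow_le (x y r : ℝ) (hx : 0 ≤ x) (hy : 0 ≤ y) (hr : 1 ≤ r) :
    x ^ r + y ^ r ≤ (x + y) ^ r := by
  lift x to NNReal using hx
  lift y to NNReal using hy
  exact_mod_cast NNReal.add_rpow_le_rpow_add x y hr

lemma jensen_rpow {Ω : Type*} [MeasurableSpace Ω] (μ : Measure Ω) [IsProbabilityMeasure μ]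
    {f : Ω → ℝ} (hf : Measurable f) (M : ℝ) (h0 : ∀ x, 0 ≤ f x) (hM : ∀ x, f x ≤ M) (q : ℝ) (hq : 1 ≤ q) :
    (∫ x, f x ∂μ) ^ q ≤ ∫ x, f x ^ q ∂μ := by
  refine (convexOn_rpow hq).map_integral_le ?_ isClosed_Ici (Filter.Eventually.of_forall fun x => h0 x)
    (integrable_of_meas_bdd hf M h0 hM) ?_
  · exact (Real.continuous_rpow_const (by linarith)).continuousOn
  · exact integrable_of_meas_bdd (hf.pow_const q) (M ^ q) (fun x => Real.rpow_nonneg (h0 x) _)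
      (fun x => Real.rpow_le_rpow (h0 x) (hM x) (by linarith))

lemma mp_integral {X Y : Type*} [MeasurableSpace X] [MeasurableSpace Y] {μ : Measure X} {ν : Measure Y}
    {f : X → Y} (hf : MeasurePreserving f μ ν) {g : Y → ℝ} (hg : Measurable g) :
    ∫ x, g (f x) ∂μ = ∫ y, g y ∂ν := by
  rw [← hf.map_eq, integral_map hf.measurable.aemeasurable hg.aestronglyMeasurable]

lemma mix_mp {ι X : Type*} [Fintype ι] [MeasurableSpace X] (μ : Measure X) [IsProbabilityMeasure μ]
    (f : ι → X × X → X) (hf : ∀ i, MeasurePreserving (f i) (μ.prod μ) μ) :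
    MeasurePreserving (fun p : (ι → X) × (ι → X) => fun i => f i (p.1 i, p.2 i))
      ((Measure.pi fun _ : ι => μ).prod (Measure.pi fun _ : ι => μ)) (Measure.pi fun _ : ι => μ) := by
  have h1 := (measurePreserving_arrowProdEquivProdArrow X X ι (fun _ => μ) (fun _ => μ)).symm
  have h2 := measurePreserving_pi (fun _ : ι => μ.prod μ) (fun _ => μ) hf
  exact h2.comp h1

lemma mix_bool {ι X : Type*} [Fintype ι] [MeasurableSpace X] (μ : Measure X) [IsProbabilityMeasure μ]
    (b : ι → Bool) :
    MeasurePreserving (fun p : (ι → X) × (ι → X) => fun i => if b i then p.1 i else p.2 i)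
      ((Measure.pi fun _ : ι => μ).prod (Measure.pi fun _ : ι => μ)) (Measure.pi fun _ : ι => μ) := by
  refine mix_mp μ (fun i q => if b i then q.1 else q.2) fun i => ?_
  cases b i
  · exact measurePreserving_snd
  · exact measurePreserving_fst

section
variable {V : Type*} [NormedAddCommGroup V] [NormedSpace ℝ V]
variable {S : Type*} [MeasurableSpace S] (P : Measure S) [IsProbabilityMeasure P]

/-- partial sums with a coefficient on the complement -/
def cf {n : ℕ} (b : Fin n → Bool) (η : ℝ) : Fin n → ℝ := fun i => if b i then 1 else η

/-- vector at a point -/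
def zv {n : ℕ} (Z : Fin n → S → V) (ω : Fin n → S) : Fin n → V := fun i => Z i (ω i)

/-- hypotheses for the one-step inequality -/
structure OneStep {n : ℕ} (Z : Fin n → S → V) (κ : ℝ) : Prop where
  meas : ∀ a : Fin n → ℝ, Measurable fun ω : Fin n → S => ‖lc (zv Z ω) a‖
  bd : ∀ i x, ‖Z i x‖ ≤ κ
  jen : ∀ (b : Fin n → Bool) (η : ℝ) (ω : Fin n → S), ‖lc (zv Z ω) (cf b 0)‖ ^ 2 ≤
    ∫ ω', ‖lc (zv Z (fun i => if b i then ω i else ω' i)) (cf b η)‖ ^ 2 ∂(Measure.pi fun _ : Fin n => P)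

variable {P}
variable {n : ℕ} {Z : Fin n → S → V} {κ : ℝ}

lemma OneStep.nb (h : OneStep P Z κ) (a : Fin n → ℝ) (ω : Fin n → S) :
    ‖lc (zv Z ω) a‖ ≤ ∑ i, |a i| * κ :=
  (lc_bound _ _).trans (Finset.sum_le_sum fun i _ => by gcongr; exact h.bd i _)

lemma OneStep.int (h : OneStep P Z κ) (a : Fin n → ℝ) (p : ℝ) (hp : 0 ≤ p) :
    Integrable (fun ω => ‖lc (zv Z ω) a‖ ^ p) (Measure.pi fun _ : Fin n => P) :=
  integrable_of_meas_bdd ((h.meas a).pow_const p) ((∑ i, |a i| * κ) ^ p)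
    (fun ω => by positivity) (fun ω => Real.rpow_le_rpow (norm_nonneg _) (h.nb a ω) hp)

lemma OneStep.sym1 (h : OneStep P Z κ) (b : Fin n → Bool) (η p : ℝ) (hp : 2 ≤ p) :
    ∫ ω, ‖lc (zv Z ω) (cf b 0)‖ ^ p ∂(Measure.pi fun _ : Fin n => P) ≤
    ∫ ω, ‖lc (zv Z ω) (cf b η)‖ ^ p ∂(Measure.pi fun _ : Fin n => P) := by
  set μ := Measure.pi fun _ : Fin n => P
  have mp := mix_bool P b
  have hm := h.meas (cf b η)
  have hm2 : Measurable fun q : (Fin n → S) × (Fin n → S) =>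
      ‖lc (zv Z (fun i => if b i then q.1 i else q.2 i)) (cf b η)‖ := hm.comp mp.measurable
  have hi : Integrable (fun q : (Fin n → S) × (Fin n → S) =>
      ‖lc (zv Z (fun i => if b i then q.1 i else q.2 i)) (cf b η)‖ ^ p) (μ.prod μ) :=
    integrable_of_meas_bdd (hm2.pow_const p) ((∑ i, |cf b η i| * κ) ^ p)
    (fun ω => by positivity) (fun ω => Real.rpow_le_rpow (norm_nonneg _) (h.nb _ _) (by linarith))
  have e : ∫ ω, ‖lc (zv Z ω) (cf b η)‖ ^ p ∂μ = ∫ ω, ∫ ω',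
      ‖lc (zv Z (fun i => if b i then ω i else ω' i)) (cf b η)‖ ^ p ∂μ ∂μ := by
    rw [← mp_integral mp (hm.pow_const p), integral_prod _ hi]
  rw [e]
  refine integral_mono (h.int _ p (by linarith)) hi.integral_prod_left fun ω => ?_
  have hm3 : Measurable fun ω' : Fin n → S =>
      ‖lc (zv Z (fun i => if b i then ω i else ω' i)) (cf b η)‖ := hm2.comp measurable_prodMk_left
  have j := jensen_rpow μ (hm3.pow_const 2) ((∑ i, |cf b η i| * κ) ^ 2) (fun ω => by positivity)
    (fun ω' => by gcongr; exact h.nb _ _) (p / 2) (by linarith)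
  have e2 : ∀ x : ℝ, 0 ≤ x → (x ^ 2) ^ (p / 2) = x ^ p := by
    intro x hx
    rw [← Real.rpow_natCast, ← Real.rpow_mul hx]; congr 1; push_cast; ring
  simp only [e2 _ (norm_nonneg _)] at j
  refine le_trans ?_ j
  beta_reduce
  rw [← e2 _ (norm_nonneg _)]
  exact Real.rpow_le_rpow (by positivity) (h.jen b η ω) (by linarith)

lemma cf_split (v : Fin n → V) (b : Fin n → Bool) (η : ℝ) :
    lc v (cf b η) = lc v (cf b 0) + η • lc v (cf (fun i => !b i) 0) := by
  unfold lc cf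
  rw [Finset.smul_sum, ← Finset.sum_add_distrib]
  refine Finset.sum_congr rfl fun i _ => ?_
  cases hb : b i <;> simp [hb]

lemma cf_compl (v : Fin n → V) (b : Fin n → Bool) (η : ℝ) (hη : η * η = 1) :
    ‖lc v (cf (fun i => !b i) η)‖ = ‖lc v (cf b η)‖ := by
  have h : lc v (cf (fun i => !b i) η) = η • lc v (cf b η) := by
    unfold lc cf
    rw [Finset.smul_sum]
    refine Finset.sum_congr rfl fun i _ => ?_
    cases hb : b i
    · simp [smul_smul, hη, hb]
    · simp [hb]
  have : |η| = 1 := by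
    have : |η| * |η| = 1 := by rw [← abs_mul, hη, abs_one]
    nlinarith [abs_nonneg η]
  rw [h, norm_smul, Real.norm_eq_abs, this, one_mul]

lemma OneStep.sym2 (h : OneStep P Z κ) (b : Fin n → Bool) (η η' p : ℝ) (hp : 2 ≤ p)
    (hη : η * η = 1) (hη' : η' * η' = 1) :
    ∫ ω, ‖lc (zv Z ω) (cf b η)‖ ^ p ∂(Measure.pi fun _ : Fin n => P) ≤
    2 ^ p * ∫ ω, ‖lc (zv Z ω) (cf b η')‖ ^ p ∂(Measure.pi fun _ : Fin n => P) := by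
  have h1 := h.sym1 b η' p hp
  have h2 := h.sym1 (fun i => !b i) η' p hp
  simp only [cf_compl _ b η' hη'] at h2
  have habs : |η| = 1 := by
    have : |η| * |η| = 1 := by rw [← abs_mul, hη, abs_one]
    nlinarith [abs_nonneg η]
  have i1 := h.int (cf b 0) p (by linarith)
  have i2 := h.int (cf (fun i => !b i) 0) p (by linarith)
  have h3 : ∫ ω, ‖lc (zv Z ω) (cf b η)‖ ^ p ∂(Measure.pi fun _ : Fin n => P) ≤
      ∫ ω, 2 ^ p * ((‖lc (zv Z ω) (cf b 0)‖ ^ p + ‖lc (zv Z ω) (cf (fun i => !b i) 0)‖ ^ p) / 2)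
        ∂(Measure.pi fun _ : Fin n => P) := by
    refine integral_mono (h.int _ p (by linarith)) (((i1.add i2).div_const 2).const_mul _) fun ω => ?_
    refine le_trans ?_ (add_rpow_half _ _ p (norm_nonneg _) (norm_nonneg _) (by linarith))
    refine Real.rpow_le_rpow (norm_nonneg _) ?_ (by linarith)
    rw [cf_split]
    refine (norm_add_le _ _).trans ?_
    rw [norm_smul, Real.norm_eq_abs, habs, one_mul]
  refine h3.trans ?_
  rw [integral_const_mul, integral_div, integral_add i1 i2]
  gcongr
  linarith

lemma sg_cf (ε : Fin n → Bool) : (fun i => sg (ε i)) = cf ε (-1) := by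
  funext i; simp [sg, cf]

lemma cf_one (ε : Fin n → Bool) : (cf ε 1) = fun _ => 1 := by
  funext i; simp [cf]

lemma av_integral {Ω : Type*} [MeasurableSpace Ω] {μ : Measure Ω} (f : (Fin n → Bool) → Ω → ℝ)
    (hf : ∀ ε, Integrable (f ε) μ) : ∫ ω, av (fun ε => f ε ω) ∂μ = av (fun ε => ∫ ω, f ε ω ∂μ) := by
  unfold av
  rw [integral_div, integral_finsetSum _ (fun ε _ => hf ε)]

lemma av_integrable {Ω : Type*} [MeasurableSpace Ω] {μ : Measure Ω} (f : (Fin n → Bool) → Ω → ℝ)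
    (hf : ∀ ε, Integrable (f ε) μ) : Integrable (fun ω => av (fun ε => f ε ω)) μ := by
  unfold av
  exact (integrable_finsetSum _ (fun ε _ => hf ε)).div_const _

theorem OneStep.main (h : OneStep P Z κ) (hκ : 0 < κ) (r : ℝ) (hr : 2 ≤ r) :
    ∫ ω, ‖lc (zv Z ω) (fun _ => 1)‖ ^ r ∂(Measure.pi fun _ : Fin n => P) ≤
      (64 * Real.exp 5 * (Real.sqrt r * Real.sqrt
        (∫ ω, ‖lc (zv Z ω) (fun _ => 1)‖ ^ 2 ∂(Measure.pi fun _ : Fin n => P)) + r * κ)) ^ r := by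
  set μ := Measure.pi fun _ : Fin n => P with hμ
  set E2 := ∫ ω, ‖lc (zv Z ω) (fun _ => 1)‖ ^ 2 ∂μ with hE2
  have hE20 : 0 ≤ E2 := integral_nonneg fun ω => by positivity
  set G := Real.sqrt r * Real.sqrt E2 + r * κ with hG
  have hr0 : 0 < r := by linarith
  have hG0 : 0 ≤ G := by positivity
  have hInt2 : ∀ a, Integrable (fun ω => ‖lc (zv Z ω) a‖ ^ 2) μ := fun a => by
    have := h.int a 2 (by norm_num)
    simpa [Real.rpow_two] using this
  have hInt1 : ∀ a, Integrable (fun ω => ‖lc (zv Z ω) a‖) μ := fun a => by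
    have := h.int a 1 (by norm_num)
    simpa [Real.rpow_one] using this
  -- second moments
  set A := ∫ ω, av (fun ε => ‖lc (zv Z ω) (fun i => sg (ε i))‖ ^ 2) ∂μ with hA
  have hA4 : A ≤ 4 * E2 := by
    rw [hA, av_integral _ (fun ε => hInt2 _), ← av_const (n := n) (4 * E2)]
    refine av_mono fun ε => ?_
    have := h.sym2 ε (-1) 1 2 le_rfl (by norm_num) (by norm_num)
    rw [cf_one, ← sg_cf] at this
    simp only [Real.rpow_two] at this
    norm_num at this
    exact this
  -- Y
  have hYm : Measurable fun ω => Yf (zv Z ω) := by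
    unfold Yf av
    exact (Finset.measurable_sum _ fun ε _ => h.meas _).div_const _
  have hW2m : Measurable fun ω => W2 (zv Z ω) := by
    unfold W2
    exact Measurable.iSup fun a => ((h.meas _).pow_const 2).div_const _
  have hY0 : ∀ ω, 0 ≤ Yf (zv Z ω) := fun ω => av_nonneg fun ε => norm_nonneg _
  have hW0 : ∀ ω, 0 ≤ W2 (zv Z ω) := fun ω => W2_nonneg _
  have hYb : ∀ ω, Yf (zv Z ω) ≤ n * κ := fun ω => (Yf_le _).trans (by
    refine (Finset.sum_le_sum fun i _ => h.bd i _).trans ?_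
    simp)
  have hWb : ∀ ω, W2 (zv Z ω) ≤ n * κ ^ 2 := fun ω => (W2_le _).trans (by
    refine (Finset.sum_le_sum fun i _ => pow_le_pow_left₀ (norm_nonneg _) (h.bd i _) 2).trans ?_
    simp)
  have hYi := integrable_of_meas_bdd (μ := μ) hYm _ hY0 hYb
  have hWi := integrable_of_meas_bdd (μ := μ) hW2m _ hW0 hWb
  have hYE : ∫ ω, Yf (zv Z ω) ∂μ ≤ 2 * Real.sqrt E2 := by
    have j := jensen_rpow μ hYm _ hY0 hYb 2 (by norm_num)
    simp only [Real.rpow_two] at j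
    have h1 : ∫ ω, Yf (zv Z ω) ^ 2 ∂μ ≤ A := by
      refine integral_mono ?_ (av_integrable _ fun ε => hInt2 _) fun ω => ?_
      · exact integrable_of_meas_bdd (hYm.pow_const 2) ((n * κ) ^ 2) (fun ω => by positivity)
          (fun ω => pow_le_pow_left₀ (hY0 ω) (hYb ω) 2)
      · beta_reduce
        unfold Yf av
        have cs := sq_sum_le_card_mul_sum_sq (s := (univ : Finset (Fin n → Bool)))
          (f := fun ε => ‖lc (zv Z ω) (fun i => sg (ε i))‖)
        simp only [card_univ, Fintype.card_pi, Fintype.card_bool, prod_const, Fintype.card_fin] at cs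
        push_cast at cs
        rw [div_pow, div_le_div_iff₀ (by positivity) (by positivity)]
        nlinarith [pow_pos (two_pos : (0:ℝ) < 2) n]
    have h2 : (∫ ω, Yf (zv Z ω) ∂μ) ^ 2 ≤ (2 * Real.sqrt E2) ^ 2 := by
      rw [mul_pow, Real.sq_sqrt hE20]; linarith
    exact le_of_sq_le_sq h2 (by positivity)
  have hWE : ∫ ω, W2 (zv Z ω) ∂μ ≤ 4 * E2 := by
    refine le_trans (integral_mono hWi (av_integrable _ fun ε => hInt2 _) fun ω => ?_) hA4
    exact W2_le_av _
  have hYr : ∫ ω, Yf (zv Z ω) ^ r ∂μ ≤ (16 * G) ^ r := by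
    refine (selfbound_moment P n _ hYm (n * κ) κ r hY0 hYb hκ (by linarith) ?_).trans ?_
    · intro x y z
      classical
      have := Yf_two (zv Z x) (zv Z y) (zv Z z) (fun i => x i = y i) (fun i => x i = z i) κ
        (fun i => h.bd i _) (fun i hi => by simp [zv, hi]) (fun i hi => by simp [zv, hi])
      convert this
      simp only [nmiss, ne_eq]
    · have : 0 ≤ ∫ ω, Yf (zv Z ω) ∂μ := integral_nonneg hY0
      refine Real.rpow_le_rpow (by positivity) ?_ hr0.le
      have h1 : Real.sqrt E2 ≤ Real.sqrt r * Real.sqrt E2 :=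
        le_mul_of_one_le_left (Real.sqrt_nonneg _) (Real.one_le_sqrt.2 (by linarith))
      have : 0 ≤ r * κ := by positivity
      rw [hG]
      linarith
  have hWr : ∫ ω, (Real.sqrt r * Real.sqrt (W2 (zv Z ω))) ^ r ∂μ ≤ (16 * G) ^ r := by
    have e : ∀ ω, (Real.sqrt r * Real.sqrt (W2 (zv Z ω))) ^ r = r ^ (r / 2) * W2 (zv Z ω) ^ (r / 2) := by
      intro ω
      rw [Real.mul_rpow (by positivity) (by positivity), Real.sqrt_eq_rpow, Real.sqrt_eq_rpow,
        ← Real.rpow_mul hr0.le, ← Real.rpow_mul (hW0 ω)]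
      congr 2 <;> ring
    simp only [e]
    rw [integral_const_mul]
    have hE0 : 0 ≤ ∫ ω, W2 (zv Z ω) ∂μ := integral_nonneg hW0
    have sb := selfbound_moment P n _ hW2m (n * κ ^ 2) (κ ^ 2) (r / 2) hW0 hWb (by positivity) (by linarith) (by
      intro x y z
      classical
      have := W2_two (zv Z x) (zv Z y) (zv Z z) (fun i => x i = y i) (fun i => x i = z i) κ
        (fun i => h.bd i _) (fun i hi => by simp [zv, hi]) (fun i hi => by simp [zv, hi])
      convert this
      simp only [nmiss, ne_eq])
    refine (mul_le_mul_of_nonneg_left sb (by positivity)).trans ?_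
    rw [← Real.mul_rpow hr0.le (by positivity)]
    have e2 : (16 * G) ^ r = ((16 * G) ^ 2) ^ (r / 2) := by
      rw [← Real.rpow_natCast, ← Real.rpow_mul (by positivity)]; congr 1; push_cast; ring
    rw [e2]
    refine Real.rpow_le_rpow (by positivity) ?_ (by linarith)
    have hG2 : r * E2 + r ^ 2 * κ ^ 2 ≤ G ^ 2 := by
      have : (Real.sqrt r * Real.sqrt E2) ^ 2 = r * E2 := by
        rw [mul_pow, Real.sq_sqrt hr0.le, Real.sq_sqrt hE20]
      have h3 : 0 ≤ (Real.sqrt r * Real.sqrt E2) * (r * κ) := by positivity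
      rw [hG]; nlinarith
    have h5 : r * ∫ ω, W2 (zv Z ω) ∂μ ≤ r * (4 * E2) := by gcongr
    have h6 : 0 ≤ r ^ 2 * κ ^ 2 := by positivity
    nlinarith
  -- combine
  have hm3 : Integrable (fun ω => (Yf (zv Z ω) + Real.sqrt r * Real.sqrt (W2 (zv Z ω))) ^ r) μ :=
    integrable_of_meas_bdd ((hYm.add (hW2m.sqrt.const_mul _)).pow_const r)
      ((n * κ + Real.sqrt r * Real.sqrt (n * κ ^ 2)) ^ r)
      (fun ω => by have := hY0 ω; positivity)
      (fun ω => Real.rpow_le_rpow (by have := hY0 ω; positivity)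
        (add_le_add (hYb ω) (by gcongr; exact hWb ω)) hr0.le)
  have hsum : ∫ ω, (Yf (zv Z ω) + Real.sqrt r * Real.sqrt (W2 (zv Z ω))) ^ r ∂μ ≤ (32 * G) ^ r := by
    have hm1 : Integrable (fun ω => Yf (zv Z ω) ^ r) μ :=
      integrable_of_meas_bdd (hYm.pow_const r) ((n * κ) ^ r) (fun ω => Real.rpow_nonneg (hY0 ω) _)
        (fun ω => Real.rpow_le_rpow (hY0 ω) (hYb ω) hr0.le)
    have hm2 : Integrable (fun ω => (Real.sqrt r * Real.sqrt (W2 (zv Z ω))) ^ r) μ :=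
      integrable_of_meas_bdd ((hW2m.sqrt.const_mul _).pow_const r) ((Real.sqrt r * Real.sqrt (n * κ ^ 2)) ^ r)
        (fun ω => by positivity)
        (fun ω => Real.rpow_le_rpow (by positivity) (by gcongr; exact hWb ω) hr0.le)
    calc _ ≤ ∫ ω, 2 ^ r * ((Yf (zv Z ω) ^ r + (Real.sqrt r * Real.sqrt (W2 (zv Z ω))) ^ r) / 2) ∂μ :=
          integral_mono hm3 (((hm1.add hm2).div_const 2).const_mul _) fun ω =>
            add_rpow_half _ _ r (hY0 ω) (by positivity) (by linarith)
      _ = 2 ^ r * ((∫ ω, Yf (zv Z ω) ^ r ∂μ + ∫ ω, (Real.sqrt r * Real.sqrt (W2 (zv Z ω))) ^ r ∂μ) / 2) := by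
          rw [integral_const_mul, integral_div, integral_add hm1 hm2]
      _ ≤ 2 ^ r * (16 * G) ^ r := by gcongr; linarith
      _ = _ := by rw [← Real.mul_rpow (by norm_num) (by positivity)]; congr 1; ring
  have hav : ∫ ω, ‖lc (zv Z ω) (fun _ => 1)‖ ^ r ∂μ ≤
      2 ^ r * ∫ ω, av (fun ε => ‖lc (zv Z ω) (fun i => sg (ε i))‖ ^ r) ∂μ := by
    rw [av_integral _ (fun ε => h.int _ r hr0.le), ← av_const_mul,
      ← av_const (n := n) (∫ ω, ‖lc (zv Z ω) (fun _ => 1)‖ ^ r ∂μ)]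
    refine av_mono fun ε => ?_
    have := h.sym2 ε 1 (-1) r hr (by norm_num) (by norm_num)
    rwa [cf_one, ← sg_cf] at this
  have hfin : ∫ ω, av (fun ε => ‖lc (zv Z ω) (fun i => sg (ε i))‖ ^ r) ∂μ ≤
      Real.exp 5 ^ r * (32 * G) ^ r := by
    refine le_trans ?_ (mul_le_mul_of_nonneg_left hsum (by positivity))
    rw [← integral_const_mul]
    have hm3 := hm3.const_mul (Real.exp 5 ^ r)
    refine integral_mono (av_integrable _ fun ε => h.int _ r hr0.le) hm3 fun ω => ?_
    refine (rad_conc _ r (by linarith)).trans_eq ?_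
    have := hY0 ω
    rw [Real.mul_rpow (by positivity) (by positivity)]
  refine hav.trans ((mul_le_mul_of_nonneg_left hfin (by positivity)).trans_eq ?_)
  rw [← Real.mul_rpow (by positivity) (by positivity), ← Real.mul_rpow (by positivity) (by positivity)]
  congr 1; ring
end

lemma sq_norm_toLp {T B : Type*} [MeasurableSpace T] (μ : Measure T) [NormedAddCommGroup B]
    (f : T → B) (hf : MemLp f 2 μ) : ‖hf.toLp f‖ ^ 2 = ∫ t, ‖f t‖ ^ 2 ∂μ := by
  rw [Lp.norm_toLp, hf.eLpNorm_eq_integral_rpow_norm (by simp) (by simp)]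
  have h0 : 0 ≤ ∫ t, ‖f t‖ ^ (2:ℝ) ∂μ := integral_nonneg fun t => by positivity
  simp only [ENNReal.toReal_ofNat]
  rw [ENNReal.toReal_ofReal (by positivity), ← Real.rpow_natCast, ← Real.rpow_mul h0]
  simp

lemma toLp_sum {ι T B : Type*} [MeasurableSpace T] (μ : Measure T) [NormedAddCommGroup B] [NormedSpace ℝ B]
    (s : Finset ι) (a : ι → ℝ) (f : ι → T → B) (hf : ∀ i, MemLp (f i) 2 μ) :
    ∃ h : MemLp (fun t => ∑ i ∈ s, a i • f i t) 2 μ, ∑ i ∈ s, a i • (hf i).toLp (f i) = h.toLp _ := by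
  classical
  induction s using Finset.induction_on with
  | empty =>
    refine ⟨by simp, ?_⟩
    simp only [Finset.sum_empty]
    exact (MemLp.toLp_zero _).symm
  | insert i s hi ih =>
    obtain ⟨h, e⟩ := ih
    have e2 : (fun t => ∑ j ∈ insert i s, a j • f j t) = a i • f i + fun t => ∑ j ∈ s, a j • f j t := by
      funext t; simp [Finset.sum_insert hi]
    have h2 : MemLp (a i • f i + fun t => ∑ j ∈ s, a j • f j t) 2 μ := ((hf i).const_smul (a i)).add h
    refine ⟨e2 ▸ h2, ?_⟩
    rw [Finset.sum_insert hi, e, ← MemLp.toLp_const_smul, ← MemLp.toLp_add]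
    congr 1
    exact e2.symm

section
variable {B : Type} [NormedAddCommGroup B] [NormedSpace ℝ B] [CompleteSpace B]
variable {S : Type} [MeasurableSpace S] (P : Measure S) [IsProbabilityMeasure P]

lemma jensen_pt {Ω : Type*} [MeasurableSpace Ω] (ν : Measure Ω) [IsProbabilityMeasure ν] (u : B)
    (w : Ω → B) (hw : StronglyMeasurable w) (M : ℝ) (hM : ∀ ω, ‖w ω‖ ≤ M) (h0 : ∫ ω, w ω ∂ν = 0) :
    ‖u‖ ^ 2 ≤ ∫ ω, ‖u + w ω‖ ^ 2 ∂ν := by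
  have hi : Integrable w ν := Integrable.of_bound hw.aestronglyMeasurable M (Filter.Eventually.of_forall hM)
  have e : u = ∫ ω, (u + w ω) ∂ν := by
    rw [integral_add (integrable_const _) hi, h0]; simp
  have h1 : ‖u‖ ≤ ∫ ω, ‖u + w ω‖ ∂ν := by
    conv_lhs => rw [e]
    exact norm_integral_le_integral_norm _
  have j := jensen_rpow ν (f := fun ω => ‖u + w ω‖) (stronglyMeasurable_const.add hw).norm.measurable
    (‖u‖ + M) (fun ω => norm_nonneg _) (fun ω => (norm_add_le _ _).trans (by gcongr; exact hM ω)) 2 (by norm_num)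
  simp only [Real.rpow_two] at j
  exact le_trans (by gcongr) j

variable {T : Type} [MeasurableSpace T] (μ : Measure T) [IsProbabilityMeasure μ]

lemma onestep_L2 {n : ℕ} (f : Fin n → S → T → B) (κ : ℝ) (hκ : 0 < κ)
    (hm : ∀ i, StronglyMeasurable fun p : S × T => f i p.1 p.2)
    (hb : ∀ i x t, ‖f i x t‖ ≤ κ) (hc : ∀ i t, ∫ y, f i y t ∂P = 0) (r : ℝ) (hr : 2 ≤ r) :
    ∫ ω : Fin n → S, (∫ t, ‖∑ i, f i (ω i) t‖ ^ 2 ∂μ) ^ (r / 2) ∂(Measure.pi fun _ : Fin n => P) ≤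
    (64 * Real.exp 5 * (Real.sqrt r * Real.sqrt
        (∫ ω : Fin n → S, ∫ t, ‖∑ i, f i (ω i) t‖ ^ 2 ∂μ ∂(Measure.pi fun _ : Fin n => P)) + r * κ)) ^ r := by
  have hsm : ∀ i x, StronglyMeasurable (f i x) := fun i x =>
    (hm i).comp_measurable measurable_prodMk_left
  have hL : ∀ i x, MemLp (f i x) 2 μ := fun i x =>
    MemLp.of_bound (hsm i x).aestronglyMeasurable κ (Filter.Eventually.of_forall (hb i x))
  set Z : Fin n → S → Lp B 2 μ := fun i x => (hL i x).toLp (f i x) with hZ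
  have key : ∀ (ω : Fin n → S) (a : Fin n → ℝ), ‖lc (zv Z ω) a‖ ^ 2 = ∫ t, ‖∑ i, a i • f i (ω i) t‖ ^ 2 ∂μ := by
    intro ω a
    obtain ⟨h, e⟩ := toLp_sum μ univ a (fun i => f i (ω i)) (fun i => hL i (ω i))
    have : lc (zv Z ω) a = h.toLp _ := e
    rw [this, sq_norm_toLp]
  have jm : ∀ (a : Fin n → ℝ), StronglyMeasurable fun p : (Fin n → S) × T => ∑ i, a i • f i (p.1 i) p.2 := by
    intro a
    refine Finset.stronglyMeasurable_fun_sum _ fun i _ => StronglyMeasurable.const_smul ?_ _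
    exact (hm i).comp_measurable (g := fun p : (Fin n → S) × T => (p.1 i, p.2)) (by fun_prop)
  have jb : ∀ (a : Fin n → ℝ) (ω : Fin n → S) t, ‖∑ i, a i • f i (ω i) t‖ ≤ ∑ i, |a i| * κ := by
    intro a ω t
    refine (norm_sum_le _ _).trans (Finset.sum_le_sum fun i _ => ?_)
    rw [norm_smul, Real.norm_eq_abs]; gcongr; exact hb _ _ _
  have os : OneStep P Z κ := by
    refine ⟨fun a => ?_, fun i x => ?_, fun b η ω => ?_⟩
    · have h1 : (fun ω => ‖lc (zv Z ω) a‖) = fun ω => Real.sqrt (∫ t, ‖∑ i, a i • f i (ω i) t‖ ^ 2 ∂μ) := by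
        funext ω; rw [← key, Real.sqrt_sq (norm_nonneg _)]
      rw [h1]
      exact (((jm a).norm.pow 2).integral_prod_right (ν := μ)).measurable.sqrt
    · have h2 : ‖Z i x‖ ^ 2 ≤ κ ^ 2 := by
        rw [hZ, sq_norm_toLp]
        calc _ ≤ ∫ t, κ ^ 2 ∂μ := by
              refine integral_mono_of_nonneg (Filter.Eventually.of_forall fun t => by positivity) (integrable_const _) ?_
              exact Filter.Eventually.of_forall fun t => pow_le_pow_left₀ (norm_nonneg _) (hb i x t) 2
          _ = κ ^ 2 := by simp
      exact le_of_sq_le_sq h2 hκ.le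
    · simp only [key]
      set ν := Measure.pi fun _ : Fin n => P
      have hmix : Measurable fun q : (Fin n → S) × T => ((fun i => if b i then ω i else q.1 i : Fin n → S), q.2) := by
        refine Measurable.prodMk (measurable_pi_lambda _ fun i => ?_) measurable_snd
        cases b i
        · simp; fun_prop
        · simp
      have hm2 : StronglyMeasurable fun q : (Fin n → S) × T =>
          ∑ i, cf b η i • f i (if b i then ω i else q.1 i) q.2 := (jm (cf b η)).comp_measurable hmix
      have hInt : Integrable (fun q : (Fin n → S) × T =>
          ‖∑ i, cf b η i • f i (if b i then ω i else q.1 i) q.2‖ ^ 2) (ν.prod μ) :=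
        integrable_of_meas_bdd (hm2.norm.measurable.pow_const 2) ((∑ i, |cf b η i| * κ) ^ 2)
          (fun q => by positivity) (fun q => by
            gcongr; exact jb (cf b η) (fun i => if b i then ω i else q.1 i) q.2)
      rw [integral_integral_swap hInt]
      refine integral_mono ?_ hInt.integral_prod_right fun t => ?_
      · refine integrable_of_meas_bdd (M := (∑ i, |cf b 0 i| * κ) ^ 2) ?_ (fun q => by positivity) (fun q => by
            gcongr; exact jb _ _ _)
        exact ((jm (cf b 0)).comp_measurable measurable_prodMk_left).norm.measurable.pow_const 2
      · beta_reduce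
        have e : ∀ ω' : Fin n → S, ∑ i, cf b η i • f i (if b i then ω i else ω' i) t =
            ∑ i, cf b 0 i • f i (ω i) t + ∑ i, (cf b η i - cf b 0 i) • f i (ω' i) t := by
          intro ω'
          rw [← Finset.sum_add_distrib]
          refine Finset.sum_congr rfl fun i _ => ?_
          cases hbi : b i <;> simp [cf, hbi]
        simp only [e]
        have hi : ∀ i, Integrable (fun y => f i y t) P := fun i =>
          Integrable.of_bound ((hm i).comp_measurable measurable_prodMk_right).aestronglyMeasurable κ
            (Filter.Eventually.of_forall fun y => hb i y t)
        refine jensen_pt ν _ _ ((jm _).comp_measurable measurable_prodMk_right) _ (fun ω' => jb _ ω' t) ?_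
        rw [integral_finsetSum]
        · refine Finset.sum_eq_zero fun i _ => ?_
          rw [integral_smul]
          have := integral_comp_eval (μ := fun _ : Fin n => P) (i := i) (f := fun y => f i y t) (hi i).aestronglyMeasurable
          rw [this, hc, smul_zero]
        · intro i _
          exact (integrable_comp_eval (μ := fun _ : Fin n => P) (i := i) (f := fun y => f i y t) (hi i)).smul _
  have M := os.main hκ r hr
  have e2 : ∀ x : ℝ, 0 ≤ x → (x ^ 2) ^ (r / 2) = x ^ r := by
    intro x hx
    rw [← Real.rpow_natCast, ← Real.rpow_mul hx]; congr 1; push_cast; ring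
  simp only [← e2 _ (norm_nonneg _), key, one_smul] at M
  exact M

end

lemma integral_pi_cons {X : Type*} [MeasurableSpace X] (P : Measure X) [IsProbabilityMeasure P] (k : ℕ)
    (F : (Fin (k+1) → X) → ℝ) (hF : Measurable F) (M : ℝ) (h0 : ∀ x, 0 ≤ F x) (hM : ∀ x, F x ≤ M) :
    ∫ x, F x ∂(Measure.pi fun _ : Fin (k+1) => P) =
      ∫ x, ∫ s, F (Fin.cons s x) ∂P ∂(Measure.pi fun _ : Fin k => P) := by
  have h := (measurePreserving_piFinSuccAbove (fun _ : Fin (k+1) => P) 0).symm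
  rw [← mp_integral h hF, integral_prod_symm]
  · simp [MeasurableEquiv.piFinSuccAbove, Fin.insertNthEquiv, Fin.insertNth_zero']
  · exact integrable_of_meas_bdd (hF.comp h.measurable) M (fun x => h0 _) (fun x => hM _)

lemma sum_fin_cons {n k : ℕ} {M : Type*} [AddCommMonoid M] (f : (Fin (k+1) → Fin n) → M) :
    ∑ i, f i = ∑ i' : Fin k → Fin n, ∑ i0, f (Fin.cons i0 i') := by
  rw [← (Fin.consEquiv (fun _ : Fin (k+1) => Fin n)).sum_comp, Fintype.sum_prod_type, Finset.sum_comm]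
  rfl

/-- constants of the chaining induction -/
def Dk : ℕ → ℝ
  | 0 => 1
  | (k+1) => 2 * (64 * Real.exp 5) * (Dk k + 1)

lemma Dk_pos (k : ℕ) : 0 < Dk k := by
  induction k with
  | zero => simp [Dk]
  | succ k ih => rw [Dk]; positivity

section
variable {B : Type} [NormedAddCommGroup B] [NormedSpace ℝ B] [CompleteSpace B]
variable {S : Type} [MeasurableSpace S] (P : Measure S) [IsProbabilityMeasure P]

/-- the squared L2 norm in the parameter of the decoupled sum -/
def Qf {n k : ℕ} {T : Type} [MeasurableSpace T] (μ : Measure T)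
    (H : (Fin k → Fin n) → T → (Fin k → S) → B) (ω : Fin k → Fin n → S) : ℝ :=
  ∫ t, ‖∑ i, H i t (fun j => ω j (i j))‖ ^ 2 ∂μ

lemma Qf_sm {n k : ℕ} {T : Type} [MeasurableSpace T]
    (H : (Fin k → Fin n) → T → (Fin k → S) → B)
    (hm : ∀ i, StronglyMeasurable fun p : T × (Fin k → S) => H i p.1 p.2) :
    StronglyMeasurable fun p : (Fin k → Fin n → S) × T => ∑ i, H i p.2 (fun j => p.1 j (i j)) := by
  refine Finset.stronglyMeasurable_fun_sum _ fun i _ => ?_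
  exact (hm i).comp_measurable (g := fun p : (Fin k → Fin n → S) × T => (p.2, fun j => p.1 j (i j))) (by fun_prop)

lemma Qf_meas {n k : ℕ} {T : Type} [MeasurableSpace T] (μ : Measure T) [IsProbabilityMeasure μ]
    (H : (Fin k → Fin n) → T → (Fin k → S) → B)
    (hm : ∀ i, StronglyMeasurable fun p : T × (Fin k → S) => H i p.1 p.2) :
    Measurable (Qf μ H) :=
  (((Qf_sm H hm).norm.pow 2).integral_prod_right (ν := μ)).measurable

lemma Qf_nonneg {n k : ℕ} {T : Type} [MeasurableSpace T] (μ : Measure T)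
    (H : (Fin k → Fin n) → T → (Fin k → S) → B) (ω) : 0 ≤ Qf μ H ω :=
  integral_nonneg fun t => by positivity

lemma Qf_bd {n k : ℕ} {T : Type} [MeasurableSpace T] (μ : Measure T) [IsProbabilityMeasure μ]
    (H : (Fin k → Fin n) → T → (Fin k → S) → B) (κ : ℝ)
    (hb : ∀ i t x, ‖H i t x‖ ≤ κ) (ω) : Qf μ H ω ≤ (n ^ k * κ) ^ 2 := by
  calc _ ≤ ∫ t, ((n:ℝ) ^ k * κ) ^ 2 ∂μ := by
        refine integral_mono_of_nonneg (Filter.Eventually.of_forall fun t => by positivity) (integrable_const _) ?_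
        refine Filter.Eventually.of_forall fun t => pow_le_pow_left₀ (norm_nonneg _) ?_ 2
        refine (norm_sum_le _ _).trans ((Finset.sum_le_sum fun i _ => hb i _ _).trans ?_)
        simp
    _ = _ := by simp

theorem chain (n : ℕ) (hn : 1 ≤ n) (R r : ℝ) (hR : 0 ≤ R) (hr : 2 ≤ r) (k : ℕ) :
    ∀ (T : Type) [MeasurableSpace T] (μ : Measure T) [IsProbabilityMeasure μ] (κ : ℝ)
    (H : (Fin k → Fin n) → T → (Fin k → S) → B), 0 < κ →
    (∀ i, StronglyMeasurable fun p : T × (Fin k → S) => H i p.1 p.2) →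
    (∀ i t x, ‖H i t x‖ ≤ κ) →
    (∀ i t j x, ∫ y, H i t (Function.update x j y) ∂P = 0) →
    (n:ℝ) ^ k * κ = n * R →
    ∫ ω, Qf μ H ω ^ (r / 2) ∂(Measure.pi fun _ : Fin k => Measure.pi fun _ : Fin n => P) ≤
      (Dk k * (Real.sqrt r ^ k * Real.sqrt
        (∫ ω, Qf μ H ω ∂(Measure.pi fun _ : Fin k => Measure.pi fun _ : Fin n => P))
        + Real.sqrt r ^ (k + 1) * R)) ^ r := by
  have hr0 : 0 < r := by linarith
  have hn0 : (0:ℝ) < n := by exact_mod_cast hn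
  induction k with
  | zero =>
    intro T _ μ _ κ H hκ hm hb hc hnR
    have e : ∀ ω, Qf μ H ω = Qf μ H default := fun ω => congrArg _ (Subsingleton.elim _ _)
    simp only [e, integral_const, probReal_univ, smul_eq_mul, one_mul, Dk, pow_zero]
    have h0 := Qf_nonneg μ H default
    have e2 : Qf μ H default ^ (r / 2) = Real.sqrt (Qf μ H default) ^ r := by
      rw [Real.sqrt_eq_rpow, ← Real.rpow_mul h0]; congr 1; ring
    rw [e2]
    refine Real.rpow_le_rpow (by positivity) ?_ hr0.le
    have : 0 ≤ Real.sqrt r ^ (0 + 1) * R := by positivity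
    linarith
  | succ k ih =>
    intro T _ μ _ κ H hκ hm hb hc hnR
    set ν := Measure.pi fun _ : Fin n => P with hν
    have hRk : (n:ℝ) ^ k * κ = R := by
      have : (n:ℝ) * (n ^ k * κ) = n * R := by rw [← hnR]; ring
      exact mul_left_cancel₀ hn0.ne' this
    have hRpos : 0 < R := by rw [← hRk]; positivity
    -- new kernels
    let H' : (Fin k → Fin n) → T × (Fin n → S) → (Fin k → S) → B := fun i' q x =>
      ∑ i0, H (Fin.cons i0 i') q.1 (Fin.cons (q.2 i0) x)
    have hm' : ∀ i, StronglyMeasurable fun p : (T × (Fin n → S)) × (Fin k → S) => H' i p.1 p.2 := by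
      intro i
      refine Finset.stronglyMeasurable_fun_sum _ fun i0 _ => ?_
      refine (hm (Fin.cons i0 i)).comp_measurable
        (g := fun p : (T × (Fin n → S)) × (Fin k → S) => (p.1.1, (Fin.cons (p.1.2 i0) p.2 : Fin (k+1) → S))) ?_
      refine Measurable.prodMk (by fun_prop) ?_
      exact (measurable_cons k).comp (by fun_prop : Measurable fun p : (T × (Fin n → S)) × (Fin k → S) => (p.1.2 i0, p.2))
    have hb' : ∀ i t x, ‖H' i t x‖ ≤ n * κ := by
      intro i t x
      refine (norm_sum_le _ _).trans ((Finset.sum_le_sum fun i _ => hb _ _ _).trans ?_)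
      simp
    have hHi : ∀ i t j x, Integrable (fun y => H i t (Function.update x j y)) P := by
      intro i t j x
      refine Integrable.of_bound (StronglyMeasurable.aestronglyMeasurable ?_) κ (Filter.Eventually.of_forall fun y => hb i t _)
      exact (hm i).comp_measurable (g := fun y => (t, Function.update x j y))
        (Measurable.prodMk measurable_const (measurable_update x))
    have hc' : ∀ i t j x, ∫ y, H' i t (Function.update x j y) ∂P = 0 := by
      intro i t j x
      have e : ∀ (i0 : Fin n) (y : S), (Fin.cons (t.2 i0) (Function.update x j y) : Fin (k+1) → S) =
          Function.update (Fin.cons (t.2 i0) x : Fin (k+1) → S) j.succ y := fun i0 y => by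
        rw [Fin.cons_update]
      simp only [H', e]
      rw [integral_finsetSum _ (fun i0 _ => hHi _ _ _ _)]
      exact Finset.sum_eq_zero fun i0 _ => hc _ _ _ _
    have IH := ih (T × (Fin n → S)) (μ.prod ν) (n * κ) H' (by positivity) hm' hb' hc' (by rw [← hnR]; ring)
    -- relation of Qf
    have eS : ∀ (ω0 : Fin n → S) (ω' : Fin k → Fin n → S) (t : T),
        ∑ i : Fin (k+1) → Fin n, H i t (fun j => (Fin.cons ω0 ω' : Fin (k+1) → Fin n → S) j (i j)) =
        ∑ i' : Fin k → Fin n, ∑ i0, H (Fin.cons i0 i') t (Fin.cons (ω0 i0) (fun j => ω' j (i' j))) := by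
      intro ω0 ω' t
      rw [sum_fin_cons]
      refine Finset.sum_congr rfl fun i' _ => Finset.sum_congr rfl fun i0 _ => ?_
      congr 1
      funext j
      refine Fin.cases ?_ (fun j => ?_) j <;> simp
    have eQ' : ∀ ω', Qf (μ.prod ν) H' ω' = ∫ ω0, Qf μ H (Fin.cons ω0 ω') ∂ν := by
      intro ω'
      unfold Qf
      rw [integral_prod_symm]
      · refine integral_congr_ae (Filter.Eventually.of_forall fun ω0 => ?_)
        refine integral_congr_ae (Filter.Eventually.of_forall fun t => ?_)
        simp only [eS, H']
      · refine integrable_of_meas_bdd (M := ((n:ℝ) ^ k * (n * κ)) ^ 2) ?_ (fun q => by positivity) (fun q => ?_)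
        · exact (((Qf_sm H' hm').comp_measurable (measurable_prodMk_left (x := ω'))).norm.pow 2).measurable
        · refine pow_le_pow_left₀ (norm_nonneg _) ?_ 2
          refine (norm_sum_le _ _).trans ((Finset.sum_le_sum fun i _ => hb' i _ _).trans ?_)
          simp
    set E := ∫ ω, Qf μ H ω ∂(Measure.pi fun _ : Fin (k+1) => ν) with hE
    have hQm := Qf_meas μ H hm
    have hQ0 := Qf_nonneg μ H
    have hQb := Qf_bd μ H κ hb
    have eE : ∫ ω', Qf (μ.prod ν) H' ω' ∂(Measure.pi fun _ : Fin k => ν) = E := by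
      rw [hE, integral_pi_cons ν k _ hQm _ hQ0 hQb]
      exact integral_congr_ae (Filter.Eventually.of_forall eQ')
    rw [eE] at IH
    have hE0 : 0 ≤ E := integral_nonneg hQ0
    set X := Dk k * (Real.sqrt r ^ k * Real.sqrt E + Real.sqrt r ^ (k + 1) * R) with hX
    have hD := Dk_pos k
    have hX0 : 0 ≤ X := by positivity
    set C := 64 * Real.exp 5 with hC
    have hC0 : 0 < C := by positivity
    -- one-step for fixed omega
    have st : ∀ ω', ∫ ω0, Qf μ H (Fin.cons ω0 ω') ^ (r / 2) ∂ν ≤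
        (C * (Real.sqrt r * Real.sqrt (Qf (μ.prod ν) H' ω') + r * R)) ^ r := by
      intro ω'
      let f : Fin n → S → T → B := fun i0 x t =>
        ∑ i' : Fin k → Fin n, H (Fin.cons i0 i') t (Fin.cons x (fun j => ω' j (i' j)))
      have os := onestep_L2 P μ f R hRpos (fun i0 => by
          refine Finset.stronglyMeasurable_fun_sum _ fun i' _ => ?_
          refine (hm (Fin.cons i0 i')).comp_measurable
            (g := fun p : S × T => (p.2, (Fin.cons p.1 (fun j => ω' j (i' j)) : Fin (k+1) → S))) ?_
          refine Measurable.prodMk (by fun_prop) ?_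
          exact (measurable_cons k).comp (Measurable.prodMk measurable_fst measurable_const))
        (fun i0 x t => by
          refine (norm_sum_le _ _).trans ((Finset.sum_le_sum fun i _ => hb _ _ _).trans ?_)
          simp [hRk])
        (fun i0 t => by
          have e' : ∀ (i' : Fin k → Fin n), ∫ y, H (Fin.cons i0 i') t (Fin.cons y (fun j => ω' j (i' j))) ∂P = 0 ∧
              Integrable (fun y => H (Fin.cons i0 i') t (Fin.cons y (fun j => ω' j (i' j)))) P := by
            intro i'
            rcases isEmpty_or_nonempty S with hS | ⟨⟨s0⟩⟩
            · exact ⟨by simp [integral_of_isEmpty], by simp⟩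
            have e2 : ∀ y : S, (Fin.cons y (fun j => ω' j (i' j)) : Fin (k+1) → S) =
              Function.update (Fin.cons s0 (fun j => ω' j (i' j)) : Fin (k+1) → S) 0 y := fun y => by simp
            have e3 : (fun y => H (Fin.cons i0 i') t (Fin.cons y (fun j => ω' j (i' j)))) = fun y =>
                H (Fin.cons i0 i') t (Function.update (Fin.cons s0 (fun j => ω' j (i' j)) : Fin (k+1) → S) 0 y) :=
              funext fun y => congrArg (H (Fin.cons i0 i') t) (e2 y)
            rw [e3]
            exact ⟨hc _ _ _ _, hHi _ _ _ _⟩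
          simp only [f]
          rw [integral_finsetSum _ (fun i' _ => (e' i').2)]
          exact Finset.sum_eq_zero fun i' _ => (e' i').1) r hr
      have eF : ∀ ω0 : Fin n → S, ∫ t, ‖∑ i, f i (ω0 i) t‖ ^ 2 ∂μ = Qf μ H (Fin.cons ω0 ω') := by
        intro ω0
        unfold Qf
        refine integral_congr_ae (Filter.Eventually.of_forall fun t => ?_)
        simp only [eS, f]
        rw [Finset.sum_comm]
      simp only [eF] at os
      rw [← eQ'] at os
      exact os
    -- integrate
    have hQ'm := Qf_meas (μ.prod ν) H' hm'
    have hQ'0 := Qf_nonneg (μ.prod ν) H'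
    have hQ'b := Qf_bd (μ.prod ν) H' (n * κ) hb'
    have hpw : ∀ ω', (C * (Real.sqrt r * Real.sqrt (Qf (μ.prod ν) H' ω') + r * R)) ^ r ≤
        (2 * C) ^ r * (Real.sqrt r ^ r * Qf (μ.prod ν) H' ω' ^ (r / 2) + (r * R) ^ r) := by
      intro ω'
      rw [Real.mul_rpow hC0.le (by positivity), Real.mul_rpow (by norm_num) hC0.le]
      have h1 := add_rpow_half (Real.sqrt r * Real.sqrt (Qf (μ.prod ν) H' ω')) (r * R) r (by positivity) (by positivity) (by linarith)
      have e : (Real.sqrt r * Real.sqrt (Qf (μ.prod ν) H' ω')) ^ r = Real.sqrt r ^ r * Qf (μ.prod ν) H' ω' ^ (r / 2) := by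
        rw [Real.mul_rpow (by positivity) (by positivity)]
        congr 1
        rw [Real.sqrt_eq_rpow, ← Real.rpow_mul (hQ'0 ω')]; congr 1; ring
      rw [e] at h1
      have hq := hQ'0 ω'
      have h2 : (Real.sqrt r ^ r * Qf (μ.prod ν) H' ω' ^ (r / 2) + (r * R) ^ r) / 2 ≤
          Real.sqrt r ^ r * Qf (μ.prod ν) H' ω' ^ (r / 2) + (r * R) ^ r := half_le_self (by positivity)
      calc _ ≤ C ^ r * (2 ^ r * ((Real.sqrt r ^ r * Qf (μ.prod ν) H' ω' ^ (r / 2) + (r * R) ^ r) / 2)) := by gcongr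
        _ ≤ C ^ r * (2 ^ r * ((Real.sqrt r ^ r * Qf (μ.prod ν) H' ω' ^ (r / 2) + (r * R) ^ r))) := by gcongr
        _ = _ := by ring
    have hi' : Integrable (fun ω' => Qf (μ.prod ν) H' ω' ^ (r / 2)) (Measure.pi fun _ : Fin k => ν) :=
      integrable_of_meas_bdd (hQ'm.pow_const _) ((((n:ℝ) ^ k * (n * κ)) ^ 2) ^ (r / 2))
        (fun ω => Real.rpow_nonneg (hQ'0 ω) _) (fun ω => Real.rpow_le_rpow (hQ'0 ω) (hQ'b ω) (by linarith))
    rw [integral_pi_cons ν k _ (hQm.pow_const (r / 2)) ((((n:ℝ) ^ (k+1) * κ) ^ 2) ^ (r / 2))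
      (fun ω => Real.rpow_nonneg (hQ0 ω) _) (fun ω => Real.rpow_le_rpow (hQ0 ω) (hQb ω) (by linarith))]
    calc _ ≤ ∫ ω', (2 * C) ^ r * (Real.sqrt r ^ r * Qf (μ.prod ν) H' ω' ^ (r / 2) + (r * R) ^ r) ∂(Measure.pi fun _ : Fin k => ν) := by
          refine integral_mono_of_nonneg (Filter.Eventually.of_forall fun ω' => integral_nonneg fun ω0 => Real.rpow_nonneg (hQ0 _) _)
            (((hi'.const_mul _).add (integrable_const _)).const_mul _)
            (Filter.Eventually.of_forall fun ω' => (st ω').trans (hpw ω'))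
      _ = (2 * C) ^ r * (Real.sqrt r ^ r * ∫ ω', Qf (μ.prod ν) H' ω' ^ (r / 2) ∂(Measure.pi fun _ : Fin k => ν) + (r * R) ^ r) := by
          rw [integral_const_mul, integral_add (hi'.const_mul _) (integrable_const _), integral_const_mul]
          simp
      _ ≤ (2 * C) ^ r * (Real.sqrt r ^ r * X ^ r + (r * R) ^ r) := by gcongr
      _ = (2 * C) ^ r * ((Real.sqrt r * X) ^ r + (r * R) ^ r) := by
          rw [Real.mul_rpow (by positivity : 0 ≤ Real.sqrt r) hX0]
      _ ≤ (2 * C) ^ r * (Real.sqrt r * X + r * R) ^ r := by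
          gcongr
          exact rpow_add_rpow_le _ _ r (by positivity) (by positivity) (by linarith)
      _ = (2 * C * (Real.sqrt r * X + r * R)) ^ r := by
          exact (Real.mul_rpow (by positivity) (by positivity)).symm
      _ ≤ _ := by
          refine Real.rpow_le_rpow (by positivity) ?_ hr0.le
          rw [Dk, mul_assoc (2 * C)]
          gcongr
          set s := Real.sqrt r with hs
          have hs1 : 1 ≤ s := Real.one_le_sqrt.2 (by linarith)
          have hs2 : r = s ^ 2 := (Real.sq_sqrt hr0.le).symm
          have h1 : s ^ 2 * R ≤ s ^ (k + 1 + 1) * R := by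
            gcongr
            omega
          have h2 : 0 ≤ s ^ (k+1) * Real.sqrt E := by positivity
          have h3 : s * X = Dk k * (s ^ (k+1) * Real.sqrt E + s ^ (k+1+1) * R) := by rw [hX]; ring
          rw [h3]
          have h4 : r * R = s ^ 2 * R := by rw [← hs2]
          rw [h4]
          linarith
end

lemma mp_integralB {X Y B : Type*} [MeasurableSpace X] [MeasurableSpace Y] {μ : Measure X} {ν : Measure Y}
    [NormedAddCommGroup B] [NormedSpace ℝ B]
    {f : X → Y} (hf : MeasurePreserving f μ ν) {g : Y → B} (hg : StronglyMeasurable g) :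
    ∫ x, g (f x) ∂μ = ∫ y, g y ∂ν := by
  rw [← hf.map_eq, integral_map hf.measurable.aemeasurable hg.aestronglyMeasurable]

lemma card_delta {k n : ℕ} (i : Fin k → Fin n) (hi : Function.Injective i) :
    #{δ : Fin n → Fin k | ∀ j, δ (i j) = j} = k ^ (n - k) := by
  classical
  have e : ({δ : Fin n → Fin k | ∀ j, δ (i j) = j} : Finset _) =
      Fintype.piFinset (fun m => if h : ∃ j, i j = m then {h.choose} else univ) := by
    ext δ
    simp only [mem_filter, mem_univ, true_and, Fintype.mem_piFinset]
    constructor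
    · intro h m
      split_ifs with hm
      · rw [mem_singleton]
        have := hm.choose_spec
        conv_lhs => rw [← this]
        exact h _
      · simp
    · intro h j
      have h1 := h (i j)
      have hm : ∃ j', i j' = i j := ⟨j, rfl⟩
      rw [dif_pos hm, mem_singleton] at h1
      rw [h1]
      exact hi hm.choose_spec
  rw [e, Fintype.card_piFinset]
  have e2 : ∀ m : Fin n, #(if h : ∃ j, i j = m then {h.choose} else (univ : Finset (Fin k))) =
      if ∃ j, i j = m then 1 else k := by
    intro m; split_ifs <;> simp
  simp only [e2]
  rw [Finset.prod_ite]
  simp only [prod_const_one, one_mul, prod_const]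
  congr 1
  have h3 : ({m | ¬ ∃ j, i j = m} : Finset (Fin n)) = (univ.image i)ᶜ := by
    ext m; simp
  rw [h3, card_compl, card_image_of_injective _ hi]
  simp

section
variable {B : Type} [NormedAddCommGroup B] [NormedSpace ℝ B] [CompleteSpace B]
variable {S : Type} [MeasurableSpace S] (P : Measure S) [IsProbabilityMeasure P]

lemma diag_mp {k n : ℕ} (δ : Fin n → Fin k) :
    MeasurePreserving (fun (ω : Fin k → Fin n → S) m => ω (δ m) m)
      (Measure.pi fun _ : Fin k => Measure.pi fun _ : Fin n => P) (Measure.pi fun _ : Fin n => P) := by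
  classical
  have hm : Measurable (fun (ω : Fin k → Fin n → S) m => ω (δ m) m) := by fun_prop
  refine ⟨hm, ?_⟩
  symm
  refine Measure.pi_eq fun s hs => ?_
  rw [Measure.map_apply hm (MeasurableSet.univ_pi hs)]
  have e : (fun (ω : Fin k → Fin n → S) m => ω (δ m) m) ⁻¹' (Set.univ.pi s) =
      Set.univ.pi (fun j : Fin k => Set.univ.pi (fun m => if δ m = j then s m else Set.univ)) := by
    ext ω
    simp only [Set.mem_preimage, Set.mem_pi, Set.mem_univ, true_implies]
    constructor
    · intro h j m
      split_ifs with hj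
      · rw [← hj]; exact h m
      · trivial
    · intro h m
      have := h (δ m) m
      simpa using this
  rw [e, Measure.pi_pi]
  simp only [Measure.pi_pi]
  rw [Finset.prod_comm]
  refine Finset.prod_congr rfl fun m _ => ?_
  have : ∀ j, P (if δ m = j then s m else Set.univ) = if δ m = j then P (s m) else 1 := by
    intro j; split_ifs <;> simp
  simp [this]

lemma mix2_mp {k n : ℕ} (b : Fin k → Fin n → Bool) :
    MeasurePreserving (fun (p : (Fin k → Fin n → S) × (Fin k → Fin n → S)) j m =>
        if b j m then p.1 j m else p.2 j m)
      ((Measure.pi fun _ : Fin k => Measure.pi fun _ : Fin n => P).prod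
        (Measure.pi fun _ : Fin k => Measure.pi fun _ : Fin n => P))
      (Measure.pi fun _ : Fin k => Measure.pi fun _ : Fin n => P) :=
  mix_mp (Measure.pi fun _ : Fin n => P)
    (fun j (q : (Fin n → S) × (Fin n → S)) m => if b j m then q.1 m else q.2 m) fun j => mix_bool P (b j)

lemma ev_mp {k n : ℕ} (i : Fin k → Fin n) :
    MeasurePreserving (fun (ω : Fin k → Fin n → S) j => ω j (i j))
      (Measure.pi fun _ : Fin k => Measure.pi fun _ : Fin n => P) (Measure.pi fun _ : Fin k => P) :=
  measurePreserving_pi (fun _ : Fin k => Measure.pi fun _ : Fin n => P) (fun _ => P)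
    (f := fun j x => x (i j)) fun j => measurePreserving_eval (fun _ : Fin n => P) (i j)

lemma canon_zero {k : ℕ} (H : (Fin k → S) → B) (hH : StronglyMeasurable H) (κ : ℝ) (hb : ∀ x, ‖H x‖ ≤ κ)
    (hc : ∀ (j : Fin k) (x : Fin k → S), (∫ y, H (Function.update x j y) ∂P) = 0)
    (a : Fin k → S) (b : Fin k → Bool) (j0 : Fin k) (hj0 : b j0 = false) :
    ∫ x, H (fun j => if b j then a j else x j) ∂(Measure.pi fun _ : Fin k => P) = 0 := by
  have hmm : Measurable fun (x : Fin k → S) j => if b j then a j else x j := by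
    refine measurable_pi_lambda _ fun j => ?_
    cases b j
    · simp; fun_prop
    · simp
  have hF : StronglyMeasurable fun x : Fin k → S => H (fun j => if b j then a j else x j) := hH.comp_measurable hmm
  have mp := mix_bool P (fun j : Fin k => decide (j ≠ j0))
  rw [← mp_integralB mp hF, integral_prod]
  · have : ∀ x : Fin k → S, ∫ x' : Fin k → S, H (fun j => if b j then a j else
        (if decide (j ≠ j0) then x j else x' j)) ∂(Measure.pi fun _ : Fin k => P) = 0 := by
      intro x
      have e : ∀ x' : Fin k → S, (fun j => if b j then a j else
        (if decide (j ≠ j0) then x j else x' j)) = Function.update (fun j => if b j then a j else x j) j0 (x' j0) := by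
        intro x'; funext j
        by_cases hj : j = j0
        · subst hj; simp [hj0]
        · simp [hj]
      simp only [e]
      have := integral_comp_eval (μ := fun _ : Fin k => P) (i := j0)
        (f := fun y => H (Function.update (fun j => if b j then a j else x j) j0 y))
        (hH.comp_measurable (measurable_update _)).aestronglyMeasurable
      rw [this, hc]
    exact (integral_congr_ae (Filter.Eventually.of_forall this)).trans (by simp)
  · exact Integrable.of_bound (hF.comp_measurable mp.measurable).aestronglyMeasurable κ
      (Filter.Eventually.of_forall fun q => hb _)

/-- the decoupled sum -/
def Ud {k n : ℕ} (H : (Fin k → S) → B) (ω : Fin k → Fin n → S) : B :=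
  ∑ i ∈ injTuples k n, H (fun j => ω j (i j))

lemma Ud_sm {k n : ℕ} (H : (Fin k → S) → B) (hH : StronglyMeasurable H) :
    StronglyMeasurable (Ud (n := n) H) := by
  refine Finset.stronglyMeasurable_fun_sum _ fun i _ => hH.comp_measurable (by fun_prop)

lemma Ud_bd {k n : ℕ} (H : (Fin k → S) → B) (κ : ℝ) (hb : ∀ x, ‖H x‖ ≤ κ) (ω : Fin k → Fin n → S) :
    ‖Ud H ω‖ ≤ #(injTuples k n) * κ := by
  refine (norm_sum_le _ _).trans ((Finset.sum_le_sum fun i _ => hb _).trans ?_)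
  simp

/-- restricted sum -/
def Udel {k n : ℕ} (H : (Fin k → S) → B) (δ : Fin n → Fin k) (x : Fin n → S) : B :=
  ∑ i ∈ injTuples k n, if ∀ j, δ (i j) = j then H (x ∘ i) else 0

lemma Udel_sm {k n : ℕ} (H : (Fin k → S) → B) (hH : StronglyMeasurable H) (δ : Fin n → Fin k) :
    StronglyMeasurable (Udel H δ) := by
  refine Finset.stronglyMeasurable_fun_sum _ fun i _ => ?_
  split_ifs
  · exact hH.comp_measurable (g := fun x : Fin n → S => x ∘ i) (measurable_pi_lambda _ fun j => measurable_pi_apply _)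
  · exact stronglyMeasurable_const

lemma Udel_bd {k n : ℕ} (H : (Fin k → S) → B) (κ : ℝ) (hκ : 0 ≤ κ) (hb : ∀ x, ‖H x‖ ≤ κ) (δ : Fin n → Fin k)
    (x : Fin n → S) : ‖Udel H δ x‖ ≤ #(injTuples k n) * κ := by
  refine (norm_sum_le _ _).trans ((Finset.sum_le_sum (g := fun _ => κ) fun i _ => ?_).trans ?_)
  · split_ifs
    · exact hb _
    · simpa using hκ
  · simp

lemma Udel_le {k n : ℕ} (H : (Fin k → S) → B) (hH : StronglyMeasurable H) (κ : ℝ) (hκ : 0 ≤ κ) (hb : ∀ x, ‖H x‖ ≤ κ)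
    (hc : ∀ (j : Fin k) (x : Fin k → S), (∫ y, H (Function.update x j y) ∂P) = 0)
    (δ : Fin n → Fin k) (r : ℝ) (hr : 1 ≤ r) :
    ∫ x, ‖Udel H δ x‖ ^ r ∂(Measure.pi fun _ : Fin n => P) ≤
    ∫ ω, ‖Ud H ω‖ ^ r ∂(Measure.pi fun _ : Fin k => Measure.pi fun _ : Fin n => P) := by
  set Q0 := Measure.pi fun _ : Fin k => Measure.pi fun _ : Fin n => P with hQ0
  have hr0 : 0 ≤ r := by linarith
  rw [← mp_integral (diag_mp P δ) ((Udel_sm H hH δ).norm.measurable.pow_const r)]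
  set b : Fin k → Fin n → Bool := fun j m => decide (δ m = j)
  have mp := mix2_mp P b
  have hmeas : Measurable fun ω : Fin k → Fin n → S => ‖Ud H ω‖ := (Ud_sm H hH).norm.measurable
  set M : ℝ := #(injTuples k n) * κ
  have hi : Integrable (fun q : (Fin k → Fin n → S) × (Fin k → Fin n → S) =>
      ‖Ud H (fun j m => if b j m then q.1 j m else q.2 j m)‖ ^ r) (Q0.prod Q0) :=
    integrable_of_meas_bdd ((hmeas.comp mp.measurable).pow_const r) (M ^ r) (fun q => by positivity)
      (fun q => Real.rpow_le_rpow (norm_nonneg _) (Ud_bd H κ hb _) hr0)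
  rw [← mp_integral mp (hmeas.pow_const r), integral_prod _ hi]
  refine integral_mono_of_nonneg (Filter.Eventually.of_forall fun ω => by positivity) hi.integral_prod_left
    (Filter.Eventually.of_forall fun ω => ?_)
  beta_reduce
  have hmω : Measurable fun ω' : Fin k → Fin n → S => (fun j m => if b j m then ω j m else ω' j m) :=
    mp.measurable.comp (measurable_prodMk_left (x := ω))
  have key : Udel H δ (fun m => ω (δ m) m) = ∫ ω', Ud H (fun j m => if b j m then ω j m else ω' j m) ∂Q0 := by
    unfold Udel Ud
    rw [integral_finsetSum]
    · refine Finset.sum_congr rfl fun i hi => ?_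
      have e := mp_integralB (ev_mp P i) (g := fun x => H (fun j => if b j (i j) then ω j (i j) else x j))
        (hH.comp_measurable (by
          refine measurable_pi_lambda _ fun j => ?_
          cases b j (i j)
          · simp; fun_prop
          · simp))
      split_ifs with h
      · have e2 : ∀ j, b j (i j) = true := fun j => by simp [b, h j]
        simp only [e2, if_true, integral_const, probReal_univ, one_smul]
        congr 1
        funext j
        simp [h j]
      · push Not at h
        obtain ⟨j0, hj0⟩ := h
        rw [e]
        exact (canon_zero P H hH κ hb hc (fun j => ω j (i j)) (fun j => b j (i j)) j0 (by simp [b, hj0])).symm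
    · intro i _
      refine Integrable.of_bound (StronglyMeasurable.aestronglyMeasurable ?_) κ (Filter.Eventually.of_forall fun _ => hb _)
      exact (hH.comp_measurable (ev_mp P i).measurable).comp_measurable hmω
  have h1 : ‖Udel H δ (fun m => ω (δ m) m)‖ ≤ ∫ ω', ‖Ud H (fun j m => if b j m then ω j m else ω' j m)‖ ∂Q0 := by
    rw [key]; exact norm_integral_le_integral_norm _
  exact (Real.rpow_le_rpow (norm_nonneg _) h1 hr0).trans
    (jensen_rpow Q0 (hmeas.comp hmω) M (fun _ => norm_nonneg _) (fun _ => Ud_bd H κ hb _) r hr)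

theorem decouple {k n : ℕ} (hk : 1 ≤ k) (H : (Fin k → S) → B) (hH : StronglyMeasurable H) (κ : ℝ) (hκ : 0 ≤ κ) (hb : ∀ x, ‖H x‖ ≤ κ)
    (hc : ∀ (j : Fin k) (x : Fin k → S), (∫ y, H (Function.update x j y) ∂P) = 0)
    (r : ℝ) (hr : 1 ≤ r) :
    ∫ x : Fin n → S, ‖∑ i ∈ injTuples k n, H (x ∘ i)‖ ^ r ∂(Measure.pi fun _ : Fin n => P) ≤
    ((k:ℝ) ^ k) ^ r * ∫ ω : Fin k → Fin n → S, ‖Ud H ω‖ ^ r ∂(Measure.pi fun _ : Fin k => Measure.pi fun _ : Fin n => P) := by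
  have hr0 : 0 < r := by linarith
  have hk0 : (0:ℝ) < k := by exact_mod_cast hk
  set J := ∫ ω : Fin k → Fin n → S, ‖Ud H ω‖ ^ r ∂(Measure.pi fun _ : Fin k => Measure.pi fun _ : Fin n => P) with hJ
  have hJ0 : 0 ≤ J := integral_nonneg fun ω => by positivity
  by_cases hkn : k ≤ n
  swap
  · have : injTuples k n = ∅ := by
      rw [injTuples, Finset.filter_eq_empty_iff]
      intro i _ hi
      have := Fintype.card_le_of_injective i hi
      simp at this; omega
    simp only [this, Finset.sum_empty, norm_zero, Real.zero_rpow hr0.ne', integral_zero]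
    positivity
  have hsum : ∀ x : Fin n → S, ∑ δ : Fin n → Fin k, Udel H δ x = ((k:ℝ) ^ (n - k)) • ∑ i ∈ injTuples k n, H (x ∘ i) := by
    intro x
    unfold Udel
    rw [Finset.sum_comm, Finset.smul_sum]
    refine Finset.sum_congr rfl fun i hi => ?_
    have hinj : Function.Injective i := (Finset.mem_filter.1 hi).2
    rw [← Finset.sum_filter, Finset.sum_const, card_delta i hinj, ← Nat.cast_smul_eq_nsmul ℝ]
    push_cast; rfl
  have hpow : (k:ℝ) ^ n = k ^ (n - k) * k ^ k := by rw [← pow_add]; congr 1; omega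
  have hpw : ∀ x : Fin n → S, ‖∑ i ∈ injTuples k n, H (x ∘ i)‖ ^ r ≤
      ((k:ℝ) ^ k) ^ r * ∑ δ : Fin n → Fin k, ((k:ℝ) ^ n)⁻¹ * ‖Udel H δ x‖ ^ r := by
    intro x
    have h1 : ‖∑ i ∈ injTuples k n, H (x ∘ i)‖ ≤ (k:ℝ) ^ k * ∑ δ : Fin n → Fin k, ((k:ℝ) ^ n)⁻¹ * ‖Udel H δ x‖ := by
      have h2 := norm_sum_le (univ : Finset (Fin n → Fin k)) (fun δ => Udel H δ x)
      rw [hsum, norm_smul, Real.norm_of_nonneg (by positivity)] at h2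
      rw [← Finset.mul_sum, hpow]
      have : (k:ℝ) ^ k * (((k:ℝ) ^ (n - k) * (k:ℝ) ^ k)⁻¹ * ∑ δ : Fin n → Fin k, ‖Udel H δ x‖) =
        (∑ δ : Fin n → Fin k, ‖Udel H δ x‖) / (k:ℝ) ^ (n - k) := by field_simp
      rw [this, le_div_iff₀ (by positivity)]
      linarith
    refine (Real.rpow_le_rpow (norm_nonneg _) h1 hr0.le).trans ?_
    rw [Real.mul_rpow (by positivity) (Finset.sum_nonneg fun δ _ => by positivity)]
    gcongr
    refine Real.rpow_arith_mean_le_arith_mean_rpow univ _ _ (fun δ _ => by positivity) ?_ (fun δ _ => norm_nonneg _) hr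
    simp
    field_simp
  have hInt : ∀ δ : Fin n → Fin k, Integrable (fun x => ‖Udel H δ x‖ ^ r) (Measure.pi fun _ : Fin n => P) := fun δ =>
    integrable_of_meas_bdd ((Udel_sm H hH δ).norm.measurable.pow_const r) ((#(injTuples k n) * κ) ^ r) (fun q => by positivity)
      (fun q => Real.rpow_le_rpow (norm_nonneg _) (Udel_bd H κ hκ hb _ _) hr0.le)
  calc _ ≤ ∫ x : Fin n → S, ((k:ℝ) ^ k) ^ r * ∑ δ : Fin n → Fin k, ((k:ℝ) ^ n)⁻¹ * ‖Udel H δ x‖ ^ r ∂(Measure.pi fun _ : Fin n => P) := by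
        refine integral_mono_of_nonneg (Filter.Eventually.of_forall fun ω => by positivity) ?_
          (Filter.Eventually.of_forall hpw)
        exact (integrable_finsetSum _ fun δ _ => (hInt δ).const_mul _).const_mul _
    _ = ((k:ℝ) ^ k) ^ r * ∑ δ : Fin n → Fin k, ((k:ℝ) ^ n)⁻¹ * ∫ x, ‖Udel H δ x‖ ^ r ∂(Measure.pi fun _ : Fin n => P) := by
        rw [integral_const_mul, integral_finsetSum _ fun δ _ => (hInt δ).const_mul _]
        simp only [integral_const_mul]
    _ ≤ ((k:ℝ) ^ k) ^ r * ∑ δ : Fin n → Fin k, ((k:ℝ) ^ n)⁻¹ * J := by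
        gcongr with δ
        exact Udel_le P H hH κ hκ hb hc δ r hr
    _ = _ := by
        congr 1
        simp
        field_simp

theorem dec_moment {k n : ℕ} (hk : 1 ≤ k) (hn : 1 ≤ n) (H : (Fin k → S) → B) (hH : StronglyMeasurable H) (κ : ℝ) (hκ : 0 < κ) (hb : ∀ x, ‖H x‖ ≤ κ)
    (hc : ∀ (j : Fin k) (x : Fin k → S), (∫ y, H (Function.update x j y) ∂P) = 0)
    (r : ℝ) (hr : 2 ≤ r) :
    ∫ ω : Fin k → Fin n → S, ‖Ud H ω‖ ^ r ∂(Measure.pi fun _ : Fin k => Measure.pi fun _ : Fin n => P) ≤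
    (Dk k * (Real.sqrt r ^ k * Real.sqrt
        (∫ ω : Fin k → Fin n → S, ‖Ud H ω‖ ^ 2 ∂(Measure.pi fun _ : Fin k => Measure.pi fun _ : Fin n => P))
        + Real.sqrt r ^ (k + 1) * ((n:ℝ) ^ (k - 1) * κ))) ^ r := by
  classical
  have C := chain (B := B) P n hn ((n:ℝ) ^ (k - 1) * κ) r (by positivity) hr k Unit (Measure.dirac ()) κ
    (fun i _ x => if Function.Injective i then H x else 0) hκ
    (fun i => by
      split_ifs
      · exact hH.comp_measurable measurable_snd
      · exact stronglyMeasurable_const)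
    (fun i t x => by
      split_ifs
      · exact hb x
      · simpa using hκ.le)
    (fun i t j x => by
      split_ifs
      · exact hc j x
      · simp)
    (by
      obtain ⟨m, rfl⟩ : ∃ m, k = m + 1 := ⟨k - 1, by omega⟩
      simp only [Nat.add_sub_cancel]; ring)
  have e : ∀ ω : Fin k → Fin n → S, Qf (Measure.dirac ()) (fun (i : Fin k → Fin n) _ x => if Function.Injective i then H x else 0) ω
      = ‖Ud H ω‖ ^ 2 := by
    intro ω
    unfold Qf Ud injTuples
    rw [Finset.sum_filter]
    simp
  have e2 : ∀ x : ℝ, 0 ≤ x → (x ^ 2) ^ (r / 2) = x ^ r := by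
    intro x hx
    rw [← Real.rpow_natCast, ← Real.rpow_mul hx]; congr 1; push_cast; ring
  simp only [e, e2 _ (norm_nonneg _)] at C
  exact C
end

/-- (Theorem 10, undecoupled moment inequality.) Let `B` be a separable Banach
space, `H : S^k → B` bounded, symmetric and `P`-canonical, `X_1,…,X_n` i.i.d. with law `P`,
and let `X_i^{(j)}` be a decoupled i.i.d. array with law `P`. If `κ ≥ sup ‖H‖` and
`χ_n ≥ (E‖Σ_{i ∈ I_n^k} H(X_{i_1}^{(1)},…,X_{i_k}^{(k)})‖²)^{1/2}`, then there is a constant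
`D₀` depending only on `k` such that for all `n` and `r ≥ 2`,
`E‖Σ_{i ∈ I_n^k} H(X_{i_1},…,X_{i_k})‖^r
  ≤ D₀^r [r^{kr/2} χ_n^r + r^{(k+1)r/2} n^{(k−1)r} κ^r + r^{kr} κ^r]`. -/
theorem stmt3 (k : ℕ) (hk : 1 ≤ k) :
    ∃ D0 : ℝ, 0 < D0 ∧
      ∀ (B : Type) [NormedAddCommGroup B] [NormedSpace ℝ B] [CompleteSpace B]
        [SecondCountableTopology B],
      ∀ (S : Type) (_ : MeasurableSpace S), Nonempty S →
      ∀ (P : Measure S), IsProbabilityMeasure P →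
      ∀ H : (Fin k → S) → B, StronglyMeasurable H →
        (∀ (τ : Equiv.Perm (Fin k)) (x : Fin k → S), H (x ∘ τ) = H x) →
        (∀ (j : Fin k) (x : Fin k → S), (∫ y, H (Function.update x j y) ∂P) = 0) →
      ∀ (n : ℕ) (κ χ : ℝ),
        (∀ x, ‖H x‖ ≤ κ) →
        Real.sqrt (∫ ω : Fin k → Fin n → S,
            ‖∑ i ∈ injTuples k n, H (fun j => ω j (i j))‖ ^ 2
          ∂(Measure.pi fun _ : Fin k => (Measure.pi fun _ : Fin n => P))) ≤ χ →
      ∀ r : ℝ, 2 ≤ r →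
        (∫ ω : Fin n → S, ‖∑ i ∈ injTuples k n, H (ω ∘ i)‖ ^ r
          ∂(Measure.pi fun _ : Fin n => P)) ≤
        D0 ^ r * (r ^ ((k : ℝ) * r / 2) * χ ^ r +
          r ^ (((k : ℝ) + 1) * r / 2) * (n : ℝ) ^ (((k : ℝ) - 1) * r) * κ ^ r +
          r ^ ((k : ℝ) * r) * κ ^ r) := by
  have hD := Dk_pos k
  have hk0 : (0:ℝ) < k := by exact_mod_cast hk
  refine ⟨(k:ℝ) ^ k * Dk k * 2, by positivity, ?_⟩
  intro B _ _ _ _ S _ ⟨s0⟩ P _ H hH _ hc n κ χ hb hχ r hr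
  have hr0 : 0 < r := by linarith
  have hκ : 0 ≤ κ := (norm_nonneg _).trans (hb fun _ => s0)
  have hχ0 : 0 ≤ χ := (Real.sqrt_nonneg _).trans hχ
  by_cases hn : 1 ≤ n
  swap
  · have hn0 : n = 0 := by omega
    subst hn0
    have : injTuples k 0 = ∅ := by
      rw [Finset.eq_empty_iff_forall_notMem]
      intro i _
      exact (i ⟨0, hk⟩).elim0
    simp only [this, Finset.sum_empty, norm_zero, Real.zero_rpow hr0.ne', integral_zero]
    positivity
  rcases hκ.eq_or_lt with h0 | hκ0
  · have hz : ∀ x, H x = 0 := fun x => norm_le_zero_iff.1 ((hb x).trans_eq h0.symm)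
    simp only [hz, Finset.sum_const_zero, norm_zero, Real.zero_rpow hr0.ne', integral_zero]
    positivity
  have h1 := decouple P (n := n) hk H hH κ hκ hb hc r (by linarith)
  have h2 := dec_moment P (n := n) hk hn H hH κ hκ0 hb hc r hr
  refine h1.trans ((mul_le_mul_of_nonneg_left h2 (by positivity)).trans ?_)
  set s := Real.sqrt r with hs
  have hs0 : 0 ≤ s := Real.sqrt_nonneg _
  have h3 : (Dk k * (s ^ k * Real.sqrt
        (∫ ω : Fin k → Fin n → S, ‖Ud H ω‖ ^ 2 ∂(Measure.pi fun _ : Fin k => Measure.pi fun _ : Fin n => P))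
        + s ^ (k + 1) * ((n:ℝ) ^ (k - 1) * κ))) ^ r ≤
      (Dk k * (s ^ k * χ + s ^ (k + 1) * ((n:ℝ) ^ (k - 1) * κ))) ^ r := by
    refine Real.rpow_le_rpow (by positivity) ?_ hr0.le
    gcongr
    exact hχ
  refine (mul_le_mul_of_nonneg_left h3 (by positivity)).trans ?_
  have h4 := add_rpow_half (s ^ k * χ) (s ^ (k + 1) * ((n:ℝ) ^ (k - 1) * κ)) r (by positivity) (by positivity) (by linarith)
  have es : ∀ m : ℕ, (s ^ m) ^ r = r ^ ((m:ℝ) * r / 2) := by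
    intro m
    rw [hs, Real.sqrt_eq_rpow, ← Real.rpow_natCast, ← Real.rpow_mul hr0.le, ← Real.rpow_mul hr0.le]
    congr 1; ring
  have en : ((n:ℝ) ^ (k - 1)) ^ r = (n:ℝ) ^ (((k:ℝ) - 1) * r) := by
    rw [← Real.rpow_natCast, ← Real.rpow_mul (by positivity)]
    congr 2
    push_cast [hk]; ring
  have eA : (s ^ k * χ) ^ r = r ^ ((k : ℝ) * r / 2) * χ ^ r := by
    rw [Real.mul_rpow (by positivity) hχ0, es]
  have eB : (s ^ (k + 1) * ((n:ℝ) ^ (k - 1) * κ)) ^ r =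
      r ^ (((k : ℝ) + 1) * r / 2) * (n : ℝ) ^ (((k : ℝ) - 1) * r) * κ ^ r := by
    rw [Real.mul_rpow (by positivity) (by positivity), Real.mul_rpow (by positivity) hκ, es, en]
    push_cast; ring
  rw [eA, eB] at h4
  set A := r ^ ((k : ℝ) * r / 2) * χ ^ r
  set A' := r ^ (((k : ℝ) + 1) * r / 2) * (n : ℝ) ^ (((k : ℝ) - 1) * r) * κ ^ r
  have hA : 0 ≤ A := by positivity
  have hA' : 0 ≤ A' := by positivity
  have hA'' : 0 ≤ r ^ ((k : ℝ) * r) * κ ^ r := by positivity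
  rw [Real.mul_rpow hD.le (by positivity), Real.mul_rpow (by positivity : 0 ≤ (k:ℝ) ^ k * Dk k) (by norm_num),
    Real.mul_rpow (by positivity : 0 ≤ (k:ℝ) ^ k) hD.le, ← mul_assoc, mul_assoc _ ((2:ℝ) ^ r)]
  gcongr
  refine h4.trans ?_
  gcongr
  linarith
end
end

section
/- Let (S, 𝒮) be a measurable space, P a probability measure on S, X_1, X_2, … i.i.d. with law P, and g : S^m → ℝ^d measurable such that g(X_1, …, X_m) has a density f_g on ℝ^d. Let 1 ≤ p < 2, s > d(2−p)/p, 0 < b < ∞, and let K be a kernel with K² ∈ L_1(μ_s) and f_g ∈ L_1(μ_s). Then there exists a constant C, depending only on m, d, p, s, b and ‖f_g‖_{L_1(μ_s)}, such that for every 1 ≤ k ≤ m, every n ≥ k and every 0 < h ≤ b, ( E ‖ Σ_{(i_1,…,i_k) ∈ I_n^k} π_k K̄_h(·, X_{i_1}, …, X_{i_k}) ‖_{L_p(ℝ^d)}² )^{1/2} ≤ C ‖K‖_{L_2(μ_s)} n^{k/2} / h^{1/2}. -/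
open MeasureTheory Finset
open scoped ENNReal
noncomputable section

/-- The `k`-th Hoeffding projection `π_k L` of an `m`-variable kernel `L` with respect to `P`:
`π_k L(x_1,…,x_k) = Σ_{A ⊆ {1,…,k}} (−1)^{k−|A|} E L(Y_1,…,Y_m)` where `Y_j = x_j` for
`j ∈ A` and `Y_j` is an independent `P`-distributed variable otherwise. -/
def hproj {S : Type*} [MeasurableSpace S] (P : Measure S) (m k : ℕ)
    (L : (Fin m → S) → ℝ) (x : Fin k → S) : ℝ :=
  ∑ A : Finset (Fin k), (-1 : ℝ) ^ (k - A.card) *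
    ∫ y : Fin m → S,
      L (fun j => if h : (j : ℕ) < k then
          (if (⟨(j : ℕ), h⟩ : Fin k) ∈ A then x ⟨(j : ℕ), h⟩ else y j) else y j)
      ∂(Measure.pi fun _ => P)

/-- The symmetrized dilated kernel
`K̄_h(t, x_1,…,x_m) = (1/m!) Σ_σ K_h(t − g(x_{σ(1)},…,x_{σ(m)}))`, where
`K_h(t) = h^{−1} K(t/h^{1/d})`. -/
def Kbar {S : Type*} (d m : ℕ) (g : (Fin m → S) → EuclideanSpace ℝ (Fin d))
    (K : EuclideanSpace ℝ (Fin d) → ℝ) (h : ℝ) (t : EuclideanSpace ℝ (Fin d))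
    (x : Fin m → S) : ℝ :=
  ((m.factorial : ℝ))⁻¹ * ∑ σ : Equiv.Perm (Fin m),
    h⁻¹ * K ((h ^ ((1 : ℝ) / d))⁻¹ • (t - g (x ∘ σ)))


lemma mp_precomp {S : Type} [MeasurableSpace S] (P : Measure S) [IsProbabilityMeasure P]
    {ι κ : Type} [Fintype ι] [Fintype κ] (e : κ → ι) (he : Function.Injective e) :
    MeasurePreserving (fun z : ι → S => z ∘ e) (Measure.pi fun _ => P)
      (Measure.pi fun _ => P) := by
  refine ⟨by fun_prop, ?_⟩
  have h1 : ProbabilityTheory.iIndepFun (fun (i : ι) (ω : ι → S) => ω i)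
      (Measure.pi fun _ : ι => P) :=
    ProbabilityTheory.iIndepFun_pi (X := fun _ (x : S) => x) (fun _ => aemeasurable_id)
  have h2 := h1.precomp he
  rw [ProbabilityTheory.iIndepFun_iff_map_fun_eq_pi_map
    (fun i => (measurable_pi_apply _).aemeasurable)] at h2
  have h3 : ∀ i : κ, Measure.map (fun ω : ι → S => ω (e i)) (Measure.pi fun _ : ι => P) = P :=
    fun i => (measurePreserving_eval (fun _ : ι => P) (e i)).map_eq
  simp only [h3] at h2
  exact h2

lemma mp_sumElim {S : Type} [MeasurableSpace S] (P : Measure S) [IsProbabilityMeasure P]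
    {ι κ : Type} [Fintype ι] [Fintype κ] :
    MeasurePreserving (fun q : (ι → S) × (κ → S) => (Sum.elim q.1 q.2 : ι ⊕ κ → S))
      ((Measure.pi fun _ => P).prod (Measure.pi fun _ => P)) (Measure.pi fun _ => P) := by
  have h := measurePreserving_sumPiEquivProdPi_symm (X := fun _ : ι ⊕ κ => S) (fun _ => P)
  convert h using 1
  ext q j
  cases j <;> rfl

lemma mp_sumElim_comp {S : Type} [MeasurableSpace S] (P : Measure S) [IsProbabilityMeasure P]
    {ι κ γ : Type} [Fintype ι] [Fintype κ] [Fintype γ] (e : γ → ι ⊕ κ)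
    (he : Function.Injective e) :
    MeasurePreserving (fun q : (ι → S) × (κ → S) => (Sum.elim q.1 q.2 : ι ⊕ κ → S) ∘ e)
      ((Measure.pi fun _ => P).prod (Measure.pi fun _ => P)) (Measure.pi fun _ => P) :=
  (mp_precomp P e he).comp (mp_sumElim P)

/-- index map of the mixed vector -/
def mixIdx (m k : ℕ) {ι : Type} (A : Finset (Fin k)) (i : Fin k → ι) (j : Fin m) : ι ⊕ Fin m :=
  if h : (j : ℕ) < k then
    (if (⟨(j : ℕ), h⟩ : Fin k) ∈ A then Sum.inl (i ⟨(j : ℕ), h⟩) else Sum.inr j) else Sum.inr j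

lemma mixIdx_inj (m k : ℕ) {ι : Type} (A : Finset (Fin k)) (i : Fin k → ι)
    (hi : Function.Injective i) : Function.Injective (mixIdx m k A i) := by
  intro a b hab
  unfold mixIdx at hab
  split_ifs at hab <;> first
    | exact Sum.inr_injective hab
    | (have := hi (Sum.inl_injective hab)
       rw [Fin.mk.injEq] at this
       exact Fin.ext this)

/-- the term of `hproj` -/
def hterm {S : Type} [MeasurableSpace S] (P : Measure S) (m k : ℕ)
    (L : (Fin m → S) → ℝ) (A : Finset (Fin k)) (x : Fin k → S) : ℝ :=
  ∫ y : Fin m → S, L ((Sum.elim x y : Fin k ⊕ Fin m → S) ∘ mixIdx m k A id)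
    ∂(Measure.pi fun _ => P)

lemma mix_eq {S : Type} (m k : ℕ) {ι : Type} (A : Finset (Fin k)) (i : Fin k → ι)
    (w : ι → S) (y : Fin m → S) :
    (Sum.elim (w ∘ i) y : Fin k ⊕ Fin m → S) ∘ mixIdx m k A id
      = (Sum.elim w y : ι ⊕ Fin m → S) ∘ mixIdx m k A i := by
  funext j
  simp only [Function.comp, mixIdx]
  split_ifs <;> rfl

lemma hproj_eq {S : Type} [MeasurableSpace S] (P : Measure S) (m k : ℕ)
    (L : (Fin m → S) → ℝ) (x : Fin k → S) :
    hproj P m k L x = ∑ A : Finset (Fin k), (-1 : ℝ) ^ (k - A.card) * hterm P m k L A x := by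
  unfold hproj hterm
  refine Finset.sum_congr rfl fun A _ => ?_
  congr 2
  funext y
  congr 1
  funext j
  simp only [Function.comp, mixIdx]
  split_ifs <;> rfl

lemma sq_lintegral_le {α : Type*} [MeasurableSpace α] (μ : Measure α) [IsProbabilityMeasure μ]
    (f : α → ℝ≥0∞) (hf : AEMeasurable f μ) : (∫⁻ a, f a ∂μ) ^ 2 ≤ ∫⁻ a, f a ^ 2 ∂μ := by
  have h := ENNReal.lintegral_mul_le_Lp_mul_Lq μ Real.HolderConjugate.two_two hf
    (aemeasurable_const (b := (1 : ℝ≥0∞)))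
  simp only [Pi.mul_apply, mul_one, ENNReal.one_rpow, lintegral_const, measure_univ] at h
  calc (∫⁻ a, f a ∂μ) ^ 2 ≤ ((∫⁻ a, f a ^ (2:ℝ) ∂μ) ^ (1 / 2 : ℝ)) ^ 2 := by gcongr
    _ = ∫⁻ a, f a ^ 2 ∂μ := by
      rw [← ENNReal.rpow_natCast, ← ENNReal.rpow_mul]
      norm_num

lemma hterm_meas {S : Type} [MeasurableSpace S] (P : Measure S) [IsProbabilityMeasure P] (m k : ℕ)
    {T : Type*} [MeasurableSpace T]
    (L : T → (Fin m → S) → ℝ) (hL : Measurable (Function.uncurry L)) (A : Finset (Fin k)) :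
    Measurable (fun q : T × (Fin k → S) => hterm P m k (L q.1) A q.2) := by
  unfold hterm
  refine (StronglyMeasurable.integral_prod_right
    (f := fun (q : T × (Fin k → S)) (y : Fin m → S) =>
      L q.1 ((Sum.elim q.2 y : Fin k ⊕ Fin m → S) ∘ mixIdx m k A id)) ?_).measurable
  refine Measurable.stronglyMeasurable ?_
  have h1 : Measurable (fun q : (T × (Fin k → S)) × (Fin m → S) =>
      (q.1.1, (Sum.elim q.1.2 q.2 : Fin k ⊕ Fin m → S) ∘ mixIdx m k A id)) := by
    refine Measurable.prodMk (by fun_prop) ?_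
    refine measurable_pi_lambda _ fun j => ?_
    simp only [Function.comp]
    rcases mixIdx m k A id j with a | a
    · simp only [Sum.elim_inl]; fun_prop
    · simp only [Sum.elim_inr]; fun_prop
  exact hL.comp h1

lemma hproj_meas {S : Type} [MeasurableSpace S] (P : Measure S) [IsProbabilityMeasure P] (m k : ℕ)
    {T : Type*} [MeasurableSpace T]
    (L : T → (Fin m → S) → ℝ) (hL : Measurable (Function.uncurry L)) :
    Measurable (fun q : T × (Fin k → S) => hproj P m k (L q.1) q.2) := by
  simp_rw [hproj_eq]
  exact Finset.measurable_fun_sum _ fun A _ => (hterm_meas P m k L hL A).const_mul _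

lemma hterm_meas1 {S : Type} [MeasurableSpace S] (P : Measure S) [IsProbabilityMeasure P] (m k : ℕ)
    (L : (Fin m → S) → ℝ) (hL : Measurable L) (A : Finset (Fin k)) :
    Measurable (hterm P m k L A) := by
  have h := hterm_meas P m k (T := Unit) (fun _ => L) (hL.comp measurable_snd) A
  exact h.comp (measurable_prodMk_left (x := ()))

lemma hproj_meas1 {S : Type} [MeasurableSpace S] (P : Measure S) [IsProbabilityMeasure P] (m k : ℕ)
    (L : (Fin m → S) → ℝ) (hL : Measurable L) :
    Measurable (hproj P m k L) := by
  have h := hproj_meas P m k (T := Unit) (fun _ => L) (hL.comp measurable_snd)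
  exact h.comp (measurable_prodMk_left (x := ()))

lemma hterm_lint {S : Type} [MeasurableSpace S] (P : Measure S) [IsProbabilityMeasure P] (m k : ℕ)
    (L : (Fin m → S) → ℝ) (hL : Measurable L) (A : Finset (Fin k)) :
    ∫⁻ x, ‖hterm P m k L A x‖ₑ ^ 2 ∂(Measure.pi fun _ => P)
      ≤ ∫⁻ y, ‖L y‖ₑ ^ 2 ∂(Measure.pi fun _ => P) := by
  have mp := mp_sumElim_comp (ι := Fin k) (κ := Fin m) P (mixIdx m k A id)
    (mixIdx_inj m k A id Function.injective_id)
  have hm2 : Measurable (fun y => ‖L y‖ₑ ^ 2) := by fun_prop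
  calc _ ≤ ∫⁻ x : Fin k → S, ∫⁻ y : Fin m → S,
        ‖L ((Sum.elim x y : Fin k ⊕ Fin m → S) ∘ mixIdx m k A id)‖ₑ ^ 2
          ∂(Measure.pi fun _ => P) ∂(Measure.pi fun _ => P) := by
        refine lintegral_mono fun x => ?_
        unfold hterm
        refine le_trans (pow_le_pow_left₀ (by positivity)
          (enorm_integral_le_lintegral_enorm _) 2) ?_
        refine sq_lintegral_le _ _ ?_
        exact ((hL.comp mp.measurable).comp
          (measurable_prodMk_left (x := x))).enorm.aemeasurable
    _ = _ := by
        rw [← mp.lintegral_comp hm2, lintegral_prod]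
        exact (hm2.comp mp.measurable).aemeasurable

lemma memLp_two_of_lint {α : Type*} [MeasurableSpace α] {μ : Measure α} {f : α → ℝ}
    (hf : Measurable f) (h : ∫⁻ x, ‖f x‖ₑ ^ 2 ∂μ < ⊤) : MemLp f 2 μ := by
  refine ⟨hf.aestronglyMeasurable, ?_⟩
  rw [eLpNorm_lt_top_iff_lintegral_rpow_enorm_lt_top (by norm_num) (by norm_num)]
  simpa using h

lemma lint_sq_eq {α : Type*} [MeasurableSpace α] {μ : Measure α} {f : α → ℝ}
    (h : MemLp f 2 μ) : ∫⁻ x, ‖f x‖ₑ ^ 2 ∂μ = ENNReal.ofReal (∫ x, f x ^ 2 ∂μ) := by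
  rw [ofReal_integral_eq_lintegral_ofReal h.integrable_sq
    (Filter.Eventually.of_forall fun x => sq_nonneg _)]
  refine lintegral_congr fun x => ?_
  rw [← enorm_pow, Real.enorm_of_nonneg (sq_nonneg _)]

lemma hproj_memLp {S : Type} [MeasurableSpace S] (P : Measure S) [IsProbabilityMeasure P]
    (m k : ℕ) (L : (Fin m → S) → ℝ) (hL : Measurable L)
    (hL2 : MemLp L 2 (Measure.pi fun _ => P)) :
    (∀ A : Finset (Fin k), MemLp (hterm P m k L A) 2 (Measure.pi fun _ => P)) ∧
    MemLp (hproj P m k L) 2 (Measure.pi fun _ => P) ∧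
    ∫ x, hproj P m k L x ^ 2 ∂(Measure.pi fun _ => P)
      ≤ 4 ^ k * ∫ y, L y ^ 2 ∂(Measure.pi fun _ => P) := by
  have e := lint_sq_eq hL2
  have hA : ∀ A : Finset (Fin k), MemLp (hterm P m k L A) 2 (Measure.pi fun _ => P) := by
    intro A
    refine memLp_two_of_lint (hterm_meas1 P m k L hL A) ?_
    refine (hterm_lint P m k L hL A).trans_lt ?_
    rw [e]; exact ENNReal.ofReal_lt_top
  have hA2 : ∀ A : Finset (Fin k), ∫ x, hterm P m k L A x ^ 2 ∂(Measure.pi fun _ => P)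
      ≤ ∫ y, L y ^ 2 ∂(Measure.pi fun _ => P) := by
    intro A
    have := hterm_lint P m k L hL A
    rw [e, lint_sq_eq (hA A)] at this
    exact (ENNReal.ofReal_le_ofReal_iff (integral_nonneg fun _ => sq_nonneg _)).1 this
  have hpm : MemLp (hproj P m k L) 2 (Measure.pi fun _ => P) := by
    have : hproj P m k L = fun x => ∑ A : Finset (Fin k),
      (-1 : ℝ) ^ (k - A.card) * hterm P m k L A x := funext fun x => hproj_eq P m k L x
    rw [this]
    exact memLp_finsetSum _ fun A _ => (hA A).const_mul _
  refine ⟨hA, hpm, ?_⟩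
  calc _ ≤ ∫ x, (2 : ℝ) ^ k * ∑ A : Finset (Fin k), hterm P m k L A x ^ 2
        ∂(Measure.pi fun _ => P) := by
        refine integral_mono hpm.integrable_sq
          ((integrable_finsetSum _ fun A _ => (hA A).integrable_sq).const_mul _) fun x => ?_
        simp only
        rw [hproj_eq]
        refine sq_sum_le_card_mul_sum_sq.trans ?_
        simp only [Finset.card_univ, Fintype.card_finset, Fintype.card_fin, mul_pow, ← pow_mul]
        simp [mul_comm _ 2, pow_mul]
    _ = (2 : ℝ) ^ k * ∑ A : Finset (Fin k), ∫ x, hterm P m k L A x ^ 2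
        ∂(Measure.pi fun _ => P) := by
        rw [integral_const_mul, integral_finsetSum _ fun A _ => (hA A).integrable_sq]
    _ ≤ (2 : ℝ) ^ k * ∑ A : Finset (Fin k), ∫ y, L y ^ 2 ∂(Measure.pi fun _ => P) := by
        gcongr with A _
        exact hA2 A
    _ = _ := by
        simp only [Finset.sum_const, Finset.card_univ, Fintype.card_finset, Fintype.card_fin,
          nsmul_eq_mul]
        rw [← mul_assoc]
        push_cast
        rw [← mul_pow]; norm_num

lemma cross_term {S : Type} [MeasurableSpace S] (P : Measure S) [IsProbabilityMeasure P]
    (m k n : ℕ) (L : (Fin m → S) → ℝ) (hL : Measurable L)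
    (hL2 : MemLp L 2 (Measure.pi fun _ => P)) (Q : (Fin k → S) → ℝ) (hQ : Measurable Q)
    (hQ2 : MemLp Q 2 (Measure.pi fun _ => P)) (i j : Fin k → Fin n)
    (hi : Function.Injective i) (hj : Function.Injective j) (A : Finset (Fin k)) :
    ∫ ω, hterm P m k L A (ω ∘ i) * Q (ω ∘ j) ∂(Measure.pi fun _ => P) =
      ∫ z : Fin n ⊕ Fin m → S, L (z ∘ mixIdx m k A i) * Q (z ∘ (Sum.inl ∘ j))
        ∂(Measure.pi fun _ => P) := by
  have mpL := mp_precomp P (mixIdx m k A i) (mixIdx_inj m k A i hi)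
  have hjj : Function.Injective (Sum.inl ∘ j : Fin k → Fin n ⊕ Fin m) :=
    Sum.inl_injective.comp hj
  have mpQ := mp_precomp P (Sum.inl ∘ j : Fin k → Fin n ⊕ Fin m) hjj
  have hint : Integrable (fun z : Fin n ⊕ Fin m → S =>
      L (z ∘ mixIdx m k A i) * Q (z ∘ (Sum.inl ∘ j))) (Measure.pi fun _ => P) :=
    (hL2.comp_measurePreserving mpL).integrable_mul (hQ2.comp_measurePreserving mpQ)
  have mps := mp_sumElim (ι := Fin n) (κ := Fin m) P
  have hint2 := (mps.integrable_comp hint.aestronglyMeasurable).2 hint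
  rw [← mps.map_eq, integral_map mps.measurable.aemeasurable
    (by rw [mps.map_eq]; exact hint.aestronglyMeasurable)]
  refine Eq.trans ?_ (integral_prod _ hint2).symm
  refine integral_congr_ae (Filter.Eventually.of_forall fun ω => ?_)
  simp only [hterm, Function.comp_apply]
  rw [← integral_mul_const]
  refine integral_congr_ae (Filter.Eventually.of_forall fun y => ?_)
  simp only [mix_eq]
  rfl

lemma cross_insert {S : Type} [MeasurableSpace S] (P : Measure S) [IsProbabilityMeasure P]
    (m k n : ℕ) (hkm : k ≤ m) (L : (Fin m → S) → ℝ) (hL : Measurable L)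
    (hL2 : MemLp L 2 (Measure.pi fun _ => P)) (Q : (Fin k → S) → ℝ) (hQ : Measurable Q)
    (hQ2 : MemLp Q 2 (Measure.pi fun _ => P)) (i j : Fin k → Fin n)
    (hi : Function.Injective i) (hj : Function.Injective j) (A : Finset (Fin k))
    (l : Fin k) (hl : ∀ l', j l' ≠ i l) (hlA : l ∉ A) :
    ∫ ω, hterm P m k L A (ω ∘ i) * Q (ω ∘ j) ∂(Measure.pi fun _ => P) =
    ∫ ω, hterm P m k L (insert l A) (ω ∘ i) * Q (ω ∘ j) ∂(Measure.pi fun _ => P) := by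
  classical
  rw [cross_term P m k n L hL hL2 Q hQ hQ2 i j hi hj, cross_term P m k n L hL hL2 Q hQ hQ2 i j hi hj]
  set l' : Fin m := ⟨l, l.2.trans_le hkm⟩ with hl'
  let τ : Equiv.Perm (Fin n ⊕ Fin m) := Equiv.swap (Sum.inl (i l)) (Sum.inr l')
  have mpτ := mp_precomp P τ τ.injective
  have e1 : τ ∘ mixIdx m k A i = mixIdx m k (insert l A) i := by
    funext a
    simp only [Function.comp, mixIdx, τ, Finset.mem_insert]
    by_cases h : (a : ℕ) < k
    · simp only [h, dite_true]
      by_cases hal : (⟨(a : ℕ), h⟩ : Fin k) = l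
      · have : a = l' := by
          apply Fin.ext; simp [hl', ← hal]
        rw [if_neg (hal ▸ hlA), if_pos (Or.inl hal), hal, this]
        exact Equiv.swap_apply_right _ _
      · have hne : a ≠ l' := by
          rintro rfl; exact hal (Fin.ext rfl)
        by_cases haA : (⟨(a : ℕ), h⟩ : Fin k) ∈ A
        · simp only [haA, if_true, or_true]
          refine Equiv.swap_apply_of_ne_of_ne ?_ (by simp)
          intro hh
          exact hal (hi (Sum.inl_injective hh))
        · simp only [haA, hal, if_false, or_self]
          refine Equiv.swap_apply_of_ne_of_ne (by simp) ?_
          intro hh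
          exact hne (Sum.inr_injective hh)
    · simp only [h, dite_false]
      refine Equiv.swap_apply_of_ne_of_ne (by simp) ?_
      intro hh
      have := Sum.inr_injective hh
      apply h
      rw [this]
      exact l.2
  have e2 : τ ∘ (Sum.inl ∘ j) = (Sum.inl ∘ j : Fin k → Fin n ⊕ Fin m) := by
    funext a
    simp only [Function.comp, τ]
    refine Equiv.swap_apply_of_ne_of_ne ?_ (by simp)
    intro hh
    exact hl a (Sum.inl_injective hh)
  have hmeas : Measurable (fun z : Fin n ⊕ Fin m → S =>
      L (z ∘ mixIdx m k A i) * Q (z ∘ (Sum.inl ∘ j))) := by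
    refine Measurable.mul (hL.comp (by fun_prop)) (hQ.comp (by fun_prop))
  conv_lhs => rw [← mpτ.map_eq]
  rw [integral_map mpτ.measurable.aemeasurable hmeas.aestronglyMeasurable]
  simp only [Function.comp_assoc, e1, e2]

lemma cross_zero {S : Type} [MeasurableSpace S] (P : Measure S) [IsProbabilityMeasure P]
    (m k n : ℕ) (hkm : k ≤ m) (L : (Fin m → S) → ℝ) (hL : Measurable L)
    (hL2 : MemLp L 2 (Measure.pi fun _ => P)) (i j : Fin k → Fin n)
    (hi : Function.Injective i) (hj : Function.Injective j)
    (l : Fin k) (hl : ∀ l', j l' ≠ i l) :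
    ∫ ω, hproj P m k L (ω ∘ i) * hproj P m k L (ω ∘ j) ∂(Measure.pi fun _ => P) = 0 := by
  classical
  obtain ⟨hA, hQ2, -⟩ := hproj_memLp P m k L hL hL2
  have hQ := hproj_meas1 P m k L hL
  have key : ∀ A : Finset (Fin k), l ∉ A → _ := fun A hlA =>
    cross_insert P m k n hkm L hL hL2 _ hQ hQ2 i j hi hj A l hl hlA
  have h1 : ∀ ω : Fin n → S, hproj P m k L (ω ∘ i) * hproj P m k L (ω ∘ j) =
      ∑ A : Finset (Fin k), (-1 : ℝ) ^ (k - A.card) *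
        (hterm P m k L A (ω ∘ i) * hproj P m k L (ω ∘ j)) := by
    intro ω
    rw [hproj_eq P m k L (ω ∘ i), Finset.sum_mul]
    simp only [mul_assoc]
  simp_rw [h1]
  rw [integral_finsetSum]
  swap
  · intro A _
    exact (((hA A).comp_measurePreserving (mp_precomp P i hi)).integrable_mul
      (hQ2.comp_measurePreserving (mp_precomp P j hj))).const_mul _
  simp_rw [integral_const_mul]
  have hsign : ∀ A : Finset (Fin k), l ∉ A →
      (-1 : ℝ) ^ (k - A.card) = - (-1 : ℝ) ^ (k - (insert l A).card) := by
    intro A hlA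
    have h2 : (insert l A).card ≤ k := by simpa using Finset.card_le_univ (insert l A)
    rw [Finset.card_insert_of_notMem hlA] at h2 ⊢
    have : k - A.card = (k - (A.card + 1)) + 1 := by omega
    rw [this, pow_succ]; ring
  refine Finset.sum_involution (fun A _ => if l ∈ A then A.erase l else insert l A) ?_ ?_ ?_ ?_
  · intro A _
    by_cases hlA : l ∈ A
    · simp only [hlA, if_true]
      have hn : l ∉ A.erase l := Finset.notMem_erase l A
      have k1 := key _ hn
      have k2 := hsign _ hn
      rw [Finset.insert_erase hlA] at k1 k2
      rw [k1, k2]; ring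
    · simp only [hlA, if_false]
      rw [key A hlA, hsign A hlA]; ring
  · intro A _ _
    by_cases hlA : l ∈ A
    · simp only [hlA, if_true]
      intro h; rw [← h] at hlA; exact Finset.notMem_erase l A hlA
    · simp only [hlA, if_false]
      intro h; apply hlA; rw [← h]; exact Finset.mem_insert_self _ _
  · intro A _; simp
  · intro A _
    by_cases hlA : l ∈ A
    · simp [hlA, Finset.insert_erase]
    · simp [hlA]

lemma second_moment_real {S : Type} [MeasurableSpace S] (P : Measure S) [IsProbabilityMeasure P]
    (m k n : ℕ) (hkm : k ≤ m) (L : (Fin m → S) → ℝ) (hL : Measurable L)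
    (hL2 : MemLp L 2 (Measure.pi fun _ => P)) :
    MemLp (fun ω : Fin n → S => ∑ i ∈ injTuples k n, hproj P m k L (ω ∘ i)) 2
      (Measure.pi fun _ => P) ∧
    ∫ ω, (∑ i ∈ injTuples k n, hproj P m k L (ω ∘ i)) ^ 2 ∂(Measure.pi fun _ => P)
      ≤ (n ^ k * k ^ k * 4 ^ k) * ∫ y, L y ^ 2 ∂(Measure.pi fun _ => P) := by
  classical
  obtain ⟨hA, hQ2, hb⟩ := hproj_memLp P m k L hL hL2
  have hQ := hproj_meas1 P m k L hL
  have hinj : ∀ i ∈ injTuples k n, Function.Injective i := fun i hi => by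
    simpa [injTuples] using hi
  have hmem : ∀ i ∈ injTuples k n, MemLp (fun ω : Fin n → S => hproj P m k L (ω ∘ i)) 2
      (Measure.pi fun _ => P) := fun i hi =>
    hQ2.comp_measurePreserving (mp_precomp P i (hinj i hi))
  set W := ∫ x, hproj P m k L x ^ 2 ∂(Measure.pi fun _ => P) with hW
  have hW0 : 0 ≤ W := integral_nonneg fun _ => sq_nonneg _
  have hsq : ∀ i ∈ injTuples k n,
      ∫ ω : Fin n → S, hproj P m k L (ω ∘ i) ^ 2 ∂(Measure.pi fun _ => P) = W := by
    intro i hi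
    have mp := mp_precomp P i (hinj i hi)
    rw [hW, ← mp.map_eq, integral_map mp.measurable.aemeasurable
      (hQ.pow_const 2).aestronglyMeasurable]
  have hprod : ∀ i ∈ injTuples k n, ∀ j ∈ injTuples k n,
      Integrable (fun ω : Fin n → S => hproj P m k L (ω ∘ i) * hproj P m k L (ω ∘ j))
        (Measure.pi fun _ => P) := fun i hi j hj => (hmem i hi).integrable_mul (hmem j hj)
  have hpair : ∀ i ∈ injTuples k n, ∀ j ∈ injTuples k n,
      ∫ ω : Fin n → S, hproj P m k L (ω ∘ i) * hproj P m k L (ω ∘ j) ∂(Measure.pi fun _ => P)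
       ≤ W := by
    intro i hi j hj
    calc _ ≤ ∫ ω : Fin n → S, (1 / 2 * hproj P m k L (ω ∘ i) ^ 2 +
          1 / 2 * hproj P m k L (ω ∘ j) ^ 2) ∂(Measure.pi fun _ => P) := by
          refine integral_mono (hprod i hi j hj)
            (((hmem i hi).integrable_sq.const_mul _).add ((hmem j hj).integrable_sq.const_mul _))
            fun ω => ?_
          simp only
          nlinarith [sq_nonneg (hproj P m k L (ω ∘ i) - hproj P m k L (ω ∘ j))]
      _ = W := by
          rw [integral_add ((hmem i hi).integrable_sq.const_mul _)
            ((hmem j hj).integrable_sq.const_mul _), integral_const_mul, integral_const_mul,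
            hsq i hi, hsq j hj]
          ring
  refine ⟨memLp_finsetSum _ hmem, ?_⟩
  have hexp : ∀ ω : Fin n → S, (∑ i ∈ injTuples k n, hproj P m k L (ω ∘ i)) ^ 2 =
      ∑ j ∈ injTuples k n, ∑ i ∈ injTuples k n,
        hproj P m k L (ω ∘ i) * hproj P m k L (ω ∘ j) := by
    intro ω
    rw [sq, Finset.mul_sum]
    simp only [Finset.sum_mul]
  simp_rw [hexp]
  rw [integral_finsetSum _ fun j hj => integrable_finsetSum _ fun i hi => hprod i hi j hj]
  have hinner : ∀ j ∈ injTuples k n,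
      ∫ ω : Fin n → S, ∑ i ∈ injTuples k n, hproj P m k L (ω ∘ i) * hproj P m k L (ω ∘ j)
        ∂(Measure.pi fun _ => P) ≤ k ^ k * W := by
    intro j hj
    rw [integral_finsetSum _ fun i hi => hprod i hi j hj]
    let B : Finset (Fin k → Fin n) := Fintype.piFinset fun _ => Finset.univ.image j
    have hBc : (B.card : ℝ) = k ^ k := by
      simp [B, Fintype.card_piFinset, Finset.card_image_of_injective _ (hinj j hj)]
    calc _ ≤ ∑ i ∈ injTuples k n, (if i ∈ B then W else 0) := by
          refine Finset.sum_le_sum fun i hi => ?_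
          split_ifs with hB
          · exact hpair i hi j hj
          · simp only [B, Fintype.mem_piFinset, Finset.mem_image, Finset.mem_univ, true_and,
              not_forall, not_exists] at hB
            obtain ⟨l, hl⟩ := hB
            exact (cross_zero P m k n hkm L hL hL2 i j (hinj i hi) (hinj j hj) l hl).le
      _ ≤ ∑ i : Fin k → Fin n, (if i ∈ B then W else 0) := by
          refine Finset.sum_le_sum_of_subset_of_nonneg (Finset.subset_univ _) fun i _ _ => ?_
          split_ifs <;> simp [hW0]
      _ = k ^ k * W := by
          rw [Finset.sum_ite_mem, Finset.univ_inter, Finset.sum_const, nsmul_eq_mul, hBc]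
  have hcard : ((injTuples k n).card : ℝ) ≤ n ^ k := by
    have := Finset.card_le_univ (injTuples k n)
    simp only [Fintype.card_fun, Fintype.card_fin] at this
    exact_mod_cast this
  calc _ ≤ ∑ j ∈ injTuples k n, (k : ℝ) ^ k * W := Finset.sum_le_sum hinner
    _ = (injTuples k n).card * ((k : ℝ) ^ k * W) := by rw [Finset.sum_const, nsmul_eq_mul]
    _ ≤ n ^ k * ((k : ℝ) ^ k * (4 ^ k * ∫ y, L y ^ 2 ∂(Measure.pi fun _ => P))) := by
        gcongr
    _ = _ := by ring

lemma second_moment {S : Type} [MeasurableSpace S] (P : Measure S) [IsProbabilityMeasure P]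
    (m k n : ℕ) (hk : 1 ≤ k) (hkm : k ≤ m) (hkn : k ≤ n) (L : (Fin m → S) → ℝ)
    (hL : Measurable L) :
    ∫⁻ ω, ‖∑ i ∈ injTuples k n, hproj P m k L (ω ∘ i)‖ₑ ^ 2 ∂(Measure.pi fun _ => P)
      ≤ ENNReal.ofReal (n ^ k * k ^ k * 4 ^ k) * ∫⁻ y, ‖L y‖ₑ ^ 2 ∂(Measure.pi fun _ => P) := by
  have hn : 0 < n := by omega
  have hk' : 0 < k := by omega
  rcases eq_or_ne (∫⁻ y, ‖L y‖ₑ ^ 2 ∂(Measure.pi fun _ : Fin m => P)) ⊤ with h | h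
  · rw [h, ENNReal.mul_top]
    · exact le_top
    · rw [ne_eq, ENNReal.ofReal_eq_zero, not_le]; positivity
  · have hL2 := memLp_two_of_lint hL h.lt_top
    obtain ⟨h1, h2⟩ := second_moment_real P m k n hkm L hL hL2
    rw [lint_sq_eq h1, lint_sq_eq hL2, ← ENNReal.ofReal_mul (by positivity)]
    exact ENNReal.ofReal_le_ofReal h2

lemma Kbar_meas {S : Type} [MeasurableSpace S] (d m : ℕ)
    (g : (Fin m → S) → EuclideanSpace ℝ (Fin d)) (hg : Measurable g)
    (K : EuclideanSpace ℝ (Fin d) → ℝ) (hK : Measurable K) (h : ℝ) :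
    Measurable (Function.uncurry (Kbar d m g K h)) := by
  unfold Kbar
  refine Measurable.const_mul (Finset.measurable_fun_sum _ fun σ _ => ?_) _
  refine Measurable.const_mul (hK.comp ?_) _
  have h1 : Measurable (fun q : EuclideanSpace ℝ (Fin d) × (Fin m → S) => g (q.2 ∘ σ)) :=
    hg.comp (by fun_prop)
  fun_prop

lemma Kbar_lint {S : Type} [MeasurableSpace S] (P : Measure S) [IsProbabilityMeasure P] (d m : ℕ)
    (g : (Fin m → S) → EuclideanSpace ℝ (Fin d)) (hg : Measurable g)
    (K : EuclideanSpace ℝ (Fin d) → ℝ) (hK : Measurable K) (h : ℝ)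
    (t : EuclideanSpace ℝ (Fin d)) :
    ∫⁻ x, ‖Kbar d m g K h t x‖ₑ ^ 2 ∂(Measure.pi fun _ => P) ≤
      ∫⁻ x, ENNReal.ofReal ((h⁻¹ * K ((h ^ ((1 : ℝ) / d))⁻¹ • (t - g x))) ^ 2)
        ∂(Measure.pi fun _ => P) := by
  set a : (Fin m → S) → ℝ := fun x => h⁻¹ * K ((h ^ ((1 : ℝ) / d))⁻¹ • (t - g x)) with ha
  have ham : Measurable a := by
    refine Measurable.const_mul (hK.comp ?_) _
    fun_prop
  have hae : Measurable fun x => ENNReal.ofReal (a x ^ 2) := by fun_prop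
  have hf : (0:ℝ) < m.factorial := by exact_mod_cast m.factorial_pos
  calc _ ≤ ∫⁻ x, ENNReal.ofReal ((m.factorial : ℝ)⁻¹) *
        ∑ σ : Equiv.Perm (Fin m), ENNReal.ofReal (a (x ∘ σ) ^ 2) ∂(Measure.pi fun _ => P) := by
        refine lintegral_mono fun x => ?_
        rw [← ENNReal.ofReal_sum_of_nonneg (fun _ _ => sq_nonneg _),
          ← ENNReal.ofReal_mul (by positivity), ← enorm_pow, Real.enorm_of_nonneg (sq_nonneg _)]
        refine ENNReal.ofReal_le_ofReal ?_
        have := sq_sum_le_card_mul_sum_sq (s := (Finset.univ : Finset (Equiv.Perm (Fin m))))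
          (f := fun σ => a (x ∘ σ))
        rw [Finset.card_univ, Fintype.card_perm, Fintype.card_fin] at this
        unfold Kbar
        rw [mul_pow]
        calc _ ≤ ((m.factorial : ℝ)⁻¹) ^ 2 * (m.factorial *
              ∑ σ : Equiv.Perm (Fin m), a (x ∘ σ) ^ 2) := by gcongr
          _ = _ := by field_simp
    _ = ENNReal.ofReal ((m.factorial : ℝ)⁻¹) * ∑ σ : Equiv.Perm (Fin m),
        ∫⁻ x, ENNReal.ofReal (a (x ∘ σ) ^ 2) ∂(Measure.pi fun _ => P) := by
        rw [lintegral_const_mul, lintegral_finsetSum]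
        · intro σ _
          exact hae.comp (mp_precomp P σ σ.injective).measurable
        · exact Finset.measurable_fun_sum _ fun σ _ =>
            hae.comp (mp_precomp P σ σ.injective).measurable
    _ = ENNReal.ofReal ((m.factorial : ℝ)⁻¹) * ∑ σ : Equiv.Perm (Fin m),
        ∫⁻ x, ENNReal.ofReal (a x ^ 2) ∂(Measure.pi fun _ => P) := by
        congr 1
        refine Finset.sum_congr rfl fun σ _ => ?_
        exact (mp_precomp P σ σ.injective).lintegral_comp hae
    _ = _ := by
        rw [Finset.sum_const, Finset.card_univ, Fintype.card_perm, Fintype.card_fin, nsmul_eq_mul,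
          ← mul_assoc, ← ENNReal.ofReal_natCast, ← ENNReal.ofReal_mul (by positivity),
          inv_mul_cancel₀ hf.ne', ENNReal.ofReal_one, one_mul]

lemma scale_lint (d : ℕ) (hd : 1 ≤ d) (h : ℝ) (hh : 0 < h)
    (G : EuclideanSpace ℝ (Fin d) → ℝ≥0∞) (hG : Measurable G) (v : EuclideanSpace ℝ (Fin d)) :
    ∫⁻ t, G ((h ^ ((1 : ℝ) / d))⁻¹ • (t - v)) = ENNReal.ofReal h * ∫⁻ u, G u := by
  have hr : 0 < h ^ ((1 : ℝ) / d) := Real.rpow_pos_of_pos hh _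
  rw [lintegral_sub_right_eq_self (fun t => G ((h ^ ((1 : ℝ) / d))⁻¹ • t)) v]
  have hm := Measure.map_addHaar_smul (volume : Measure (EuclideanSpace ℝ (Fin d)))
    (inv_ne_zero hr.ne')
  rw [← lintegral_map (f := G) (g := fun t => (h ^ ((1 : ℝ) / d))⁻¹ • t) hG (by fun_prop), hm,
    lintegral_smul_measure, smul_eq_mul]
  congr 2
  rw [finrank_euclideanSpace_fin, inv_pow, inv_inv, abs_of_pos (by positivity),
    ← Real.rpow_natCast, ← Real.rpow_mul hh.le]
  have : (d : ℝ) ≠ 0 := by positivity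
  rw [one_div_mul_cancel this, Real.rpow_one]

lemma weight_le (d : ℕ) (s r M : ℝ) (hs : 0 ≤ s) (hr : 0 < r) (hM1 : 1 ≤ M) (hMr : r ≤ M)
    (t v : EuclideanSpace ℝ (Fin d)) :
    (1 + ‖t‖) ^ s ≤ (1 + ‖v‖) ^ s * (M ^ s * (1 + ‖r⁻¹ • (t - v)‖) ^ s) := by
  set u := r⁻¹ • (t - v) with hu
  have ht : t = v + r • u := by
    rw [hu, smul_smul, mul_inv_cancel₀ hr.ne', one_smul]; abel
  rw [← Real.mul_rpow (by positivity) (by positivity),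
    ← Real.mul_rpow (by positivity) (by positivity)]
  refine Real.rpow_le_rpow (by positivity) ?_ hs
  have h1 : ‖t‖ ≤ ‖v‖ + r * ‖u‖ := by
    rw [ht]
    refine (norm_add_le _ _).trans ?_
    rw [norm_smul, Real.norm_of_nonneg hr.le]
  have hv := norm_nonneg v
  have hu0 := norm_nonneg u
  have h2 : r * ‖u‖ ≤ M * ‖u‖ := by gcongr
  nlinarith [mul_nonneg hv hu0, mul_nonneg hv (sub_nonneg.2 hM1),
    mul_nonneg (mul_nonneg hv hu0) (zero_le_one.trans hM1)]

lemma weighted_bound {S : Type} [MeasurableSpace S] (P : Measure S) [IsProbabilityMeasure P]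
    (d m : ℕ) (hd : 1 ≤ d) (s b Fn : ℝ) (hs : 0 ≤ s)
    (g : (Fin m → S) → EuclideanSpace ℝ (Fin d)) (hg : Measurable g)
    (fg : EuclideanSpace ℝ (Fin d) → ℝ) (hfg : Measurable fg) (hfg0 : ∀ t, 0 ≤ fg t)
    (hmap : (Measure.pi fun _ : Fin m => P).map g =
          (volume.withDensity fun t => ENNReal.ofReal (fg t)))
    (hfi : Integrable (fun t : EuclideanSpace ℝ (Fin d) => (1 + ‖t‖) ^ s * fg t))
    (hFn : (∫ t : EuclideanSpace ℝ (Fin d), (1 + ‖t‖) ^ s * fg t) ≤ Fn)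
    (K : EuclideanSpace ℝ (Fin d) → ℝ) (hK : Measurable K)
    (hKi : Integrable (fun t : EuclideanSpace ℝ (Fin d) => (1 + ‖t‖) ^ s * (K t) ^ 2))
    (h : ℝ) (hh : 0 < h) (hhb : h ≤ b) :
    ∫⁻ t : EuclideanSpace ℝ (Fin d), ENNReal.ofReal ((1 + ‖t‖) ^ s) *
      ∫⁻ x, ENNReal.ofReal ((h⁻¹ * K ((h ^ ((1 : ℝ) / d))⁻¹ • (t - g x))) ^ 2)
        ∂(Measure.pi fun _ => P) ≤
    ENNReal.ofReal (h⁻¹ * ((max 1 (b ^ ((1 : ℝ) / d))) ^ s * (Fn *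
      ∫ t : EuclideanSpace ℝ (Fin d), (1 + ‖t‖) ^ s * (K t) ^ 2))) := by
  set r := h ^ ((1 : ℝ) / d) with hr
  set M := max 1 (b ^ ((1 : ℝ) / d)) with hM
  have hr0 : 0 < r := Real.rpow_pos_of_pos hh _
  have hM1 : 1 ≤ M := le_max_left _ _
  have hMr : r ≤ M := (Real.rpow_le_rpow hh.le hhb (by positivity)).trans (le_max_right _ _)
  let G : EuclideanSpace ℝ (Fin d) → ℝ≥0∞ := fun u => ENNReal.ofReal ((1 + ‖u‖) ^ s * (K u) ^ 2)
  have hG : Measurable G := by fun_prop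
  have hGint : ∫⁻ u, G u = ENNReal.ofReal
      (∫ t : EuclideanSpace ℝ (Fin d), (1 + ‖t‖) ^ s * (K t) ^ 2) :=
    (ofReal_integral_eq_lintegral_ofReal hKi
      (Filter.Eventually.of_forall fun x => by positivity)).symm
  have hw : Measurable fun t : EuclideanSpace ℝ (Fin d) => ENNReal.ofReal ((1 + ‖t‖) ^ s) := by
    fun_prop
  have hgint : ∫⁻ x, ENNReal.ofReal ((1 + ‖g x‖) ^ s) ∂(Measure.pi fun _ => P) ≤
      ENNReal.ofReal Fn := by
    rw [← lintegral_map (f := fun t => ENNReal.ofReal ((1 + ‖t‖) ^ s)) hw hg, hmap,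
      lintegral_withDensity_eq_lintegral_mul _ (by fun_prop) hw]
    calc _ = ∫⁻ t : EuclideanSpace ℝ (Fin d), ENNReal.ofReal ((1 + ‖t‖) ^ s * fg t) := by
          refine lintegral_congr fun t => ?_
          rw [Pi.mul_apply, ← ENNReal.ofReal_mul (hfg0 t), mul_comm]
      _ = ENNReal.ofReal (∫ t : EuclideanSpace ℝ (Fin d), (1 + ‖t‖) ^ s * fg t) :=
          (ofReal_integral_eq_lintegral_ofReal hfi
            (Filter.Eventually.of_forall fun x => mul_nonneg (by positivity) (hfg0 x))).symm
      _ ≤ _ := ENNReal.ofReal_le_ofReal hFn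
  have hm1 : Measurable (fun q : EuclideanSpace ℝ (Fin d) × (Fin m → S) =>
      r⁻¹ • (q.1 - g q.2)) :=
    by fun_prop
  have hm2 : Measurable (fun q : EuclideanSpace ℝ (Fin d) × (Fin m → S) =>
      ENNReal.ofReal ((h⁻¹ * K (r⁻¹ • (q.1 - g q.2))) ^ 2)) := by
    have := hK.comp hm1
    simp only [Function.comp_def] at this
    fun_prop
  have hswap := lintegral_lintegral_swap (μ := (volume : Measure (EuclideanSpace ℝ (Fin d))))
    (ν := Measure.pi fun _ : Fin m => P)
    (f := fun t x => ENNReal.ofReal ((1 + ‖t‖) ^ s) *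
      ENNReal.ofReal ((h⁻¹ * K (r⁻¹ • (t - g x))) ^ 2))
    ((hw.comp measurable_fst).mul hm2).aemeasurable
  calc _ = ∫⁻ t : EuclideanSpace ℝ (Fin d), ∫⁻ x, ENNReal.ofReal ((1 + ‖t‖) ^ s) *
          ENNReal.ofReal ((h⁻¹ * K (r⁻¹ • (t - g x))) ^ 2) ∂(Measure.pi fun _ => P) := by
        refine lintegral_congr fun t => ?_
        rw [lintegral_const_mul' _ _ ENNReal.ofReal_ne_top]
    _ = ∫⁻ x, (∫⁻ t : EuclideanSpace ℝ (Fin d), ENNReal.ofReal ((1 + ‖t‖) ^ s) *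
          ENNReal.ofReal ((h⁻¹ * K (r⁻¹ • (t - g x))) ^ 2)) ∂(Measure.pi fun _ => P) := by
        exact hswap
    _ ≤ ∫⁻ x, (ENNReal.ofReal ((1 + ‖g x‖) ^ s) * (ENNReal.ofReal (h⁻¹ ^ 2 * M ^ s) *
          (ENNReal.ofReal h * ∫⁻ u, G u))) ∂(Measure.pi fun _ => P) := by
        refine lintegral_mono fun x => ?_
        simp only
        rw [← scale_lint d hd h hh G hG (g x), ← lintegral_const_mul, ← lintegral_const_mul]
        · refine lintegral_mono fun t => ?_
          simp only [G]
          rw [← ENNReal.ofReal_mul (by positivity), ← ENNReal.ofReal_mul (by positivity),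
            ← ENNReal.ofReal_mul (by positivity)]
          refine ENNReal.ofReal_le_ofReal ?_
          calc _ ≤ ((1 + ‖g x‖) ^ s * (M ^ s * (1 + ‖r⁻¹ • (t - g x)‖) ^ s)) *
                (h⁻¹ * K (r⁻¹ • (t - g x))) ^ 2 := by
                gcongr
                exact weight_le d s r M hs hr0 hM1 hMr t (g x)
            _ = _ := by ring
        · exact (hG.comp (hm1.comp (measurable_prodMk_right (y := x)))).const_mul _
        · exact (hG.comp (hm1.comp (measurable_prodMk_right (y := x))))
    _ = (∫⁻ x, (ENNReal.ofReal ((1 + ‖g x‖) ^ s)) ∂(Measure.pi fun _ => P)) *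
          (ENNReal.ofReal (h⁻¹ ^ 2 * M ^ s) * (ENNReal.ofReal h * ∫⁻ u, G u)) :=
        lintegral_mul_const _ (hw.comp hg)
    _ ≤ ENNReal.ofReal Fn * (ENNReal.ofReal (h⁻¹ ^ 2 * M ^ s) *
          (ENNReal.ofReal h * ∫⁻ u, G u)) := by gcongr
    _ = _ := by
        have hM0 : 0 ≤ M := zero_le_one.trans hM1
        rw [hGint, ← ENNReal.ofReal_mul hh.le, ← ENNReal.ofReal_mul (by positivity), mul_comm,
          ← ENNReal.ofReal_mul (mul_nonneg (by positivity) (mul_nonneg hh.le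
            (integral_nonneg fun t => by positivity)))]
        congr 1
        field_simp

lemma holder_bound (d : ℕ) (p s : ℝ) (hp1 : 1 ≤ p) (hp2 : p < 2)
    (u : EuclideanSpace ℝ (Fin d) → ℝ) (hu : Measurable u) :
    ‖((∫ t : EuclideanSpace ℝ (Fin d), |u t| ^ p) ^ (1 / p)) ^ 2‖ₑ ≤
      (∫⁻ t : EuclideanSpace ℝ (Fin d), ENNReal.ofReal ((1 + ‖t‖) ^ (-(s * p / (2 - p))))) ^
        ((2 - p) / p) *
      ∫⁻ t : EuclideanSpace ℝ (Fin d), ENNReal.ofReal ((1 + ‖t‖) ^ s) * ‖u t‖ₑ ^ 2 := by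
  have hp0 : 0 < p := by linarith
  have h2p : 0 < 2 - p := by linarith
  have hconj : Real.HolderConjugate (2 / (2 - p)) (2 / p) := by
    rw [Real.holderConjugate_iff]
    refine ⟨?_, ?_⟩
    · rw [lt_div_iff₀ h2p]; linarith
    · field_simp; ring
  have hI0 : 0 ≤ ∫ t : EuclideanSpace ℝ (Fin d), |u t| ^ p :=
    integral_nonneg fun t => by positivity
  have h1 : ‖∫ t : EuclideanSpace ℝ (Fin d), |u t| ^ p‖ₑ ≤ ∫⁻ t, ‖u t‖ₑ ^ p := by
    refine (enorm_integral_le_lintegral_enorm _).trans (le_of_eq ?_)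
    refine lintegral_congr fun t => ?_
    rw [Real.enorm_of_nonneg (by positivity), ← ENNReal.ofReal_rpow_of_nonneg (abs_nonneg _) hp0.le,
      ← Real.enorm_eq_ofReal_abs]
  let w : EuclideanSpace ℝ (Fin d) → ℝ≥0∞ := fun t => ENNReal.ofReal (1 + ‖t‖)
  have hwm : Measurable w := by fun_prop
  have hw0 : ∀ t, w t ≠ 0 := fun t => by
    simp only [w, ne_eq, ENNReal.ofReal_eq_zero, not_le]; positivity
  have hwt : ∀ t, w t ≠ ⊤ := fun t => ENNReal.ofReal_ne_top
  have hwr : ∀ t (a : ℝ), ENNReal.ofReal ((1 + ‖t‖) ^ a) = w t ^ a := fun t a => by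
    simp only [w]
    rw [ENNReal.ofReal_rpow_of_pos (by positivity)]
  have h2 : ∫⁻ t, ‖u t‖ₑ ^ p ≤
      (∫⁻ t, w t ^ (-(s * p / (2 - p)))) ^ ((2 - p) / 2) *
      (∫⁻ t, w t ^ s * ‖u t‖ₑ ^ 2) ^ (p / 2) := by
    have := ENNReal.lintegral_mul_le_Lp_mul_Lq volume hconj
      (f := fun t => w t ^ (-(s * p / 2))) (g := fun t => w t ^ (s * p / 2) * ‖u t‖ₑ ^ p)
      (by fun_prop) (by fun_prop)
    rw [one_div_div, one_div_div] at this
    refine (le_of_eq ?_).trans (this.trans (le_of_eq ?_))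
    · refine lintegral_congr fun t => ?_
      rw [Pi.mul_apply, ← mul_assoc, ← ENNReal.rpow_add _ _ (hw0 t) (hwt t), neg_add_cancel,
        ENNReal.rpow_zero, one_mul]
    · congr 2
      · refine lintegral_congr fun t => ?_
        rw [← ENNReal.rpow_mul]
        congr 1
        field_simp
      · refine lintegral_congr fun t => ?_
        rw [ENNReal.mul_rpow_of_nonneg _ _ (by positivity), ← ENNReal.rpow_mul,
          ← ENNReal.rpow_mul, ← ENNReal.rpow_natCast]
        congr 2
        · field_simp
        · field_simp; norm_num
  simp_rw [hwr]
  rw [enorm_pow, Real.enorm_of_nonneg (by positivity),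
    ← ENNReal.ofReal_rpow_of_nonneg hI0 (by positivity), ← Real.enorm_of_nonneg hI0]
  calc _ ≤ (((∫⁻ t, w t ^ (-(s * p / (2 - p)))) ^ ((2 - p) / 2) *
      (∫⁻ t, w t ^ s * ‖u t‖ₑ ^ 2) ^ (p / 2)) ^ (1 / p)) ^ 2 := by
        gcongr
        exact h1.trans h2
    _ = _ := by
        rw [← ENNReal.rpow_natCast, ← ENNReal.rpow_mul,
          ENNReal.mul_rpow_of_nonneg _ _ (by positivity), ← ENNReal.rpow_mul, ← ENNReal.rpow_mul]
        have e1 : (2 - p) / 2 * (1 / p * ((2 : ℕ) : ℝ)) = (2 - p) / p := by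
          push_cast; field_simp
        have e2 : p / 2 * (1 / p * ((2 : ℕ) : ℝ)) = 1 := by push_cast; field_simp
        rw [e1, e2, ENNReal.rpow_one]

lemma meas_swap {T W : Type*} [MeasurableSpace T] [MeasurableSpace W] (F : T → W → ℝ)
    (hF : Measurable (fun q : T × W => F q.1 q.2)) : Measurable (fun q : W × T => F q.2 q.1) :=
  hF.comp measurable_swap

lemma meas_right {T W : Type*} [MeasurableSpace T] [MeasurableSpace W] (F : T → W → ℝ)
    (hF : Measurable (fun q : T × W => F q.1 q.2)) (y : W) : Measurable (fun x : T => F x y) :=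
  hF.comp (measurable_prodMk_right (y := y))

lemma meas_left {T W : Type*} [MeasurableSpace T] [MeasurableSpace W] (F : T → W → ℝ)
    (hF : Measurable (fun q : T × W => F q.1 q.2)) (x : T) : Measurable (F x) :=
  hF.comp (measurable_prodMk_left (x := x))

lemma U_meas {S : Type} [MeasurableSpace S] (P : Measure S) [IsProbabilityMeasure P] (m k n : ℕ)
    {T : Type*} [MeasurableSpace T]
    (L : T → (Fin m → S) → ℝ) (hL : Measurable (Function.uncurry L)) :
    Measurable (fun q : T × (Fin n → S) =>
      ∑ i ∈ injTuples k n, hproj P m k (L q.1) (q.2 ∘ i)) := by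
  refine Finset.measurable_fun_sum _ fun i _ => ?_
  have h1 : Measurable (fun q : T × (Fin n → S) => (q.1, q.2 ∘ i)) := by
    fun_prop
  exact (hproj_meas P m k L hL).comp h1

/-- (Second part of Lemma 2.) Let `1 ≤ p < 2`, `s > d(2−p)/p`, `0 < b < ∞` and
`Fn ≥ ‖f_g‖_{L_1(μ_s)}`. There is a constant `C`, depending only on `m, d, p, s, b` and `Fn`,
such that whenever `g(X_1,…,X_m)` has a density `f_g ∈ L_1(μ_s)` with `‖f_g‖_{L_1(μ_s)} ≤ Fn`
and `K² ∈ L_1(μ_s)`, for every `1 ≤ k ≤ m`, `n ≥ k` and `0 < h ≤ b`,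
`(E ‖Σ_{i ∈ I_n^k} π_k K̄_h(·, X_{i_1},…,X_{i_k})‖_{L_p}²)^{1/2}
  ≤ C ‖K‖_{L_2(μ_s)} n^{k/2} / h^{1/2}`. -/
theorem stmt7 (m d : ℕ) (hm : 1 ≤ m) (hd : 1 ≤ d) (p s b Fn : ℝ)
    (hp1 : 1 ≤ p) (hp2 : p < 2) (hs : (d : ℝ) * (2 - p) / p < s) (hb : 0 < b) :
    ∃ C : ℝ, 0 < C ∧
      ∀ (S : Type) (_ : MeasurableSpace S) (P : Measure S), IsProbabilityMeasure P →
      ∀ g : (Fin m → S) → EuclideanSpace ℝ (Fin d), Measurable g →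
      ∀ fg : EuclideanSpace ℝ (Fin d) → ℝ, Measurable fg → (∀ t, 0 ≤ fg t) →
        (Measure.pi fun _ : Fin m => P).map g =
          (volume.withDensity fun t => ENNReal.ofReal (fg t)) →
        Integrable (fun t : EuclideanSpace ℝ (Fin d) => (1 + ‖t‖) ^ s * fg t) →
        (∫ t : EuclideanSpace ℝ (Fin d), (1 + ‖t‖) ^ s * fg t) ≤ Fn →
      ∀ K : EuclideanSpace ℝ (Fin d) → ℝ, Measurable K →
        Integrable (fun t : EuclideanSpace ℝ (Fin d) => (1 + ‖t‖) ^ s * (K t) ^ 2) →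
      ∀ k : ℕ, 1 ≤ k → k ≤ m → ∀ n : ℕ, k ≤ n → ∀ h : ℝ, 0 < h → h ≤ b →
        Real.sqrt (∫ ω : Fin n → S,
            ((∫ t : EuclideanSpace ℝ (Fin d),
                |∑ i ∈ injTuples k n, hproj P m k (Kbar d m g K h t) (ω ∘ i)| ^ p) ^ (1 / p)) ^ 2
          ∂(Measure.pi fun _ : Fin n => P)) ≤
        C * Real.sqrt (∫ t : EuclideanSpace ℝ (Fin d), (1 + ‖t‖) ^ s * (K t) ^ 2) *
          (n : ℝ) ^ ((k : ℝ) / 2) / Real.sqrt h := by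
  have hp0 : 0 < p := by linarith
  have h2p : 0 < 2 - p := by linarith
  have hs0 : 0 < s := lt_of_le_of_lt (by positivity) hs
  set Z : ℝ≥0∞ := (∫⁻ t : EuclideanSpace ℝ (Fin d),
    ENNReal.ofReal ((1 + ‖t‖) ^ (-(s * p / (2 - p))))) ^ ((2 - p) / p) with hZ
  have hZt : Z ≠ ⊤ := by
    refine ENNReal.rpow_ne_top_of_nonneg (by positivity) (ne_of_lt ?_)
    refine finite_integral_one_add_norm ?_
    rw [finrank_euclideanSpace_fin, lt_div_iff₀ h2p]
    rwa [div_lt_iff₀ hp0] at hs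
  set M : ℝ := max 1 (b ^ ((1 : ℝ) / d)) with hM
  have hM0 : 0 < M := lt_of_lt_of_le one_pos (le_max_left _ _)
  set D : ℝ := Z.toReal * ((m : ℝ) ^ m * 4 ^ m) * (M ^ s * |Fn|) with hD
  have hD0 : 0 ≤ D := by positivity
  refine ⟨Real.sqrt (D + 1), Real.sqrt_pos.2 (by linarith), ?_⟩
  intro S _ P _ g hg fg hfg hfg0 hmap hfi hFn K hK hKi k hk hkm n hkn h hh hhb
  set IK := ∫ t : EuclideanSpace ℝ (Fin d), (1 + ‖t‖) ^ s * (K t) ^ 2 with hIK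
  have hIK0 : 0 ≤ IK := integral_nonneg fun t => by positivity
  have hFn0 : 0 ≤ Fn :=
    le_trans (integral_nonneg fun t => mul_nonneg (by positivity) (hfg0 t)) hFn
  let U : EuclideanSpace ℝ (Fin d) → (Fin n → S) → ℝ := fun t ω =>
    ∑ i ∈ injTuples k n, hproj P m k (Kbar d m g K h t) (ω ∘ i)
  have hKm := Kbar_meas d m g hg K hK h
  have hU : Measurable (fun q : EuclideanSpace ℝ (Fin d) × (Fin n → S) => U q.1 q.2) :=
    U_meas P m k n (Kbar d m g K h) hKm
  have hU1 : Measurable (fun q : (Fin n → S) × EuclideanSpace ℝ (Fin d) => U q.2 q.1) :=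
    meas_swap U hU
  have hw : Measurable fun t : EuclideanSpace ℝ (Fin d) => ENNReal.ofReal ((1 + ‖t‖) ^ s) := by
    fun_prop
  have hswap := lintegral_lintegral_swap (ν := (volume : Measure (EuclideanSpace ℝ (Fin d))))
    (μ := Measure.pi fun _ : Fin n => P)
    (f := fun ω t => ENNReal.ofReal ((1 + ‖t‖) ^ s) * ‖U t ω‖ₑ ^ 2)
    (Measurable.aemeasurable (Measurable.fun_mul (hw.comp measurable_snd)
      (hU1.enorm.pow_const 2)))
  have main : ∫ ω : Fin n → S, ((∫ t : EuclideanSpace ℝ (Fin d), |U t ω| ^ p) ^ (1 / p)) ^ 2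
      ∂(Measure.pi fun _ : Fin n => P) ≤
      Z.toReal * ((n ^ k * k ^ k * 4 ^ k) * (h⁻¹ * (M ^ s * (Fn * IK)))) := by
    rw [← ENNReal.ofReal_le_ofReal_iff (by positivity)]
    calc _ = ‖∫ ω : Fin n → S, ((∫ t : EuclideanSpace ℝ (Fin d), |U t ω| ^ p) ^ (1 / p)) ^ 2
          ∂(Measure.pi fun _ : Fin n => P)‖ₑ := by
          rw [Real.enorm_of_nonneg (integral_nonneg fun _ => by positivity)]
      _ ≤ ∫⁻ ω : Fin n → S, ‖((∫ t : EuclideanSpace ℝ (Fin d), |U t ω| ^ p) ^ (1 / p)) ^ 2‖ₑ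
          ∂(Measure.pi fun _ : Fin n => P) := enorm_integral_le_lintegral_enorm _
      _ ≤ ∫⁻ ω : Fin n → S, Z * (∫⁻ t : EuclideanSpace ℝ (Fin d),
            ENNReal.ofReal ((1 + ‖t‖) ^ s) * ‖U t ω‖ₑ ^ 2) ∂(Measure.pi fun _ : Fin n => P) := by
          refine lintegral_mono fun ω => ?_
          exact holder_bound d p s hp1 hp2 (fun t => U t ω)
            (meas_right U hU ω)
      _ = Z * ∫⁻ ω : Fin n → S, (∫⁻ t : EuclideanSpace ℝ (Fin d),
            ENNReal.ofReal ((1 + ‖t‖) ^ s) * ‖U t ω‖ₑ ^ 2) ∂(Measure.pi fun _ : Fin n => P) :=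
          lintegral_const_mul' _ _ hZt
      _ = Z * ∫⁻ t : EuclideanSpace ℝ (Fin d), ∫⁻ ω : Fin n → S,
            ENNReal.ofReal ((1 + ‖t‖) ^ s) * ‖U t ω‖ₑ ^ 2 ∂(Measure.pi fun _ : Fin n => P) := by
          rw [hswap]
      _ ≤ Z * ∫⁻ t : EuclideanSpace ℝ (Fin d), ENNReal.ofReal (n ^ k * k ^ k * 4 ^ k) *
            (ENNReal.ofReal ((1 + ‖t‖) ^ s) *
            ∫⁻ x, ENNReal.ofReal ((h⁻¹ * K ((h ^ ((1 : ℝ) / d))⁻¹ • (t - g x))) ^ 2)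
              ∂(Measure.pi fun _ => P)) := by
          gcongr with t
          rw [lintegral_const_mul' _ _ ENNReal.ofReal_ne_top, mul_left_comm]
          gcongr
          refine (second_moment P m k n hk hkm hkn (Kbar d m g K h t)
            (meas_left (Kbar d m g K h) hKm t)).trans ?_
          exact mul_le_mul_right (Kbar_lint P d m g hg K hK h t) _
      _ = Z * (ENNReal.ofReal (n ^ k * k ^ k * 4 ^ k) *
            ∫⁻ t : EuclideanSpace ℝ (Fin d), (ENNReal.ofReal ((1 + ‖t‖) ^ s) *
            ∫⁻ x, ENNReal.ofReal ((h⁻¹ * K ((h ^ ((1 : ℝ) / d))⁻¹ • (t - g x))) ^ 2)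
              ∂(Measure.pi fun _ => P))) := by
          rw [lintegral_const_mul' _ _ ENNReal.ofReal_ne_top]
      _ ≤ Z * (ENNReal.ofReal (n ^ k * k ^ k * 4 ^ k) *
            ENNReal.ofReal (h⁻¹ * (M ^ s * (Fn * IK)))) := by
          gcongr
          exact weighted_bound P d m hd s b Fn hs0.le g hg fg hfg hfg0 hmap hfi hFn K hK hKi
            h hh hhb
      _ = _ := by
          rw [ENNReal.ofReal_mul ENNReal.toReal_nonneg, ENNReal.ofReal_toReal hZt,
            ← ENNReal.ofReal_mul (by positivity)]
  refine Real.sqrt_le_iff.2 ⟨by positivity, main.trans ?_⟩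
  rw [div_pow, mul_pow, mul_pow, Real.sq_sqrt (by linarith), Real.sq_sqrt hIK0,
    Real.sq_sqrt hh.le]
  have e : ((n : ℝ) ^ ((k : ℝ) / 2)) ^ 2 = (n : ℝ) ^ k := by
    rw [← Real.rpow_natCast, ← Real.rpow_natCast, ← Real.rpow_mul (by positivity)]
    congr 1
    push_cast; ring
  rw [e]
  have hkk : (k : ℝ) ^ k ≤ (m : ℝ) ^ m := by
    have : k ^ k ≤ m ^ m := (Nat.pow_le_pow_left hkm k).trans (Nat.pow_le_pow_right hm hkm)
    exact_mod_cast this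
  have h44 : (4 : ℝ) ^ k ≤ 4 ^ m := pow_le_pow_right₀ (by norm_num) hkm
  calc _ ≤ Z.toReal * ((n ^ k * (m : ℝ) ^ m * 4 ^ m) * (h⁻¹ * (M ^ s * (Fn * IK)))) := by
        gcongr
    _ = D * IK * (n : ℝ) ^ k / h := by
        rw [hD, abs_of_nonneg hFn0]; field_simp
    _ ≤ (D + 1) * IK * (n : ℝ) ^ k / h := by
        gcongr; linarith
end
end
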